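/- If G is a planar triangulation on n vertices different from K4, then ν(G) ≥ (2/3)(n − 2). -/

import Mathlib

open SimpleGraph

variable {V : Type*}

/-- A triangle transversal of `G`: a set of edges of `G` meeting every triangle of `G`
(so that its removal leaves a triangle-free graph). -/
def IsTriangleTransversal (G : SimpleGraph V) (X : Finset (Sym2 V)) : Prop :=
  ↑X ⊆ G.edgeSet ∧
    ∀ t : Finset V, G.IsNClique 3 t → ∃ e ∈ X, ∀ v ∈ e, v ∈ t

/-- A triangle packing of `G`: a set of pairwise edge-disjoint triangles of `G`. -/
def IsTrianglePacking (G : SimpleGraph V) (Y : Finset (Finset V)) : Prop :=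
  (∀ t ∈ Y, G.IsNClique 3 t) ∧
    ∀ s ∈ Y, ∀ t ∈ Y, s ≠ t →
      ∀ e ∈ G.edgeSet, ¬ ((∀ v ∈ e, v ∈ s) ∧ (∀ v ∈ e, v ∈ t))

/-- `tau G` is the minimum size of a triangle transversal of `G`. -/
noncomputable def tau (G : SimpleGraph V) : ℕ :=
  sInf {n | ∃ X : Finset (Sym2 V), IsTriangleTransversal G X ∧ X.card = n}

/-- `nu G` is the maximum size of a triangle packing of `G`. -/
noncomputable def nu (G : SimpleGraph V) : ℕ :=
  sSup {n | ∃ Y : Finset (Finset V), IsTrianglePacking G Y ∧ Y.card = n}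

/-- A drawing of the graph `G` in the plane (identified with `ℂ`): vertices are mapped to
distinct points, each edge is realized by a simple continuous arc joining the images of its
endpoints, arcs of distinct edges meet only in common endpoints, and no arc passes through
the image of any other vertex. -/
structure PlaneEmbedding (G : SimpleGraph V) where
  vtx : V → ℂ
  arc : V → V → Set ℂ
  vtx_inj : Function.Injective vtx
  arc_symm : ∀ u v : V, arc u v = arc v u
  arc_curve : ∀ ⦃u v : V⦄, G.Adj u v → ∃ γ : ℝ → ℂ,
    ContinuousOn γ (Set.Icc 0 1) ∧ Set.InjOn γ (Set.Icc 0 1) ∧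
    γ 0 = vtx u ∧ γ 1 = vtx v ∧ arc u v = γ '' Set.Icc 0 1
  arc_inter : ∀ ⦃u v x y : V⦄, G.Adj u v → G.Adj x y → s(u, v) ≠ s(x, y) →
    arc u v ∩ arc x y ⊆ ({vtx u, vtx v} : Set ℂ) ∩ ({vtx x, vtx y} : Set ℂ)
  arc_vtx : ∀ ⦃u v : V⦄, G.Adj u v → ∀ w : V, vtx w ∈ arc u v → w = u ∨ w = v

/-- The set of points of the plane used by a plane embedding. -/
def PlaneEmbedding.drawing {G : SimpleGraph V} (E : PlaneEmbedding G) : Set ℂ :=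
  Set.range E.vtx ∪ ⋃ (u : V) (v : V) (_ : G.Adj u v), E.arc u v

/-- A graph is planar if it admits a plane embedding. -/
def PlanarGraph (G : SimpleGraph V) : Prop := Nonempty (PlaneEmbedding G)

/-- A maximal planar graph (planar triangulation): a planar graph such that adding any
edge between nonadjacent vertices destroys planarity. -/
def MaximalPlanar (G : SimpleGraph V) : Prop :=
  PlanarGraph G ∧ ∀ u v : V, u ≠ v → ¬ G.Adj u v →
    ¬ PlanarGraph (G ⊔ SimpleGraph.fromEdgeSet {s(u, v)})

section Brooks

variable {W : Type*}

/-- `c` is a proper coloring of the subgraph of `Γ` induced on `S`. -/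
def ProperOn (Γ : SimpleGraph W) (S : Finset W) (c : W → Fin 3) : Prop :=
  ∀ x ∈ S, ∀ y ∈ S, Γ.Adj x y → c x ≠ c y

theorem ProperOn.update [DecidableEq W] {Γ : SimpleGraph W} {S : Finset W} {c : W → Fin 3}
    (hc : ProperOn Γ S c) {x : W} (hx : x ∉ S) {a : Fin 3}
    (ha : ∀ y ∈ S, Γ.Adj x y → c y ≠ a) :
    ProperOn Γ (insert x S) (Function.update c x a) := by
  have hne : ∀ y ∈ S, y ≠ x := fun y hy h => hx (h ▸ hy)
  intro y hy z hz hyz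
  rcases Finset.mem_insert.1 hy with rfl | hy' <;> rcases Finset.mem_insert.1 hz with rfl | hz'
  · exact (Γ.loopless.irrefl _ hyz).elim
  · rw [Function.update_self, Function.update_of_ne (hne z hz')]
    exact (ha z hz' hyz).symm
  · rw [Function.update_self, Function.update_of_ne (hne y hy')]
    exact ha y hy' hyz.symm
  · rw [Function.update_of_ne (hne z hz'), Function.update_of_ne (hne y hy')]
    exact hc y hy' z hz' hyz

theorem exists_notMem_of_card_le_two {s : Finset (Fin 3)} (h : s.card ≤ 2) : ∃ a, a ∉ s := by
  by_contra! hs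
  have : s = Finset.univ := Finset.eq_univ_iff_forall.2 hs
  rw [this] at h
  simp at h

open Classical in
/-- A coloring can be extended greedily along a ranking of the uncolored vertices, provided that
the last vertex sees two equally colored neighbors. -/
theorem ProperOn.extend_greedy [Fintype W] {Γ : SimpleGraph W}
    (hdeg : ∀ x, (Finset.univ.filter (Γ.Adj x)).card ≤ 3) {U : Finset W} {r u y : W}
    (hrU : r ∈ U) (huy : u ≠ y) (hru : Γ.Adj r u) (hry : Γ.Adj r y) (ρ : W → ℕ) :
    ∀ (n : ℕ) (S : Finset W) (c : W → Fin 3), (U \ S).card = n → S ⊆ U → ProperOn Γ S c →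
      r ∉ S → u ∈ S → y ∈ S → c u = c y →
      (∀ x ∈ U \ S, x ≠ r → ∃ z ∈ U \ S, Γ.Adj x z ∧ ρ z < ρ x) →
      ∃ c', ProperOn Γ U c' := by
  intro n
  induction n with
  | zero =>
    intro S c hn _ _ hrS
    have : r ∈ U \ S := by simp [hrU, hrS]
    rw [Finset.card_eq_zero.1 hn] at this
    simp at this
  | succ n ih =>
    intro S c hn hSU hc hrS hu hy huyc hrank
    by_cases hne : ((U \ S).erase r).Nonempty
    · obtain ⟨x, hx, hmax⟩ := Finset.exists_max_image _ ρ hne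
      obtain ⟨hxr, hxU⟩ := Finset.mem_erase.1 hx
      obtain ⟨hxU', hxS⟩ := Finset.mem_sdiff.1 hxU
      obtain ⟨z, hz, hxz, -⟩ := hrank x hxU hxr
      have hzS := (Finset.mem_sdiff.1 hz).2
      have hcard : ((Finset.univ.filter fun w => Γ.Adj x w ∧ w ∈ S).image c).card ≤ 2 := by
        refine Finset.card_image_le.trans ?_
        have : (Finset.univ.filter fun w => Γ.Adj x w ∧ w ∈ S) ⊆
            (Finset.univ.filter (Γ.Adj x)).erase z := by
          intro w hw
          simp only [Finset.mem_filter, Finset.mem_univ, true_and, Finset.mem_erase] at hw ⊢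
          exact ⟨fun h => hzS (h ▸ hw.2), hw.1⟩
        refine (Finset.card_le_card this).trans ?_
        rw [Finset.card_erase_of_mem (by simpa using hxz)]
        have := hdeg x
        omega
      obtain ⟨a, ha⟩ := exists_notMem_of_card_le_two hcard
      refine ih (insert x S) (Function.update c x a) ?_ ?_ (hc.update hxS ?_) ?_
        (Finset.mem_insert_of_mem hu) (Finset.mem_insert_of_mem hy) ?_ ?_
      · have : U \ insert x S = (U \ S).erase x := by ext; simp; tauto
        rw [this, Finset.card_erase_of_mem hxU, hn]; rfl
      · exact Finset.insert_subset hxU' hSU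
      · intro w hw hxw h
        exact ha (Finset.mem_image.2 ⟨w, by simp [hxw, hw], h⟩)
      · simp [hrS, Ne.symm hxr]
      · rw [Function.update_of_ne (ne_of_mem_of_not_mem hu hxS),
          Function.update_of_ne (ne_of_mem_of_not_mem hy hxS), huyc]
      · intro w hw hwr
        have hw' : w ∈ U \ S := by simp at hw ⊢; tauto
        obtain ⟨t, ht, hwt, hlt⟩ := hrank w hw' hwr
        refine ⟨t, ?_, hwt, hlt⟩
        have : t ≠ x := by
          rintro rfl
          have := hmax w (Finset.mem_erase.2 ⟨hwr, hw'⟩)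
          omega
        simp at ht ⊢; tauto
    · have hU : U = insert r S := by
        ext w
        rw [Finset.not_nonempty_iff_eq_empty] at hne
        have := Finset.ext_iff.1 hne w
        simp at this ⊢
        constructor
        · intro hw; by_contra hcon; push Not at hcon; exact hcon.2 (this hcon.1 hw)
        · rintro (rfl | hw); exacts [hrU, hSU hw]
      have hcard : ((Finset.univ.filter (Γ.Adj r)).image c).card ≤ 2 := by
        have : (Finset.univ.filter (Γ.Adj r)).image c =
            ((Finset.univ.filter (Γ.Adj r)).erase u).image c := by
          ext a
          simp only [Finset.mem_image, Finset.mem_filter, Finset.mem_univ, true_and,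
            Finset.mem_erase]
          constructor
          · rintro ⟨w, hw, rfl⟩
            by_cases h : w = u
            · exact ⟨y, ⟨huy.symm, hry⟩, by rw [h, huyc]⟩
            · exact ⟨w, ⟨h, hw⟩, rfl⟩
          · rintro ⟨w, hw, rfl⟩; exact ⟨w, hw.2, rfl⟩
        rw [this]
        refine Finset.card_image_le.trans ?_
        rw [Finset.card_erase_of_mem (by simpa using hru)]
        have := hdeg r
        omega
      obtain ⟨a, ha⟩ := exists_notMem_of_card_le_two hcard
      refine ⟨_, hU ▸ hc.update hrS (a := a) ?_⟩
      intro w _ hrw h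
      exact ha (Finset.mem_image.2 ⟨w, by simp [hrw], h⟩)

end Brooks

section Brooks

variable {W : Type*}

theorem exists_ne_ne_of_three_le_card {α : Type*} [DecidableEq α] {s : Finset α}
    (h : 3 ≤ s.card) (a b : α) : ∃ x ∈ s, x ≠ a ∧ x ≠ b := by
  by_contra! hs
  have : s ⊆ {a, b} := by
    intro x hx
    by_cases hxa : x = a
    · simp [hxa]
    · simp [hs x hx hxa]
  have := (Finset.card_le_card this).trans Finset.card_le_two
  omega

open Classical in
/-- Brooks' theorem for graphs of maximum degree at most three. -/
theorem exists_properOn [Fintype W] {Γ : SimpleGraph W}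
    (hdeg : ∀ x, (Finset.univ.filter (Γ.Adj x)).card ≤ 3) (hfree : Γ.CliqueFree 4) :
    ∀ (n : ℕ) (U : Finset W), U.card = n → ∃ c, ProperOn Γ U c := by
  intro n
  induction n using Nat.strong_induction_on with
  | _ n ih =>
  intro U hU
  by_cases hlow : ∃ x ∈ U, (U.filter (Γ.Adj x)).card ≤ 2
  · obtain ⟨x, hx, hx2⟩ := hlow
    obtain ⟨c, hc⟩ := ih (U.erase x).card (by rw [← hU]; exact Finset.card_erase_lt_of_mem hx) _ rfl
    obtain ⟨a, ha⟩ := exists_notMem_of_card_le_two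
      (s := (U.filter (Γ.Adj x)).image c) (Finset.card_image_le.trans hx2)
    refine ⟨_, Finset.insert_erase hx ▸ hc.update (Finset.notMem_erase x U) (a := a) ?_⟩
    intro y hy hxy h
    exact ha (Finset.mem_image.2 ⟨y, by simp [hxy, Finset.mem_of_mem_erase hy], h⟩)
  push Not at hlow
  by_cases hUne : U.Nonempty
  swap
  · rw [Finset.not_nonempty_iff_eq_empty] at hUne
    exact ⟨fun _ => 0, by simp [ProperOn, hUne]⟩
  obtain ⟨v, hv⟩ := hUne
  -- two nonadjacent neighbors of `v`
  obtain ⟨a, ha, b, hb, hva, hvb, hab, hnab⟩ : ∃ a ∈ U, ∃ b ∈ U, Γ.Adj v a ∧ Γ.Adj v b ∧ a ≠ b ∧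
      ¬ Γ.Adj a b := by
    by_contra! hcon
    obtain ⟨t, htU, ht⟩ := Finset.exists_subset_card_eq (hlow v hv)
    refine hfree (insert v t) ?_
    have hvt : v ∉ t := fun h => by simpa using htU h
    refine ⟨?_, by rw [Finset.card_insert_of_notMem hvt, ht]⟩
    have htv : ∀ x ∈ t, x ∈ U ∧ Γ.Adj v x := fun x hx => by simpa using htU hx
    intro x hx y hy hxy
    rw [Finset.mem_coe, Finset.mem_insert] at hx hy
    rcases hx with rfl | hx <;> rcases hy with rfl | hy
    · exact (hxy rfl).elim
    · exact (htv y hy).2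
    · exact (htv x hx).2.symm
    · exact hcon x (htv x hx).1 y (htv y hy).1 (htv x hx).2 (htv y hy).2 hxy
  -- a longest path starting with `a, v, b`
  let P : ℕ → Prop := fun m => 2 ≤ m ∧ ∃ p : ℕ → W, p 0 = a ∧ p 1 = v ∧ p 2 = b ∧
    (∀ i ≤ m, p i ∈ U) ∧ (∀ i < m, Γ.Adj (p i) (p (i + 1))) ∧ Set.InjOn p (Set.Iic m)
  have hP2 : P 2 := by
    refine ⟨le_rfl, fun i => if i = 0 then a else if i = 1 then v else b, by simp, by simp,
      by simp, ?_, ?_, ?_⟩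
    · intro i _; dsimp only; split_ifs <;> assumption
    · intro i hi
      interval_cases i
      · simpa using hva.symm
      · simpa using hvb
    · intro i hi j hj hij
      simp only [Set.mem_Iic] at hi hj
      have h1 := hva.ne
      have h2 := hvb.ne
      interval_cases i <;> interval_cases j <;> simp_all
  have hPle : ∀ m, P m → m ≤ U.card := by
    rintro m ⟨-, p, -, -, -, hpU, -, hinj⟩
    have := Finset.card_le_card_of_injOn (s := Finset.range m) (t := U) p
      (fun i hi => hpU i (by simp at hi; omega))
      (fun i hi j hj h => hinj (by simp at hi ⊢; omega) (by simp at hj ⊢; omega) h)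
    simpa using this
  obtain ⟨hm2, p, hp0, hp1, hp2, hpU, hpadj, hinj⟩ := Nat.findGreatest_spec (hPle 2 hP2) hP2
  set m := Nat.findGreatest P U.card with hm
  have hpne : ∀ i ≤ m, ∀ j ≤ m, i ≠ j → p i ≠ p j := fun i hi j hj h h' => h (hinj hi hj h')
  have hend : ∀ w ∈ U, Γ.Adj (p m) w → ∃ i < m, p i = w := by
    intro w hwU hw
    by_contra! hcon
    have hwm : w ≠ p m := hw.ne'
    have hq : ∀ i ≤ m, p i ≠ w := fun i hi => by
      rcases hi.lt_or_eq with h | rfl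
      · exact hcon i h
      · exact hwm.symm
    have : P (m + 1) := by
      refine ⟨by omega, Function.update p (m + 1) w, ?_, ?_, ?_, ?_, ?_, ?_⟩
      · rw [Function.update_of_ne (by omega), hp0]
      · rw [Function.update_of_ne (by omega), hp1]
      · rw [Function.update_of_ne (by omega), hp2]
      · intro i hi
        by_cases h : i = m + 1
        · subst h; simpa using hwU
        · rw [Function.update_of_ne h]; exact hpU i (by omega)
      · intro i hi
        rw [Function.update_of_ne (by omega)]
        by_cases h : i = m
        · subst h; simpa using hw
        · rw [Function.update_of_ne (by omega)]; exact hpadj i (by omega)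
      · intro i hi j hj hij
        simp only [Set.mem_Iic] at hi hj
        by_cases h : i = m + 1 <;> by_cases h' : j = m + 1
        · omega
        · subst h
          rw [Function.update_self, Function.update_of_ne h'] at hij
          exact (hq j (by omega) hij.symm).elim
        · subst h'
          rw [Function.update_self, Function.update_of_ne h] at hij
          exact (hq i (by omega) hij).elim
        · rw [Function.update_of_ne h', Function.update_of_ne h] at hij
          exact hinj (by simp; omega) (by simp; omega) hij
    have := Nat.le_findGreatest (hPle _ this) this
    omega
  obtain ⟨idx, hidx⟩ : ∃ idx : W → ℕ, ∀ i ≤ m, idx (p i) = i :=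
    ⟨Function.invFunOn p (Set.Iic m), fun i hi => hinj.leftInvOn_invFunOn hi⟩
  -- the neighbor of the last vertex with the smallest index
  have hex : ∃ j, j < m ∧ Γ.Adj (p m) (p j) :=
    ⟨m - 1, by omega, by simpa [show m - 1 + 1 = m by omega] using (hpadj (m - 1) (by omega)).symm⟩
  obtain ⟨hjm, hjadj⟩ := Nat.find_spec hex
  have hjmin : ∀ i < m, Γ.Adj (p m) (p i) → Nat.find hex ≤ i := fun i hi h => Nat.find_min' hex ⟨hi, h⟩
  set j := Nat.find hex
  set C := (Finset.Icc j m).image p with hC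
  have hpC : ∀ i, j ≤ i → i ≤ m → p i ∈ C := fun i h1 h2 =>
    Finset.mem_image_of_mem _ (Finset.mem_Icc.2 ⟨h1, h2⟩)
  have hCU : C ⊆ U := by
    intro x hx
    obtain ⟨i, hi, rfl⟩ := Finset.mem_image.1 hx
    exact hpU i (Finset.mem_Icc.1 hi).2
  by_cases hout : ∃ i, (j ≤ i ∧ i ≤ m) ∧ ∃ u ∈ U \ C, Γ.Adj (p i) u
  · -- color the complement of the cycle first
    obtain ⟨i0, hi0, hi0'⟩ := hout
    let Q : ℕ → Prop := fun i => j ≤ i ∧ ∃ u ∈ U \ C, Γ.Adj (p i) u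
    have hQ : Q (Nat.findGreatest Q m) := Nat.findGreatest_spec (P := Q) hi0.2 ⟨hi0.1, hi0'⟩
    have hi : Nat.findGreatest Q m ≤ m := Nat.findGreatest_le m
    have hQmax : ∀ k, Nat.findGreatest Q m < k → k ≤ m → ¬ Q k := fun k h1 h2 =>
      Nat.findGreatest_is_greatest h1 h2
    set i := Nat.findGreatest Q m
    obtain ⟨hji, u, hu, hpu⟩ := hQ
    obtain ⟨huU, huC⟩ := Finset.mem_sdiff.1 hu
    have him : i < m := by
      rcases hi.lt_or_eq with h | h
      · exact h
      · rw [h] at hpu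
        obtain ⟨k, hk, rfl⟩ := hend u huU hpu
        exact (huC (hpC k (hjmin k hk hpu) hk.le)).elim
    obtain ⟨c, hc⟩ := ih (U \ C).card
      (by rw [← hU]; exact Finset.card_lt_card
            ⟨Finset.sdiff_subset, fun h => (Finset.mem_sdiff.1 (h (hpU m le_rfl))).2
              (hpC m hjm.le le_rfl)⟩) _ rfl
    have hi1 : p (i + 1) ∉ U \ C := fun h => (Finset.mem_sdiff.1 h).2 (hpC _ (by omega) (by omega))
    refine ProperOn.extend_greedy hdeg (hpU i hi) (u := u) (y := p (i + 1))
      (fun h => huC (h ▸ hpC (i + 1) (by omega) (by omega))) hpu (hpadj i him)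
      (fun x => if idx x ≤ i then i - idx x else 2 * m + 1 - idx x) _ (insert (p (i + 1)) (U \ C))
      (Function.update c (p (i + 1)) (c u)) rfl ?_ (hc.update hi1 ?_) ?_
      (Finset.mem_insert_of_mem hu) (Finset.mem_insert_self _ _) ?_ ?_
    · exact Finset.insert_subset (hpU _ (by omega)) Finset.sdiff_subset
    · intro y hy hadj
      exact (hQmax (i + 1) (by omega) (by omega) ⟨by omega, y, hy, hadj⟩).elim
    · rw [Finset.mem_insert, not_or]
      exact ⟨hpne i hi _ (by omega) (by omega), fun h => (Finset.mem_sdiff.1 h).2 (hpC i hji hi)⟩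
    · rw [Function.update_self, Function.update_of_ne (ne_of_mem_of_not_mem hu hi1)]
    · have hmem : ∀ k, j ≤ k → k ≤ m → k ≠ i + 1 → p k ∈ U \ insert (p (i + 1)) (U \ C) := by
        intro k h1 h2 h3
        have := hpne k h2 (i + 1) (by omega) h3
        have := hpC k h1 h2
        have := hpU k h2
        simp_all
      intro x hx hxi
      have hxC : x ∈ C := by
        simp only [Finset.mem_sdiff, Finset.mem_insert, not_or, not_and, not_not] at hx
        exact hx.2.2 hx.1
      obtain ⟨k, hk, rfl⟩ := Finset.mem_image.1 hxC
      obtain ⟨hjk, hkm⟩ := Finset.mem_Icc.1 hk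
      have hki : k ≠ i := fun h => hxi (by rw [h])
      have hki1 : k ≠ i + 1 := fun h => by simp [h] at hx
      by_cases hkm' : k = m
      · subst hkm'
        refine ⟨p j, hmem j le_rfl (by omega) (by omega), hjadj, ?_⟩
        rw [hidx _ le_rfl, hidx j (by omega), if_pos hji, if_neg (by omega)]
        omega
      · refine ⟨p (k + 1), hmem (k + 1) (by omega) (by omega) (by omega), hpadj k (by omega), ?_⟩
        rw [hidx k hkm, hidx (k + 1) (by omega)]
        split_ifs <;> omega
  push Not at hout
  have hsep : ∀ x ∈ C, ∀ y ∈ U \ C, ¬ Γ.Adj x y := by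
    intro x hx y hy
    obtain ⟨k, hk, rfl⟩ := Finset.mem_image.1 hx
    exact hout k (Finset.mem_Icc.1 hk) y hy
  by_cases hCU' : C = U
  · -- the path is spanning
    have hall : ∀ x ∈ U, ∃ k ≤ m, x = p k := by
      intro x hx
      rw [← hCU'] at hx
      obtain ⟨k, hk, rfl⟩ := Finset.mem_image.1 hx
      exact ⟨k, (Finset.mem_Icc.1 hk).2, rfl⟩
    obtain ⟨w, hw, hwa, hwb⟩ := exists_ne_ne_of_three_le_card (hlow v hv) a b
    simp only [Finset.mem_filter] at hw
    obtain ⟨k, hkm, rfl⟩ := hall w hw.1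
    have hk3 : 3 ≤ k := by
      by_contra! h
      interval_cases k
      · exact hwa hp0
      · exact hw.2.ne hp1.symm
      · exact hwb hp2
    refine ProperOn.extend_greedy hdeg hv hab hva hvb
      (fun x => if idx x = 1 then 0 else if idx x ≤ k then 1 + (k - idx x) else 1 + (idx x - k)) _
      {a, b} (fun _ => 0) rfl ?_ ?_ ?_ (by simp) (by simp) rfl ?_
    · intro x hx
      simp only [Finset.mem_insert, Finset.mem_singleton] at hx
      rcases hx with rfl | rfl <;> assumption
    · intro x hx y hy hxy
      simp only [Finset.mem_insert, Finset.mem_singleton] at hx hy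
      rcases hx with rfl | rfl <;> rcases hy with rfl | rfl
      · exact (hxy.ne rfl).elim
      · exact (hnab hxy).elim
      · exact (hnab hxy.symm).elim
      · exact (hxy.ne rfl).elim
    · simp [hva.ne, hvb.ne]
    · have hmem : ∀ t ≤ m, t ≠ 0 → t ≠ 2 → p t ∈ U \ {a, b} := by
        intro t ht h0 h2
        have h1 := hpne t ht 0 (by omega) h0
        have h2 := hpne t ht 2 (by omega) h2
        rw [hp0] at h1
        rw [hp2] at h2
        simp [hpU t ht, h1, h2]
      intro x hx hxv
      obtain ⟨t, htm, rfl⟩ := hall x (Finset.mem_sdiff.1 hx).1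
      have ht3 : 3 ≤ t := by
        by_contra! h
        interval_cases t
        · simp [hp0] at hx
        · exact hxv hp1
        · simp [hp2] at hx
      rcases lt_trichotomy t k with h | h | h
      · refine ⟨p (t + 1), hmem _ (by omega) (by omega) (by omega), hpadj t (by omega), ?_⟩
        rw [hidx t htm, hidx (t + 1) (by omega)]
        split_ifs <;> omega
      · subst h
        refine ⟨v, ?_, hw.2.symm, ?_⟩
        · have := hmem 1 (by omega) (by omega) (by omega)
          rwa [hp1] at this
        · have := hidx 1 (by omega)
          rw [hp1] at this
          rw [hidx t htm, this, if_pos rfl, if_neg (by omega)]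
          split_ifs <;> omega
      · refine ⟨p (t - 1), hmem _ (by omega) (by omega) (by omega), ?_, ?_⟩
        · have := hpadj (t - 1) (by omega)
          rw [show t - 1 + 1 = t by omega] at this
          exact this.symm
        · rw [hidx t htm, hidx (t - 1) (by omega)]
          split_ifs <;> omega
  · -- the cycle is a union of components
    obtain ⟨c₁, hc₁⟩ := ih C.card (by
      rw [← hU]; exact Finset.card_lt_card (Finset.ssubset_iff_subset_ne.2 ⟨hCU, hCU'⟩)) _ rfl
    obtain ⟨c₂, hc₂⟩ := ih (U \ C).card
      (by rw [← hU]; exact Finset.card_lt_card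
            ⟨Finset.sdiff_subset, fun h => (Finset.mem_sdiff.1 (h (hpU m le_rfl))).2
              (hpC m hjm.le le_rfl)⟩) _ rfl
    refine ⟨fun x => if x ∈ C then c₁ x else c₂ x, ?_⟩
    intro x hx y hy hxy
    dsimp only
    split_ifs with h1 h2 h2
    · exact hc₁ x h1 y h2 hxy
    · exact (hsep x h1 y (Finset.mem_sdiff.2 ⟨hy, h2⟩) hxy).elim
    · exact (hsep y h2 x (Finset.mem_sdiff.2 ⟨hx, h1⟩) hxy.symm).elim
    · exact hc₂ x (Finset.mem_sdiff.2 ⟨hx, h1⟩) y (Finset.mem_sdiff.2 ⟨hy, h2⟩) hxy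

open Classical in
/-- A graph of maximum degree at most three without `K₄` has an independent set containing at
least one third of its vertices. -/
theorem exists_independent_third [Fintype W] {Γ : SimpleGraph W}
    (hdeg : ∀ x, (Finset.univ.filter (Γ.Adj x)).card ≤ 3) (hfree : Γ.CliqueFree 4) :
    ∃ I : Finset W, Fintype.card W ≤ 3 * I.card ∧ ∀ x ∈ I, ∀ y ∈ I, ¬ Γ.Adj x y := by
  obtain ⟨c, hc⟩ := exists_properOn hdeg hfree _ Finset.univ rfl
  obtain ⟨a, -, ha⟩ := Finset.exists_max_image (Finset.univ : Finset (Fin 3))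
    (fun a => (Finset.univ.filter fun x => c x = a).card) ⟨0, by simp⟩
  refine ⟨Finset.univ.filter fun x => c x = a, ?_, ?_⟩
  · have h := Finset.card_eq_sum_card_fiberwise (f := c) (s := (Finset.univ : Finset W))
      (t := Finset.univ) (by simp)
    rw [Finset.card_univ] at h
    rw [h]
    refine (Finset.sum_le_card_nsmul _ _ _ ha).trans ?_
    simp
  · intro x hx y hy hxy
    simp only [Finset.mem_filter] at hx hy
    exact hc x (by simp) y (by simp) hxy (hx.2.trans hy.2.symm)

end Brooks

section Triangulated

/-- The combinatorial structure of the faces of a triangulation: `T φ` is the triangle bounding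
the face `φ`, every edge lies on exactly two faces, and the dual graph is connected. -/
structure IsTriangulation {Φ : Type*} (G : SimpleGraph V) (T : Φ → Finset V) : Prop where
  clique : ∀ φ, G.IsNClique 3 (T φ)
  edge : ∀ u v, G.Adj u v → {φ | u ∈ T φ ∧ v ∈ T φ}.ncard = 2
  dual : ∀ S : Set Φ, S.Nonempty →
    (∀ φ ∈ S, ∀ ψ u v, u ≠ v → u ∈ T φ → v ∈ T φ → u ∈ T ψ → v ∈ T ψ → ψ ∈ S) → S = Set.univ

theorem card_le_rank_add_one_of_ker_const {m n : Type*} [Fintype m] [Fintype n]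
    (A : Matrix m n (ZMod 2)) (h : ∀ f, A.mulVec f = 0 → ∀ i j, f i = f j) :
    Fintype.card n ≤ A.rank + 1 := by
  classical
  have h1 := A.mulVecLin.finrank_range_add_finrank_ker
  rw [Module.finrank_fintype_fun_eq_card] at h1
  have h2 : Module.finrank (ZMod 2) (LinearMap.ker A.mulVecLin) ≤ 1 := by
    refine (Submodule.finrank_mono (t := Submodule.span (ZMod 2) {fun _ => (1 : ZMod 2)}) ?_).trans
      (finrank_span_le_card _) |>.trans (by simp)
    intro f hf
    rw [Submodule.mem_span_singleton]
    by_cases hn : Nonempty n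
    · obtain ⟨i⟩ := hn
      refine ⟨f i, ?_⟩
      ext j
      simpa using h f hf i j
    · exact ⟨0, by ext j; exact (hn ⟨j⟩).elim⟩
  rw [Matrix.rank]
  omega

theorem ZMod.eq_of_add_eq_zero_two {a b : ZMod 2} (h : a + b = 0) : a = b := by
  revert a b; decide

namespace IsTriangulation

variable {Φ : Type*} {G : SimpleGraph V} {T : Φ → Finset V}

open Classical in
/-- The edge-vertex incidence matrix over `𝔽₂`. -/
noncomputable def edgeVertexMatrix (G : SimpleGraph V) : Matrix G.edgeSet V (ZMod 2) :=
  fun e v => if v ∈ e.1 then 1 else 0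

open Classical in
/-- The face-edge incidence matrix over `𝔽₂`. -/
noncomputable def faceEdgeMatrix (G : SimpleGraph V) (T : Φ → Finset V) :
    Matrix Φ G.edgeSet (ZMod 2) :=
  fun φ e => if ∀ v ∈ e.1, v ∈ T φ then 1 else 0

theorem edgeVertexMatrix_mulVec [Fintype V] (f : V → ZMod 2) {u v : V} (h : G.Adj u v) :
    (edgeVertexMatrix G).mulVec f ⟨s(u, v), h⟩ = f u + f v := by
  classical
  simp only [Matrix.mulVec, dotProduct, edgeVertexMatrix, ite_mul, one_mul, zero_mul]
  rw [← Finset.sum_filter]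
  have : (Finset.univ.filter fun w => w ∈ s(u, v)) = {u, v} := by ext; simp
  rw [this, Finset.sum_pair h.ne]

theorem card_vertices_le [Fintype V] [Fintype G.edgeSet] (hG : G.Preconnected) :
    Fintype.card V ≤ (edgeVertexMatrix G).rank + 1 := by
  refine card_le_rank_add_one_of_ker_const _ fun f hf i j => ?_
  obtain ⟨w⟩ := hG i j
  induction w with
  | nil => rfl
  | cons h _ ih =>
    rw [← ih]
    refine ZMod.eq_of_add_eq_zero_two ?_
    rw [← edgeVertexMatrix_mulVec f h, hf]
    rfl

theorem card_faces_le [Fintype V] [Fintype Φ] [Fintype G.edgeSet] (hT : IsTriangulation G T) :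
    Fintype.card Φ ≤ (faceEdgeMatrix G T).rank + 1 := by
  classical
  rw [← Matrix.rank_transpose]
  refine card_le_rank_add_one_of_ker_const _ fun f hf i j => ?_
  have key := hT.dual {φ | f φ = f i} ⟨i, rfl⟩ ?_
  · have : j ∈ {φ | f φ = f i} := key ▸ Set.mem_univ j
    exact this.symm
  intro φ hφ ψ u v huv h1 h2 h3 h4
  by_cases hne : φ = ψ
  · exact hne ▸ hφ
  have hadj : G.Adj u v := (hT.clique φ).1 h1 h2 huv
  obtain ⟨a, b, hab, hset⟩ := Set.ncard_eq_two.1 (hT.edge u v hadj)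
  have hmem : ∀ χ, (u ∈ T χ ∧ v ∈ T χ) ↔ χ = a ∨ χ = b := fun χ => by
    simpa using Set.ext_iff.1 hset χ
  have hsum : f a + f b = 0 := by
    have := congrFun hf ⟨s(u, v), hadj⟩
    simp only [Matrix.mulVec, dotProduct, Matrix.transpose_apply, faceEdgeMatrix, ite_mul, one_mul,
      zero_mul, Pi.zero_apply, Sym2.mem_iff, forall_eq_or_imp, forall_eq] at this
    rw [← Finset.sum_filter] at this
    have hs : (Finset.univ.filter fun χ => u ∈ T χ ∧ v ∈ T χ) = {a, b} := by
      ext χ; simp [hmem χ]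
    rw [hs, Finset.sum_pair hab] at this
    exact this
  have hab' := ZMod.eq_of_add_eq_zero_two hsum
  have e1 := (hmem φ).1 ⟨h1, h2⟩
  have e2 := (hmem ψ).1 ⟨h3, h4⟩
  simp only [Set.mem_ofPred_eq] at hφ ⊢
  rcases e1 with rfl | rfl <;> rcases e2 with rfl | rfl <;> simp_all

theorem faceEdgeMatrix_mul [Fintype V] [Fintype G.edgeSet] (hT : IsTriangulation G T) :
    faceEdgeMatrix G T * edgeVertexMatrix G = 0 := by
  classical
  ext φ v
  have hsum : (faceEdgeMatrix G T * edgeVertexMatrix G) φ v =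
      ∑ e : G.edgeSet, if v ∈ e.1 ∧ ∀ w ∈ e.1, w ∈ T φ then 1 else 0 := by
    rw [Matrix.mul_apply]
    refine Finset.sum_congr rfl fun e _ => ?_
    by_cases h1 : v ∈ e.1 <;> by_cases h2 : ∀ w ∈ e.1, w ∈ T φ <;>
      simp [faceEdgeMatrix, edgeVertexMatrix, h1, h2]
  rw [hsum, Finset.sum_boole, Matrix.zero_apply]
  by_cases hv : v ∈ T φ
  · obtain ⟨b, c, hb, hc, hbc, hset⟩ : ∃ b c, G.Adj v b ∧ G.Adj v c ∧ G.Adj b c ∧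
        T φ = {v, b, c} := by
      obtain ⟨x, y, z, hxy, hxz, hyz, h⟩ := is3Clique_iff.1 (hT.clique φ)
      rw [h] at hv
      simp only [Finset.mem_insert, Finset.mem_singleton] at hv
      rcases hv with rfl | rfl | rfl
      · exact ⟨y, z, hxy, hxz, hyz, h⟩
      · exact ⟨x, z, hxy.symm, hyz, hxz, by rw [h]; ext; simp; tauto⟩
      · exact ⟨x, y, hxz.symm, hyz.symm, hxy, by rw [h]; ext; simp; tauto⟩
    have hf : (Finset.univ.filter fun e : G.edgeSet => v ∈ e.1 ∧ ∀ w ∈ e.1, w ∈ T φ) =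
        {⟨s(v, b), hb⟩, ⟨s(v, c), hc⟩} := by
      ext ⟨e, he⟩
      simp only [Finset.mem_filter, Finset.mem_univ, true_and, Finset.mem_insert,
        Finset.mem_singleton, Subtype.ext_iff, hset]
      constructor
      · rintro ⟨h1, h2⟩
        obtain ⟨w, rfl⟩ := Sym2.mem_iff_exists.1 h1
        have hw := h2 w (by simp)
        have hvw : G.Adj v w := he
        rcases hw with rfl | rfl | rfl
        · exact (hvw.ne rfl).elim
        · exact Or.inl rfl
        · exact Or.inr rfl
      · rintro (rfl | rfl) <;> simp
    rw [hf, Finset.card_pair]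
    · rfl
    · simp [Subtype.ext_iff, hbc.ne, hc.ne]
  · have : (Finset.univ.filter fun e : G.edgeSet => v ∈ e.1 ∧ ∀ w ∈ e.1, w ∈ T φ) = ∅ := by
      ext e
      simp only [Finset.mem_filter, Finset.mem_univ, true_and, Finset.notMem_empty, iff_false,
        not_and]
      exact fun h h' => hv (h' v h)
    simp [this]

theorem three_mul_card [Fintype V] [Fintype Φ] [Fintype G.edgeSet] (hT : IsTriangulation G T) :
    3 * Fintype.card Φ = 2 * Fintype.card G.edgeSet := by
  classical
  have h := Finset.sum_card_bipartiteAbove_eq_sum_card_bipartiteBelow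
    (s := (Finset.univ : Finset Φ)) (t := (Finset.univ : Finset G.edgeSet))
    (fun φ e => ∀ v ∈ e.1, v ∈ T φ)
  have h1 : ∀ φ ∈ (Finset.univ : Finset Φ), (Finset.bipartiteAbove
      (fun (φ : Φ) (e : G.edgeSet) => ∀ v ∈ e.1, v ∈ T φ) Finset.univ φ).card = 3 := by
    intro φ _
    obtain ⟨x, y, z, hxy, hxz, hyz, hset⟩ := is3Clique_iff.1 (hT.clique φ)
    rw [Finset.card_eq_three]
    refine ⟨⟨s(x, y), hxy⟩, ⟨s(x, z), hxz⟩, ⟨s(y, z), hyz⟩, ?_, ?_, ?_, ?_⟩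
    · simp [Subtype.ext_iff, hyz.ne, hxz.ne]
    · simp [Subtype.ext_iff, hxz.ne, hxy.ne]
    · simp [Subtype.ext_iff, hxz.ne, hxy.ne]
    · ext ⟨e, he⟩
      simp only [Finset.mem_bipartiteAbove, Finset.mem_univ, true_and, Finset.mem_insert,
        Finset.mem_singleton, Subtype.ext_iff, hset]
      induction e with
      | _ u v =>
        have huv : G.Adj u v := he
        simp only [Sym2.mem_iff, forall_eq_or_imp, forall_eq, Sym2.eq_iff]
        have := huv.ne
        constructor
        · rintro ⟨h1 | h1 | h1, h2 | h2 | h2⟩ <;> subst h1 <;> subst h2 <;> simp_all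
        · rintro ((⟨rfl, rfl⟩ | ⟨rfl, rfl⟩) | (⟨rfl, rfl⟩ | ⟨rfl, rfl⟩) |
            (⟨rfl, rfl⟩ | ⟨rfl, rfl⟩)) <;> simp
  have h2 : ∀ e ∈ (Finset.univ : Finset G.edgeSet), (Finset.bipartiteBelow
      (fun (φ : Φ) (e : G.edgeSet) => ∀ v ∈ e.1, v ∈ T φ) Finset.univ e).card = 2 := by
    rintro ⟨e, he⟩ _
    induction e with
    | _ u v =>
      rw [← hT.edge u v he, ← Set.ncard_coe_finset]
      congr 1
      ext φ
      simp
  rw [Finset.sum_congr rfl h1, Finset.sum_congr rfl h2] at h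
  simp only [Finset.sum_const, Finset.card_univ, smul_eq_mul] at h
  omega

/-- The Euler characteristic of a triangulated closed surface is at most two. -/
theorem two_mul_card_le [Fintype V] [Fintype Φ] (hT : IsTriangulation G T) (hG : G.Preconnected) :
    2 * Fintype.card V ≤ Fintype.card Φ + 4 := by
  classical
  have h1 := card_vertices_le hG
  have h2 := hT.card_faces_le
  have h3 := Matrix.rank_add_rank_le_card_of_mul_eq_zero hT.faceEdgeMatrix_mul
  have h4 := hT.three_mul_card
  omega

end IsTriangulation

end Triangulated

theorem IsTrianglePacking.card_le_nu [Fintype V] {G : SimpleGraph V} {Y : Finset (Finset V)}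
    (hY : IsTrianglePacking G Y) : Y.card ≤ nu G := by
  refine le_csSup ⟨Fintype.card (Finset V), ?_⟩ ⟨Y, hY, rfl⟩
  rintro _ ⟨Z, -, rfl⟩
  exact Finset.card_le_univ Z

namespace IsTriangulation

variable {Φ : Type*} {G : SimpleGraph V} {T : Φ → Finset V}

/-- Two faces are adjacent in the dual graph if they share an edge. -/
def dualGraph (T : Φ → Finset V) : SimpleGraph Φ where
  Adj φ ψ := φ ≠ ψ ∧ ∃ u v, u ≠ v ∧ u ∈ T φ ∧ v ∈ T φ ∧ u ∈ T ψ ∧ v ∈ T ψ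
  symm := ⟨fun _ _ ⟨h, u, v, huv, h1, h2, h3, h4⟩ => ⟨h.symm, u, v, huv, h3, h4, h1, h2⟩⟩
  loopless := ⟨fun _ h => h.1 rfl⟩

theorem exists_unique_neighbor (hT : IsTriangulation G T) {φ : Φ} {u v : V} (h : G.Adj u v)
    (hu : u ∈ T φ) (hv : v ∈ T φ) :
    ∃ ψ, ∀ χ, χ ≠ φ → u ∈ T χ → v ∈ T χ → χ = ψ := by
  obtain ⟨a, b, hab, hset⟩ := Set.ncard_eq_two.1 (hT.edge u v h)
  have hmem : ∀ χ, (u ∈ T χ ∧ v ∈ T χ) ↔ χ = a ∨ χ = b := fun χ => by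
    simpa using Set.ext_iff.1 hset χ
  rcases (hmem φ).1 ⟨hu, hv⟩ with rfl | rfl
  · exact ⟨b, fun χ h1 h2 h3 => ((hmem χ).1 ⟨h2, h3⟩).resolve_left h1⟩
  · exact ⟨a, fun χ h1 h2 h3 => ((hmem χ).1 ⟨h2, h3⟩).resolve_right h1⟩

open Classical in
theorem degree_dualGraph_le [Fintype Φ] (hT : IsTriangulation G T) (φ : Φ) :
    (Finset.univ.filter ((dualGraph T).Adj φ)).card ≤ 3 := by
  obtain ⟨x, y, z, hxy, hxz, hyz, hset⟩ := is3Clique_iff.1 (hT.clique φ)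
  obtain ⟨a, ha⟩ := hT.exists_unique_neighbor (φ := φ) hxy (by simp [hset]) (by simp [hset])
  obtain ⟨b, hb⟩ := hT.exists_unique_neighbor (φ := φ) hxz (by simp [hset]) (by simp [hset])
  obtain ⟨c, hc⟩ := hT.exists_unique_neighbor (φ := φ) hyz (by simp [hset]) (by simp [hset])
  refine (Finset.card_le_card (t := {a, b, c}) ?_).trans Finset.card_le_three
  intro ψ hψ
  obtain ⟨hne, u, v, huv, h1, h2, h3, h4⟩ := (Finset.mem_filter.1 hψ).2
  have hne' := hne.symm
  simp only [hset, Finset.mem_insert, Finset.mem_singleton] at h1 h2 ⊢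
  rcases h1 with rfl | rfl | rfl <;> rcases h2 with rfl | rfl | rfl
  all_goals first
    | exact (huv rfl).elim
    | exact Or.inl (ha ψ hne' ‹_› ‹_›)
    | exact Or.inr (Or.inl (hb ψ hne' ‹_› ‹_›))
    | exact Or.inr (Or.inr (hc ψ hne' ‹_› ‹_›))

theorem eq_univ_of_dualGraph_closed (hT : IsTriangulation G T) {S : Set Φ} (hS : S.Nonempty)
    (h : ∀ φ ∈ S, ∀ ψ, (dualGraph T).Adj φ ψ → ψ ∈ S) : S = Set.univ := by
  refine hT.dual S hS fun φ hφ ψ u v huv h1 h2 h3 h4 => ?_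
  by_cases hne : φ = ψ
  · exact hne ▸ hφ
  · exact h φ hφ ψ ⟨hne, u, v, huv, h1, h2, h3, h4⟩

theorem exists_face (hT : IsTriangulation G T) {u v : V} (h : G.Adj u v) :
    ∃ φ, u ∈ T φ ∧ v ∈ T φ := by
  obtain ⟨a, b, hab, hset⟩ := Set.ncard_eq_two.1 (hT.edge u v h)
  exact ⟨a, (Set.ext_iff.1 hset a).2 (by simp)⟩

theorem injective [Fintype V] (hT : IsTriangulation G T) (hG : G.Preconnected)
    (hn : 4 ≤ Fintype.card V) : Function.Injective T := by
  classical
  intro φ ψ hφψ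
  by_contra hne
  have hS : ({φ, ψ} : Set Φ) = Set.univ := by
    refine hT.dual _ ⟨φ, by simp⟩ fun χ hχ ω u v huv h1 h2 h3 h4 => ?_
    have hχ' : T χ = T φ := by
      rcases hχ with rfl | rfl
      · rfl
      · exact hφψ.symm
    rw [hχ'] at h1 h2
    obtain ⟨a, ha⟩ := hT.exists_unique_neighbor ((hT.clique φ).1 h1 h2 huv) h1 h2
    by_cases hω : ω = φ
    · exact Or.inl hω
    · right
      rw [Set.mem_singleton_iff, ha ω hω h3 h4,
        ha ψ (Ne.symm hne) (hφψ ▸ h1) (hφψ ▸ h2)]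
  have hTall : ∀ χ, T χ = T φ := fun χ => by
    have : χ ∈ ({φ, ψ} : Set Φ) := hS ▸ Set.mem_univ χ
    rcases this with rfl | rfl
    · rfl
    · exact hφψ.symm
  have hcard := (hT.clique φ).2
  have hmem : ∀ v, v ∈ T φ := by
    intro v
    have : ∃ w, w ≠ v := by
      by_contra hw
      push Not at hw
      have : Fintype.card V ≤ 1 := Fintype.card_le_one_iff.2 fun a b => (hw a).trans (hw b).symm
      omega
    obtain ⟨w, hw⟩ := this
    obtain ⟨p⟩ := hG v w
    cases p with
    | nil => exact (hw rfl).elim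
    | cons h _ =>
      obtain ⟨χ, hχ, -⟩ := hT.exists_face h
      exact hTall χ ▸ hχ
  have : Fintype.card V ≤ 3 := by
    rw [← hcard, ← Finset.card_univ]
    exact Finset.card_le_card fun v _ => hmem v
  omega

theorem cliqueFree_dualGraph [Fintype V] [Fintype Φ] (hT : IsTriangulation G T)
    (hG : G.Preconnected) (hn : 4 ≤ Fintype.card V)
    (hK4 : ¬ Nonempty (G ≃g (⊤ : SimpleGraph (Fin 4)))) : (dualGraph T).CliqueFree 4 := by
  classical
  intro s hs
  have hcl : ∀ φ ∈ s, Finset.univ.filter ((dualGraph T).Adj φ) = s.erase φ := by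
    intro φ hφ
    symm
    refine Finset.eq_of_subset_of_card_le ?_ ?_
    · intro ψ hψ
      rw [Finset.mem_erase] at hψ
      simpa using hs.1 hφ hψ.2 hψ.1.symm
    · rw [Finset.card_erase_of_mem hφ, hs.2]
      exact hT.degree_dualGraph_le φ
  have hne : s.Nonempty := by rw [← Finset.card_pos, hs.2]; norm_num
  have huniv : (s : Set Φ) = Set.univ := by
    refine hT.eq_univ_of_dualGraph_closed (by simpa using hne) fun φ hφ ψ h => ?_
    have : ψ ∈ Finset.univ.filter ((dualGraph T).Adj φ) := by simpa using h
    rw [hcl φ hφ] at this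
    exact Finset.mem_of_mem_erase this
  have hcard : Fintype.card Φ = 4 := by
    rw [← hs.2, ← Finset.card_univ]
    congr 1
    exact (Finset.coe_eq_univ.1 huniv).symm
  have h1 := hT.two_mul_card_le hG
  have h2 := hT.three_mul_card
  have hV : Fintype.card V = 4 := by omega
  have hE : G.edgeFinset.card = 6 := by
    rw [edgeFinset_card]; omega
  have htop : G = ⊤ := by
    have hle : G.edgeFinset ⊆ (⊤ : SimpleGraph V).edgeFinset := edgeFinset_mono le_top
    have := Finset.eq_of_subset_of_card_le hle (by
      rw [card_edgeFinset_top_eq_card_choose_two, hV, hE]; decide)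
    exact edgeFinset_inj.1 this
  subst htop
  exact hK4 ⟨Iso.completeGraph (Fintype.equivFinOfCardEq hV)⟩

theorem two_mul_card_sub_le [Fintype V] [Fintype Φ] (hT : IsTriangulation G T)
    (hG : G.Preconnected) (hn : 4 ≤ Fintype.card V)
    (hK4 : ¬ Nonempty (G ≃g (⊤ : SimpleGraph (Fin 4)))) :
    2 * (Fintype.card V - 2) ≤ 3 * nu G := by
  classical
  obtain ⟨I, hI, hind⟩ := exists_independent_third (fun φ => hT.degree_dualGraph_le φ)
    (hT.cliqueFree_dualGraph hG hn hK4)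
  have hpack : IsTrianglePacking G (I.image T) := by
    refine ⟨?_, ?_⟩
    · intro t ht
      obtain ⟨φ, -, rfl⟩ := Finset.mem_image.1 ht
      exact hT.clique φ
    · intro s hs t ht hst e he
      obtain ⟨φ, hφ, rfl⟩ := Finset.mem_image.1 hs
      obtain ⟨ψ, hψ, rfl⟩ := Finset.mem_image.1 ht
      induction e with
      | _ u v =>
        rintro ⟨h1, h2⟩
        have huv : G.Adj u v := he
        exact hind φ hφ ψ hψ ⟨fun h => hst (h ▸ rfl), u, v, huv.ne, h1 u (by simp), h1 v (by simp),
          h2 u (by simp), h2 v (by simp)⟩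
  have h1 := hpack.card_le_nu
  rw [Finset.card_image_of_injective _ (hT.injective hG hn)] at h1
  have h2 := hT.two_mul_card_le hG
  omega

end IsTriangulation

section Plane

open Set Topology

/-- Simple polygonal arcs in the plane, as point sets with two ends. -/
inductive PLArc (a : ℂ) : ℂ → Set ℂ → Prop
  | seg {b : ℂ} : a ≠ b → PLArc a b (segment ℝ a b)
  | snoc {b c : ℂ} {A : Set ℂ} : PLArc a b A → b ≠ c → A ∩ segment ℝ b c = {b} →
      PLArc a c (A ∪ segment ℝ b c)

theorem segment_subset_segment_left {a b p : ℂ} (h : p ∈ segment ℝ a b) :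
    segment ℝ a p ⊆ segment ℝ a b :=
  (convex_segment a b).segment_subset (left_mem_segment ℝ a b) h

theorem segment_subset_segment_right {a b p : ℂ} (h : p ∈ segment ℝ a b) :
    segment ℝ p b ⊆ segment ℝ a b :=
  (convex_segment a b).segment_subset h (right_mem_segment ℝ a b)

theorem isCompact_segment (a b : ℂ) : IsCompact (segment ℝ a b) := by
  rw [segment_eq_image_lineMap]
  exact isCompact_Icc.image (by fun_prop)

namespace PLArc

variable {a b c p x y : ℂ} {A : Set ℂ}

theorem left_mem (h : PLArc a b A) : a ∈ A := by
  induction h with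
  | seg _ => exact left_mem_segment ℝ _ _
  | snoc _ _ _ ih => exact Or.inl ih

theorem right_mem (h : PLArc a b A) : b ∈ A := by
  cases h with
  | seg _ => exact right_mem_segment ℝ _ _
  | snoc _ _ _ => exact Or.inr (right_mem_segment ℝ _ _)

theorem ne (h : PLArc a b A) : a ≠ b := by
  cases h with
  | seg h => exact h
  | @snoc b' _ A' h1 h2 h3 =>
    rintro rfl
    have : a ∈ A' ∩ segment ℝ b' a := ⟨h1.left_mem, right_mem_segment ℝ _ _⟩
    rw [h3] at this
    exact h2 this.symm

theorem isCompact (h : PLArc a b A) : IsCompact A := by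
  induction h with
  | seg _ => exact isCompact_segment _ _
  | snoc _ _ _ ih => exact ih.union (isCompact_segment _ _)

theorem isClosed (h : PLArc a b A) : IsClosed A := h.isCompact.isClosed

theorem truncate (h : PLArc a b A) (hp : p ∈ A) (hpa : p ≠ a) : ∃ A' ⊆ A, PLArc a p A' := by
  induction h with
  | seg _ => exact ⟨_, segment_subset_segment_left hp, seg hpa.symm⟩
  | @snoc b c A h1 h2 h3 ih =>
    rcases hp with hp | hp
    · obtain ⟨A', hA', h⟩ := ih hp
      exact ⟨A', hA'.trans subset_union_left, h⟩
    · by_cases hpb : p = b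
      · subst hpb
        exact ⟨A, subset_union_left, h1⟩
      · refine ⟨A ∪ segment ℝ b p, union_subset_union_right _ (segment_subset_segment_left hp),
          snoc h1 (Ne.symm hpb) (Subset.antisymm ?_ ?_)⟩
        · rw [← h3]
          exact inter_subset_inter_right _ (segment_subset_segment_left hp)
        · rintro _ rfl
          exact ⟨h1.right_mem, left_mem_segment ℝ _ _⟩

theorem cons (h : PLArc b c A) (hab : a ≠ b) (hA : segment ℝ a b ∩ A = {b}) :
    PLArc a c (segment ℝ a b ∪ A) := by
  induction h with
  | seg h => exact snoc (seg hab) h hA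
  | @snoc d c A h1 h2 h3 ih =>
    rw [← union_assoc]
    have hsub : segment ℝ a b ∩ A = {b} := by
      refine Subset.antisymm ?_ ?_
      · rw [← hA]
        exact inter_subset_inter_right _ subset_union_left
      · rintro _ rfl
        exact ⟨right_mem_segment ℝ _ _, h1.left_mem⟩
    refine snoc (ih hsub) h2 (Subset.antisymm ?_ ?_)
    · rintro z ⟨hz | hz, hz'⟩
      · have hz2 : z ∈ segment ℝ a b ∩ (A ∪ segment ℝ d c) := ⟨hz, Or.inr hz'⟩
        rw [hA] at hz2
        rw [← h3]
        refine ⟨?_, hz'⟩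
        rw [hz2]
        exact h1.left_mem
      · rw [← h3]
        exact ⟨hz, hz'⟩
    · rintro _ rfl
      exact ⟨Or.inr h1.right_mem, left_mem_segment ℝ _ _⟩

theorem reverse (h : PLArc a b A) : PLArc b a A := by
  induction h with
  | @seg b h => rw [segment_symm]; exact seg h.symm
  | @snoc b c A h1 h2 h3 ih =>
    rw [union_comm, segment_symm]
    refine cons ih h2.symm ?_
    rw [inter_comm, segment_symm, h3]

theorem extend_segment (h : PLArc a x A) (hy : y ≠ a) :
    ∃ A' ⊆ A ∪ segment ℝ x y, PLArc a y A' := by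
  by_cases hyA : y ∈ A
  · obtain ⟨A', hA', h'⟩ := h.truncate hyA hy
    exact ⟨A', hA'.trans subset_union_left, h'⟩
  obtain ⟨m, ⟨hmA, hms⟩, hmin⟩ := (h.isCompact.inter (isCompact_segment x y)).exists_isMinOn
    ⟨x, h.right_mem, left_mem_segment ℝ _ _⟩ (f := fun z => dist z y) (by fun_prop)
  have hsub := segment_subset_segment_right hms
  have hmy : m ≠ y := fun e => hyA (e ▸ hmA)
  by_cases hma : m = a
  · subst hma
    exact ⟨_, hsub.trans subset_union_right, seg hmy⟩
  · obtain ⟨A', hA', h'⟩ := h.truncate hmA hma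
    refine ⟨A' ∪ segment ℝ m y, union_subset_union hA' hsub, snoc h' hmy (Subset.antisymm ?_ ?_)⟩
    · rintro z ⟨hz, hz'⟩
      have hle : dist m y ≤ dist z y := hmin ⟨hA' hz, hsub hz'⟩
      have hadd := dist_add_dist_of_mem_segment hz'
      have : dist m z = 0 := le_antisymm (by linarith) dist_nonneg
      exact (dist_eq_zero.1 this).symm
    · rintro _ rfl
      exact ⟨h'.right_mem, left_mem_segment ℝ _ _⟩

theorem extend_isOpen {U : Set ℂ} (hU : IsOpen U) (hU' : IsPreconnected U) (haU : a ∉ U)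
    (h : PLArc a x A) (hx : x ∈ U) (hy : y ∈ U) : ∃ A' ⊆ A ∪ U, PLArc a y A' := by
  refine hU'.induction₂' (fun z w => (∃ A' ⊆ A ∪ U, PLArc a z A') → ∃ A' ⊆ A ∪ U, PLArc a w A')
    ?_ (fun z w v _ _ _ h1 h2 h3 => h2 (h1 h3)) hx hy ⟨A, subset_union_left, h⟩
  intro z hz
  obtain ⟨r, hr, hball⟩ := Metric.isOpen_iff.1 hU z hz
  refine Filter.Eventually.filter_mono nhdsWithin_le_nhds ?_
  filter_upwards [Metric.ball_mem_nhds z hr] with w hw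
  have hseg : segment ℝ z w ⊆ U :=
    ((convex_ball z r).segment_subset (Metric.mem_ball_self hr) hw).trans hball
  have hwU := hball hw
  constructor
  · rintro ⟨A', hA', h'⟩
    obtain ⟨A'', hA'', h''⟩ := h'.extend_segment (y := w) (fun e => haU (e ▸ hwU))
    exact ⟨A'', hA''.trans (union_subset hA' (hseg.trans subset_union_right)), h''⟩
  · rintro ⟨A', hA', h'⟩
    obtain ⟨A'', hA'', h''⟩ := h'.extend_segment (y := z) (fun e => haU (e ▸ hz))
    rw [segment_symm] at hA''
    exact ⟨A'', hA''.trans (union_subset hA' (hseg.trans subset_union_right)), h''⟩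

theorem exists_param_aux (h : PLArc a b A) : ∃ (T : ℝ) (γ : ℝ → ℂ), 0 < T ∧
    ContinuousOn γ (Icc 0 T) ∧ InjOn γ (Icc 0 T) ∧ γ 0 = a ∧ γ T = b ∧ A = γ '' Icc 0 T := by
  induction h with
  | @seg b h =>
    refine ⟨1, fun t => AffineMap.lineMap a b t, one_pos, by fun_prop,
      (AffineMap.lineMap_injective ℝ h).injOn, by simp, by simp, segment_eq_image_lineMap ℝ a b⟩
  | @snoc b c A h1 h2 h3 ih =>
    obtain ⟨T, γ, hT, hc, hi, h0, hT', hA⟩ := ih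
    set g : ℝ → ℂ := fun t => AffineMap.lineMap b c (t - T) with hg
    have hgc : Continuous g := by fun_prop
    have hgi : Function.Injective g :=
      (AffineMap.lineMap_injective ℝ h2).comp (sub_left_injective)
    have hgT : g T = b := by simp [hg]
    have him : g '' Icc T (T + 1) = segment ℝ b c := by
      rw [segment_eq_image_lineMap, hg]
      ext z
      constructor
      · rintro ⟨t, ht, rfl⟩
        exact ⟨t - T, ⟨by linarith [ht.1], by linarith [ht.2]⟩, rfl⟩
      · rintro ⟨t, ht, rfl⟩
        exact ⟨t + T, ⟨by linarith [ht.1], by linarith [ht.2]⟩, by simp⟩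
    set η : ℝ → ℂ := fun t => if t ≤ T then γ t else g t with hη
    have e1 : EqOn η γ (Icc 0 T) := fun t ht => if_pos ht.2
    have e2 : EqOn η g (Icc T (T + 1)) := fun t ht => by
      by_cases h : t ≤ T
      · have : t = T := le_antisymm h ht.1
        subst this
        simp [hη, hT', hgT]
      · exact if_neg h
    have hU : Icc 0 (T + 1) = Icc 0 T ∪ Icc T (T + 1) :=
      (Icc_union_Icc_eq_Icc hT.le (by linarith)).symm
    refine ⟨T + 1, η, by linarith, ?_, ?_, ?_, ?_, ?_⟩
    · rw [hU]
      exact (hc.congr e1).union_of_isClosed (hgc.continuousOn.congr e2) isClosed_Icc isClosed_Icc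
    · have key : ∀ s ∈ Icc 0 T, ∀ t ∈ Icc T (T + 1), η s = η t → s = t := by
        intro s hs t ht hst
        rw [e1 hs, e2 ht] at hst
        have hmem : γ s ∈ A ∩ segment ℝ b c :=
          ⟨hA ▸ mem_image_of_mem γ hs, hst ▸ him ▸ mem_image_of_mem g ht⟩
        rw [h3, mem_singleton_iff] at hmem
        have hs' : s = T := hi hs ⟨hT.le, le_rfl⟩ (hmem.trans hT'.symm)
        have ht' : t = T := hgi (hst.symm.trans (hmem.trans hgT.symm))
        rw [hs', ht']
      rw [hU]
      rintro s (hs | hs) t (ht | ht) hst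
      · exact hi hs ht (by rwa [e1 hs, e1 ht] at hst)
      · exact key s hs t ht hst
      · exact (key t ht s hs hst.symm).symm
      · exact hgi (by rwa [e2 hs, e2 ht] at hst)
    · rw [e1 ⟨le_rfl, hT.le⟩, h0]
    · rw [e2 ⟨by linarith, le_rfl⟩]; simp [hg]
    · rw [hU, image_union, e1.image_eq, e2.image_eq, him, ← hA]

theorem exists_param (h : PLArc a b A) : ∃ γ : ℝ → ℂ,
    ContinuousOn γ (Icc 0 1) ∧ InjOn γ (Icc 0 1) ∧ γ 0 = a ∧ γ 1 = b ∧ A = γ '' Icc 0 1 := by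
  obtain ⟨T, γ, hT, hc, hi, h0, hT', hA⟩ := h.exists_param_aux
  have hmaps : MapsTo (fun t : ℝ => T * t) (Icc 0 1) (Icc 0 T) := fun t ht =>
    ⟨by have := ht.1; positivity, by nlinarith [ht.2]⟩
  have him : (fun t : ℝ => T * t) '' Icc 0 1 = Icc 0 T := by
    refine Subset.antisymm hmaps.image_subset fun t ht => ⟨t / T, ⟨?_, ?_⟩, ?_⟩
    · exact div_nonneg ht.1 hT.le
    · rw [div_le_one hT]; exact ht.2
    · simp only; field_simp
  refine ⟨γ ∘ fun t => T * t, hc.comp (by fun_prop) hmaps,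
    hi.comp (mul_right_injective₀ hT.ne').injOn hmaps, by simp [h0], by simp [hT'], ?_⟩
  rw [image_comp, him, hA]

end PLArc

/-- Off `K` there is a continuous branch of the logarithm of `(y - z) / (x - z)`. -/
def HasLog (K : Set ℂ) (x y : ℂ) : Prop :=
  ∃ L : ℂ → ℂ, ContinuousOn L Kᶜ ∧ ∀ z ∉ K, Complex.exp (L z) = (y - z) / (x - z)

theorem HasLog.trans {K K' : Set ℂ} {x y w : ℂ} (h : HasLog K x y) (h' : HasLog K' y w)
    (hy : y ∈ K) : HasLog (K ∪ K') x w := by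
  obtain ⟨L, hL, hL'⟩ := h
  obtain ⟨M, hM, hM'⟩ := h'
  refine ⟨fun z => L z + M z, ?_, fun z hz => ?_⟩
  · exact (hL.mono (compl_subset_compl.2 subset_union_left)).add
      (hM.mono (compl_subset_compl.2 subset_union_right))
  · rw [mem_union, not_or] at hz
    rw [Complex.exp_add, hL' z hz.1, hM' z hz.2]
    have : y - z ≠ 0 := sub_ne_zero.2 fun e => hz.1 (e ▸ hy)
    rw [mul_comm]
    exact div_mul_div_cancel₀ this

theorem div_mem_slitPlane_of_notMem_segment {x y z : ℂ} (hz : z ∉ segment ℝ x y) :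
    (y - z) / (x - z) ∈ Complex.slitPlane := by
  by_contra h
  rw [Complex.mem_slitPlane_iff, not_or, not_lt, not_not] at h
  have hx : x - z ≠ 0 := sub_ne_zero.2 fun e => hz (e ▸ left_mem_segment ℝ x y)
  set r := ((y - z) / (x - z)).re with hr
  have he : (y - z) / (x - z) = (r : ℂ) := Complex.ext (by simp [hr]) (by simp [h.2])
  rw [div_eq_iff hx] at he
  refine hz ⟨-r / (1 - r), 1 / (1 - r), ?_, ?_, ?_, ?_⟩
  · exact div_nonneg (by linarith [h.1]) (by linarith [h.1])
  · exact div_nonneg zero_le_one (by linarith [h.1])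
  · have : 1 - r ≠ 0 := by linarith [h.1]
    field_simp
    ring
  · have h1 : (1 - r : ℂ) ≠ 0 := by
      have : (1 - r : ℝ) ≠ 0 := by linarith [h.1]
      exact_mod_cast this
    simp only [Complex.real_smul]
    push_cast
    field_simp
    linear_combination he

theorem continuousOn_log_div (x y : ℂ) :
    ContinuousOn (fun z => Complex.log ((y - z) / (x - z))) (segment ℝ x y)ᶜ := by
  refine ContinuousOn.clog ?_ fun z hz => div_mem_slitPlane_of_notMem_segment hz
  refine ContinuousOn.div (by fun_prop) (by fun_prop) fun z hz => ?_
  exact sub_ne_zero.2 fun e => hz (e ▸ left_mem_segment ℝ x y)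

theorem exp_log_div {x y z : ℂ} (hz : z ∉ segment ℝ x y) :
    Complex.exp (Complex.log ((y - z) / (x - z))) = (y - z) / (x - z) :=
  Complex.exp_log (Complex.slitPlane_ne_zero (div_mem_slitPlane_of_notMem_segment hz))

theorem hasLog_segment (x y : ℂ) : HasLog (segment ℝ x y) x y :=
  ⟨_, continuousOn_log_div x y, fun _ hz => exp_log_div hz⟩

namespace PLArc

variable {a b : ℂ} {A : Set ℂ}

theorem hasLog (h : PLArc a b A) : HasLog A a b := by
  induction h with
  | seg _ => exact hasLog_segment _ _
  | snoc h1 _ _ ih => exact ih.trans (hasLog_segment _ _) h1.right_mem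

theorem exists_start (h : PLArc a b A) : ∃ B ≠ 0, ∃ A', IsClosed A' ∧ a ∉ A' ∧
    A = segment ℝ a (a + B) ∪ A' ∧ a + B ∈ A' ∧ b ∈ A' ∧ HasLog A' (a + B) b := by
  induction h with
  | @seg b h =>
    refine ⟨b - a, sub_ne_zero.2 h.symm, {b}, isClosed_singleton, h, ?_, by simp, rfl, ?_⟩
    · simp [insert_eq_of_mem (right_mem_segment ℝ a b)]
    · rw [add_sub_cancel]
      simpa using hasLog_segment b b
  | @snoc b c A h1 h2 h3 ih =>
    obtain ⟨B, hB, A', hA', ha, hA, hBm, hb, hlog⟩ := ih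
    refine ⟨B, hB, A' ∪ segment ℝ b c, hA'.union (isCompact_segment _ _).isClosed, ?_, ?_,
      Or.inl hBm, Or.inr (right_mem_segment ℝ _ _), hlog.trans (hasLog_segment _ _) hb⟩
    · rintro (h | h)
      · exact ha h
      · have : a ∈ A ∩ segment ℝ b c := ⟨h1.left_mem, h⟩
        rw [h3] at this
        exact h1.ne this
    · rw [← union_assoc, ← hA]

end PLArc

theorem IsPreconnected.eq_of_exp_eq_one {X : Set ℂ} (hX : IsPreconnected X) {W : ℂ → ℂ}
    (hW : ContinuousOn W X) (h1 : ∀ z ∈ X, Complex.exp (W z) = 1) {z w : ℂ} (hz : z ∈ X)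
    (hw : w ∈ X) : W z = W w := by
  have : DiscreteTopology
      ((AddSubgroup.zmultiples (2 * Real.pi * Complex.I : ℂ) : AddSubgroup ℂ) : Set ℂ) :=
    inferInstanceAs (DiscreteTopology (AddSubgroup.zmultiples (2 * Real.pi * Complex.I : ℂ)))
  refine hX.constant_of_mapsTo
    (T := ((AddSubgroup.zmultiples (2 * Real.pi * Complex.I : ℂ) : AddSubgroup ℂ) : Set ℂ))
    ⟨this⟩ hW (fun x hx => ?_) hz hw
  obtain ⟨n, hn⟩ := Complex.exp_eq_one_iff.1 (h1 x hx)
  exact ⟨n, by simp [hn]⟩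

theorem neg_div_mem_slitPlane {p B Y : ℂ} (hB : B ≠ 0) (hY : Y ≠ 0)
    (h : ∀ᶠ s : ℝ in 𝓝[>] 0, p + s * Y ∉ segment ℝ p (p + B)) : -(B / Y) ∈ Complex.slitPlane := by
  by_contra hn
  rw [Complex.mem_slitPlane_iff, not_or, not_lt, not_not] at hn
  set r := (B / Y).re with hr
  have he : B / Y = (r : ℂ) := Complex.ext (by simp [hr]) (by simpa using hn.2)
  have hBY : B = r * Y := by rwa [div_eq_iff hY] at he
  have hr0 : 0 < r := by
    refine lt_of_le_of_ne (by simpa using hn.1) fun e => hB ?_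
    rw [hBY, ← e]; simp
  obtain ⟨s, hs, hs0, hsr⟩ := (h.and (Ioo_mem_nhdsGT hr0)).exists
  refine hs ⟨1 - s / r, s / r, ?_, ?_, by ring, ?_⟩
  · rw [sub_nonneg, div_le_one hr0]; exact hsr.le
  · positivity
  · have : (r : ℂ) ≠ 0 := by exact_mod_cast hr0.ne'
    simp only [Complex.real_smul, hBY]
    push_cast
    field_simp
    ring

theorem tendsto_im_log_div {p B Y : ℂ} (hY : Y ≠ 0) (h : -(B / Y) ∈ Complex.slitPlane) :
    Filter.Tendsto (fun s : ℝ => (Complex.log ((p + B - (p + s * Y)) / (p - (p + s * Y)))).im)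
      (𝓝[>] 0) (𝓝 (Complex.arg (-(B / Y)))) := by
  have h1 : Filter.Tendsto (fun s : ℝ => Complex.arg (-((B - s * Y) / Y))) (𝓝[>] 0)
      (𝓝 (Complex.arg (-(B / Y)))) := by
    have hc : ContinuousAt (fun s : ℝ => Complex.arg (-((B - s * Y) / Y))) 0 := by
      have h2 := Complex.continuousAt_arg h
      refine ContinuousAt.comp (x := (0 : ℝ)) (g := Complex.arg)
        (f := fun s : ℝ => -((B - s * Y) / Y)) ?_ (by fun_prop)
      simpa using h2
    have := hc.tendsto
    simp only [Complex.ofReal_zero, zero_mul, sub_zero] at this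
    exact this.mono_left nhdsWithin_le_nhds
  refine h1.congr' ?_
  filter_upwards [self_mem_nhdsWithin] with s hs
  have hs : (0 : ℝ) < s := hs
  have hsc : (s : ℂ) ≠ 0 := by exact_mod_cast hs.ne'
  rw [Complex.log_im, ← Complex.arg_real_mul (-((B - s * Y) / Y)) (inv_pos.2 hs)]
  congr 1
  push_cast
  have : p - (p + s * Y) = -(s * Y) := by ring
  rw [this]
  field_simp
  ring

/-- A closed curve that starts from `p` with the segment in direction `B` and comes back with the
segment in direction `C` separates the two sectors between these segments. -/
theorem arg_sub_arg_eq_of_isPreconnected {p B C Y D : ℂ} {K X : Set ℂ} (hB : B ≠ 0) (hC : C ≠ 0)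
    (hY : Y ≠ 0) (hD : D ≠ 0) (hK : IsClosed K) (hpK : p ∉ K) (hBK : p + B ∈ K) (hCK : p + C ∈ K)
    (hlog : HasLog K (p + B) (p + C))
    (hX : IsPreconnected X) (hXB : Disjoint X (segment ℝ p (p + B)))
    (hXC : Disjoint X (segment ℝ p (p + C))) (hXK : Disjoint X K)
    (hXY : ∀ᶠ s : ℝ in 𝓝[>] 0, p + s * Y ∈ X) (hXD : ∀ᶠ s : ℝ in 𝓝[>] 0, p + s * D ∈ X) :
    Complex.arg (-(B / Y)) - Complex.arg (-(C / Y)) =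
      Complex.arg (-(B / D)) - Complex.arg (-(C / D)) := by
  obtain ⟨M, hM, hM'⟩ := hlog
  set W : ℂ → ℂ := fun z => Complex.log ((p + B - z) / (p - z)) + M z -
    Complex.log ((p + C - z) / (p - z)) with hW
  have hcont : ContinuousOn W X :=
    (((continuousOn_log_div p (p + B)).mono hXB.subset_compl_right).add
      (hM.mono hXK.subset_compl_right)).sub
      ((continuousOn_log_div p (p + C)).mono hXC.subset_compl_right)
  have hexp : ∀ z ∈ X, Complex.exp (W z) = 1 := by
    intro z hz
    have zB : z ∉ segment ℝ p (p + B) := hXB.notMem_of_mem_left hz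
    have zC : z ∉ segment ℝ p (p + C) := hXC.notMem_of_mem_left hz
    have zK : z ∉ K := hXK.notMem_of_mem_left hz
    rw [hW]
    simp only
    rw [Complex.exp_sub, Complex.exp_add, exp_log_div zB, exp_log_div zC, hM' z zK]
    have h1 : p - z ≠ 0 := sub_ne_zero.2 fun e => zB (e ▸ left_mem_segment ℝ _ _)
    have h2 : p + B - z ≠ 0 := sub_ne_zero.2 fun e => zK (e ▸ hBK)
    have h3 : p + C - z ≠ 0 := sub_ne_zero.2 fun e => zK (e ▸ hCK)
    field_simp
  have hlim : ∀ Z : ℂ, Z ≠ 0 → (∀ᶠ s : ℝ in 𝓝[>] 0, p + s * Z ∈ X) →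
      Filter.Tendsto (fun s : ℝ => (W (p + s * Z)).im) (𝓝[>] 0)
        (𝓝 (Complex.arg (-(B / Z)) + (M p).im - Complex.arg (-(C / Z)))) := by
    intro Z hZ hXZ
    have t1 := tendsto_im_log_div (p := p) hZ (neg_div_mem_slitPlane hB hZ
      (hXZ.mono fun s hs => hXB.notMem_of_mem_left hs))
    have t2 := tendsto_im_log_div (p := p) hZ (neg_div_mem_slitPlane hC hZ
      (hXZ.mono fun s hs => hXC.notMem_of_mem_left hs))
    have t3 : Filter.Tendsto (fun s : ℝ => (M (p + s * Z)).im) (𝓝[>] 0) (𝓝 (M p).im) := by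
      have hMp : ContinuousAt M p := hM.continuousAt (hK.isOpen_compl.mem_nhds hpK)
      have : ContinuousAt (fun s : ℝ => (M (p + s * Z)).im) 0 := by
        refine Complex.continuous_im.continuousAt.comp ?_
        refine ContinuousAt.comp (x := (0 : ℝ)) (f := fun s : ℝ => p + s * Z) ?_ (by fun_prop)
        simpa using hMp
      have := this.tendsto
      simp only [Complex.ofReal_zero, zero_mul, add_zero] at this
      exact this.mono_left nhdsWithin_le_nhds
    refine ((t1.add t3).sub t2).congr fun s => ?_
    simp [hW]
  have hYl := hlim Y hY hXY
  have hDl := hlim D hD hXD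
  have heq : (fun s : ℝ => (W (p + s * Y)).im) =ᶠ[𝓝[>] 0] fun s : ℝ => (W (p + s * D)).im := by
    filter_upwards [hXY, hXD] with s h1 h2
    rw [hX.eq_of_exp_eq_one hcont hexp h1 h2]
  have := tendsto_nhds_unique hYl (hDl.congr' heq.symm)
  linarith

theorem arg_neg_div_swap {x y : ℂ} (h : -(x / y) ∈ Complex.slitPlane) :
    Complex.arg (-(y / x)) = -Complex.arg (-(x / y)) := by
  have : -(y / x) = (-(x / y))⁻¹ := by rw [inv_neg, inv_div]
  rw [this, Complex.arg_inv, if_neg (Complex.mem_slitPlane_iff_arg.1 h).1]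

theorem arg_neg_div_cycle_ne_zero {x y z : ℂ} (hx : x ≠ 0) (hy : y ≠ 0) (hz : z ≠ 0) :
    Complex.arg (-(x / y)) + Complex.arg (-(y / z)) + Complex.arg (-(z / x)) ≠ 0 := by
  intro h
  have e1 := Complex.norm_mul_exp_arg_mul_I (-(x / y))
  have e2 := Complex.norm_mul_exp_arg_mul_I (-(y / z))
  have e3 := Complex.norm_mul_exp_arg_mul_I (-(z / x))
  have hexp : Complex.exp (Complex.arg (-(x / y)) * Complex.I) *
      Complex.exp (Complex.arg (-(y / z)) * Complex.I) *
      Complex.exp (Complex.arg (-(z / x)) * Complex.I) = 1 := by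
    rw [← Complex.exp_add, ← Complex.exp_add, ← add_mul, ← add_mul, ← Complex.ofReal_add,
      ← Complex.ofReal_add, h]
    simp
  have hprod : (-(x / y)) * (-(y / z)) * (-(z / x)) = -1 := by field_simp
  rw [← e1, ← e2, ← e3] at hprod
  have hpos : ((‖-(x / y)‖ * ‖-(y / z)‖ * ‖-(z / x)‖ : ℝ) : ℂ) = ((-1 : ℝ) : ℂ) := by
    push_cast
    rw [← hprod]
    linear_combination (-(‖-(x / y)‖ * ‖-(y / z)‖ * ‖-(z / x)‖ : ℂ)) * hexp
  have h1 := Complex.ofReal_injective hpos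
  have : (0 : ℝ) ≤ ‖-(x / y)‖ * ‖-(y / z)‖ * ‖-(z / x)‖ := by positivity
  linarith

/-- Among four directions no pair can fail to separate the two others in every way. -/
theorem false_of_arg_sub_arg_eq {b c d y : ℂ} (hb : b ≠ 0) (hc : c ≠ 0) (hd : d ≠ 0)
    (hbc : -(b / c) ∈ Complex.slitPlane) (hbd : -(b / d) ∈ Complex.slitPlane)
    (hcd : -(c / d) ∈ Complex.slitPlane)
    (h1 : Complex.arg (-(b / y)) - Complex.arg (-(c / y)) =
      Complex.arg (-(b / d)) - Complex.arg (-(c / d)))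
    (h2 : Complex.arg (-(b / y)) - Complex.arg (-(d / y)) =
      Complex.arg (-(b / c)) - Complex.arg (-(d / c)))
    (h3 : Complex.arg (-(c / y)) - Complex.arg (-(d / y)) =
      Complex.arg (-(c / b)) - Complex.arg (-(d / b))) : False := by
  have := arg_neg_div_cycle_ne_zero hb hc hd
  rw [arg_neg_div_swap hbc, arg_neg_div_swap hbd] at h3
  rw [arg_neg_div_swap hcd] at h2
  rw [arg_neg_div_swap hbd] at this
  exact this (by linarith)

theorem false_of_arg_sub_arg_eq_near {B C : ℂ} {r : ℝ} (hr : 0 < r) (hB : B ≠ 0)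
    (hBC : -(C / B) ∈ Complex.slitPlane)
    (h : ∀ᶠ τ : ℝ in 𝓝[>] 0,
      Complex.arg (-(B / (B * (r + τ * Complex.I)))) -
        Complex.arg (-(C / (B * (r + τ * Complex.I)))) =
      Complex.arg (-(B / (B * (r - τ * Complex.I)))) -
        Complex.arg (-(C / (B * (r - τ * Complex.I))))) : False := by
  have hrc : (r : ℂ) ≠ 0 := by exact_mod_cast hr.ne'
  have hC : -(C / (B * r)) ∈ Complex.slitPlane := by
    have : -(C / (B * r)) = ((r⁻¹ : ℝ) : ℂ) * (-(C / B)) := by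
      push_cast; field_simp
    rw [this, Complex.mem_slitPlane_iff_arg, Complex.arg_real_mul _ (inv_pos.2 hr)]
    refine ⟨(Complex.mem_slitPlane_iff_arg.1 hBC).1, ?_⟩
    exact mul_ne_zero (by exact_mod_cast (inv_pos.2 hr).ne') (Complex.slitPlane_ne_zero hBC)
  have hlim : ∀ k : ℂ, Filter.Tendsto (fun τ : ℝ => (B * (r + k * τ))) (𝓝[>] 0) (𝓝 (B * r)) := by
    intro k
    have : Continuous fun τ : ℝ => (B * (r + k * τ)) := by fun_prop
    have := this.tendsto 0
    simp only [Complex.ofReal_zero, mul_zero, add_zero] at this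
    exact this.mono_left nhdsWithin_le_nhds
  have hargC : ∀ k : ℂ, Filter.Tendsto (fun τ : ℝ => Complex.arg (-(C / (B * (r + k * τ)))))
      (𝓝[>] 0) (𝓝 (Complex.arg (-(C / (B * r))))) := fun k =>
    (Complex.continuousAt_arg hC).tendsto.comp
      ((tendsto_const_nhds.div (hlim k) (mul_ne_zero hB hrc)).neg)
  have hB' : ∀ k : ℂ, Filter.Tendsto (fun τ : ℝ => -(B / (B * (r + k * τ)))) (𝓝[>] 0)
      (𝓝 (-(B / (B * r)))) := fun k =>
    ((tendsto_const_nhds.div (hlim k) (mul_ne_zero hB hrc)).neg)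
  have hform : -(B / (B * r)) = ((-r⁻¹ : ℝ) : ℂ) := by
    push_cast; field_simp
  have him : ∀ (k : ℝ) (τ : ℝ), (-(B / (B * (r + (k * Complex.I) * τ)))).im =
      k * τ / (r ^ 2 + (k * τ) ^ 2) := by
    intro k τ
    have hne : r ^ 2 + (k * τ) ^ 2 ≠ 0 := by positivity
    have e : -(B / (B * (r + (k * Complex.I) * τ))) = -(r + (k * Complex.I) * τ : ℂ)⁻¹ := by
      rw [div_mul_eq_div_div, div_self hB, one_div]
    rw [e, Complex.neg_im, Complex.inv_im, Complex.normSq_apply]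
    simp
    ring
  have hup : Filter.Tendsto (fun τ : ℝ => Complex.arg (-(B / (B * (r + (1 : ℝ) * Complex.I * τ)))))
      (𝓝[>] 0) (𝓝 Real.pi) := by
    refine (Complex.tendsto_arg_nhdsWithin_im_nonneg_of_re_neg_of_im_zero
      (z := ((-r⁻¹ : ℝ) : ℂ)) (by simpa using hr) (by simp)).comp ?_
    refine tendsto_nhdsWithin_iff.2 ⟨hform ▸ hB' _, ?_⟩
    filter_upwards [self_mem_nhdsWithin] with τ hτ
    have hτ : (0 : ℝ) < τ := hτ
    change 0 ≤ Complex.im _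
    rw [him]
    positivity
  have hdown : Filter.Tendsto
      (fun τ : ℝ => Complex.arg (-(B / (B * (r + (-1 : ℝ) * Complex.I * τ)))))
      (𝓝[>] 0) (𝓝 (-Real.pi)) := by
    refine (Complex.tendsto_arg_nhdsWithin_im_neg_of_re_neg_of_im_zero
      (z := ((-r⁻¹ : ℝ) : ℂ)) (by simpa using hr) (by simp)).comp ?_
    refine tendsto_nhdsWithin_iff.2 ⟨hform ▸ hB' _, ?_⟩
    filter_upwards [self_mem_nhdsWithin] with τ hτ
    have hτ : (0 : ℝ) < τ := hτ
    change Complex.im _ < 0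
    rw [him]
    exact div_neg_of_neg_of_pos (by linarith) (by positivity)
  have t1 := hup.sub (hargC ((1 : ℝ) * Complex.I))
  have t2 := hdown.sub (hargC ((-1 : ℝ) * Complex.I))
  have := tendsto_nhds_unique t1 (t2.congr' ?_)
  · linarith [Real.pi_pos]
  · filter_upwards [h] with τ hτ
    have e1 : (r + (1 : ℝ) * Complex.I * τ : ℂ) = r + τ * Complex.I := by push_cast; ring
    have e2 : (r + (-1 : ℝ) * Complex.I * τ : ℂ) = r - τ * Complex.I := by push_cast; ring
    rw [e1, e2]
    exact hτ.symm

theorem segment_eq_union_of_mem {b c p : ℂ} (hp : p ∈ segment ℝ b c) :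
    segment ℝ b c = segment ℝ p b ∪ segment ℝ p c := by
  refine Subset.antisymm ?_ (union_subset ?_ ?_)
  · rw [segment_eq_image_lineMap] at hp ⊢
    obtain ⟨r, hr, rfl⟩ := hp
    rintro _ ⟨s, hs, rfl⟩
    rcases le_total s r with h | h
    · left
      rw [segment_symm, ← AffineMap.lineMap_apply_zero (k := ℝ) b c]
      have := mem_image_of_mem (AffineMap.lineMap b c : ℝ →ᵃ[ℝ] ℂ)
        (show s ∈ segment ℝ (0 : ℝ) r by rw [segment_eq_Icc hr.1]; exact ⟨hs.1, h⟩)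
      rw [image_segment] at this
      simpa using this
    · right
      have := mem_image_of_mem (AffineMap.lineMap b c : ℝ →ᵃ[ℝ] ℂ)
        (show s ∈ segment ℝ r (1 : ℝ) by rw [segment_eq_Icc hr.2]; exact ⟨h, hs.2⟩)
      rw [image_segment] at this
      simpa using this
  · rw [segment_symm]
    exact segment_subset_segment_left hp
  · exact segment_subset_segment_right hp

theorem exists_rays_segment {b c p : ℂ} (hp : p ∈ segment ℝ b c) (hb : p ≠ b) (hc : p ≠ c) :
    ∃ d₁ d₂ : ℂ, d₁ ≠ 0 ∧ d₂ ≠ 0 ∧ -(d₁ / d₂) ∈ Complex.slitPlane ∧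
      segment ℝ b c = segment ℝ p (p + d₁) ∪ segment ℝ p (p + d₂) := by
  refine ⟨b - p, c - p, sub_ne_zero.2 hb.symm, sub_ne_zero.2 hc.symm, ?_, ?_⟩
  · obtain ⟨s, t, hs, ht, hst, rfl⟩ := hp
    have hs0 : s ≠ 0 := fun e => hc (by rw [e, zero_add] at hst; simp [e, hst])
    have ht0 : t ≠ 0 := fun e => hb (by rw [e, add_zero] at hst; simp [e, hst])
    have hpos : 0 < t / s := div_pos (lt_of_le_of_ne ht ht0.symm) (lt_of_le_of_ne hs hs0.symm)
    have hcb : c - b ≠ 0 := by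
      intro e
      rw [sub_eq_zero] at e
      subst e
      rw [Convex.combo_self hst] at hb
      exact hb rfl
    have e : -((b - (s • b + t • c)) / (c - (s • b + t • c))) = ((t / s : ℝ) : ℂ) := by
      have hstc : (s : ℂ) + t = 1 := by exact_mod_cast hst
      have e1 : b - (s • b + t • c) = -(t * (c - b)) := by
        simp only [Complex.real_smul]
        linear_combination (-b) * hstc
      have e2 : c - (s • b + t • c) = s * (c - b) := by
        simp only [Complex.real_smul]
        linear_combination (-c) * hstc
      have hsc : (s : ℂ) ≠ 0 := by exact_mod_cast hs0
      rw [e1, e2]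
      push_cast
      field_simp
    rw [e]
    exact Complex.ofReal_mem_slitPlane.2 hpos
  · rw [add_sub_cancel, add_sub_cancel, segment_eq_union_of_mem hp]

theorem eventually_mem_segment (p B : ℂ) :
    ∀ᶠ s : ℝ in 𝓝[>] 0, p + s * B ∈ segment ℝ p (p + B) := by
  filter_upwards [Ioo_mem_nhdsGT one_pos] with s hs
  refine ⟨1 - s, s, by linarith [hs.2], hs.1.le, by ring, ?_⟩
  simp only [Complex.real_smul]
  push_cast
  ring

theorem PLArc.exists_rays {a b p : ℂ} {A : Set ℂ} (h : PLArc a b A) (hp : p ∈ A) (hpa : p ≠ a)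
    (hpb : p ≠ b) : ∃ d₁ d₂ : ℂ, d₁ ≠ 0 ∧ d₂ ≠ 0 ∧ -(d₁ / d₂) ∈ Complex.slitPlane ∧
      ∃ A', IsClosed A' ∧ p ∉ A' ∧
        A = segment ℝ p (p + d₁) ∪ segment ℝ p (p + d₂) ∪ A' := by
  induction h with
  | @seg b h =>
    obtain ⟨d₁, d₂, h1, h2, h3, h4⟩ := exists_rays_segment hp hpa hpb
    exact ⟨d₁, d₂, h1, h2, h3, ∅, isClosed_empty, by simp, by simp [h4]⟩
  | @snoc b c A h1 h2 h3 ih =>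
    have hclosed : IsClosed (segment ℝ b c) := (isCompact_segment _ _).isClosed
    by_cases hpb' : p = b
    · subst hpb'
      obtain ⟨B, hB, A', hA', hp', rfl, -⟩ := h1.reverse.exists_start
      refine ⟨B, c - p, hB, sub_ne_zero.2 hpb.symm, ?_, A', hA', hp', ?_⟩
      · refine neg_div_mem_slitPlane (p := p) hB (sub_ne_zero.2 hpb.symm) ?_
        filter_upwards [eventually_mem_segment p (c - p), self_mem_nhdsWithin] with s hs hs0 hs'
        rw [add_sub_cancel] at hs
        have : p + s * (c - p) ∈ (segment ℝ p (p + B) ∪ A') ∩ segment ℝ p c := ⟨Or.inl hs', hs⟩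
        rw [h3, mem_singleton_iff, add_eq_left, mul_eq_zero, sub_eq_zero] at this
        rcases this with h | h
        · exact (ne_of_gt (show (0 : ℝ) < s from hs0)) (by exact_mod_cast h)
        · exact hpb h.symm
      · rw [add_sub_cancel, union_right_comm]
    · by_cases hpA : p ∈ A
      · obtain ⟨d₁, d₂, e1, e2, e3, A', hA', hp', hA⟩ := ih hpA hpb'
        refine ⟨d₁, d₂, e1, e2, e3, A' ∪ segment ℝ b c, hA'.union hclosed, ?_, ?_⟩
        · rintro (h | h)
          · exact hp' h
          · have : p ∈ A ∩ segment ℝ b c := ⟨hpA, h⟩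
            rw [h3] at this
            exact hpb' this
        · rw [← union_assoc, ← hA]
      · obtain ⟨d₁, d₂, e1, e2, e3, e4⟩ := exists_rays_segment (hp.resolve_left hpA) hpb' hpb
        exact ⟨d₁, d₂, e1, e2, e3, A, h1.isClosed, hpA, by rw [union_comm, e4]⟩

/-- `D` is a cone with apex `p` within distance `ε` of `p`. -/
def Conic (D : Set ℂ) (p : ℂ) (ε : ℝ) : Prop :=
  ∀ z ∈ Metric.ball p ε, ∀ t ∈ Ioc (0 : ℝ) 1, (p + t * (z - p) ∈ D ↔ z ∈ D)

theorem eventually_conic_segment (p B : ℂ) :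
    ∀ᶠ ε in 𝓝[>] 0, Conic (segment ℝ p (p + B)) p ε := by
  by_cases hB : B = 0
  · refine Filter.Eventually.of_forall fun ε z _ t ht => ?_
    have : (t : ℂ) ≠ 0 := by exact_mod_cast ht.1.ne'
    simp [hB, this, sub_eq_zero]
  filter_upwards [Ioo_mem_nhdsGT (norm_pos_iff.2 hB)] with ε hε z hz t ht
  have htc : (t : ℂ) ≠ 0 := by exact_mod_cast ht.1.ne'
  have hform : ∀ w, w ∈ segment ℝ p (p + B) ↔ ∃ r ∈ Icc (0 : ℝ) 1, w = p + r * B := by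
    intro w
    rw [segment_eq_image']
    simp [eq_comm]
  rw [hform, hform]
  constructor
  · rintro ⟨r, hr, e⟩
    have e' : z - p = ((r / t : ℝ) : ℂ) * B := by
      push_cast
      field_simp
      linear_combination e
    have hnorm : ‖z - p‖ = (r / t) * ‖B‖ := by
      rw [e', norm_mul, Complex.norm_real, Real.norm_of_nonneg (div_nonneg hr.1 ht.1.le)]
    rw [mem_ball_iff_norm, hnorm] at hz
    refine ⟨r / t, ⟨div_nonneg hr.1 ht.1.le, ?_⟩, by rw [← e']; ring⟩
    by_contra hlt
    push Not at hlt
    have := hε.2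
    nlinarith [norm_pos_iff.2 hB]
  · rintro ⟨r, hr, rfl⟩
    exact ⟨t * r, ⟨mul_nonneg ht.1.le hr.1, mul_le_one₀ ht.2 hr.1 hr.2⟩, by push_cast; ring⟩

theorem scale_mem_ball {p z : ℂ} {ε t : ℝ} (hz : z ∈ Metric.ball p ε) (ht : t ∈ Ioc (0 : ℝ) 1) :
    p + t * (z - p) ∈ Metric.ball p ε := by
  rw [mem_ball_iff_norm] at hz ⊢
  rw [add_sub_cancel_left, norm_mul, Complex.norm_real, Real.norm_of_nonneg ht.1.le]
  exact (mul_le_of_le_one_left (norm_nonneg _) ht.2).trans_lt hz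

theorem eventually_disjoint_ball {D : Set ℂ} {p : ℂ} (hD : IsClosed D) (hp : p ∉ D) :
    ∀ᶠ ε in 𝓝[>] 0, Disjoint (Metric.ball p ε) D := by
  obtain ⟨δ, hδ, hball⟩ := Metric.isOpen_iff.1 hD.isOpen_compl p hp
  filter_upwards [Ioo_mem_nhdsGT hδ] with ε hε
  exact disjoint_left.2 fun z hz => hball (Metric.ball_subset_ball hε.2.le hz)

theorem eventually_conic_of_notMem {D : Set ℂ} {p : ℂ} (hD : IsClosed D) (hp : p ∉ D) :
    ∀ᶠ ε in 𝓝[>] 0, Conic D p ε := by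
  filter_upwards [eventually_disjoint_ball hD hp] with ε hε z hz t ht
  exact iff_of_false (hε.notMem_of_mem_left (scale_mem_ball hz ht)) (hε.notMem_of_mem_left hz)

theorem Conic.union {D D' : Set ℂ} {p : ℂ} {ε : ℝ} (h : Conic D p ε) (h' : Conic D' p ε) :
    Conic (D ∪ D') p ε := fun z hz t ht => or_congr (h z hz t ht) (h' z hz t ht)

theorem PLArc.eventually_conic {a b : ℂ} {A : Set ℂ} (h : PLArc a b A) (p : ℂ) :
    ∀ᶠ ε in 𝓝[>] 0, Conic A p ε := by
  have start : ∀ {a b}, PLArc a b A → ∀ᶠ ε in 𝓝[>] 0, Conic A a ε := by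
    intro a b h
    obtain ⟨B, -, A', hA', hp', rfl, -⟩ := h.exists_start
    filter_upwards [eventually_conic_segment a B, eventually_conic_of_notMem hA' hp'] with
      ε h1 h2 using h1.union h2
  by_cases hp : p ∈ A
  · by_cases hpa : p = a
    · exact hpa ▸ start h
    by_cases hpb : p = b
    · exact hpb ▸ start h.reverse
    obtain ⟨d₁, d₂, -, -, -, A', hA', hp', rfl⟩ := h.exists_rays hp hpa hpb
    filter_upwards [eventually_conic_segment p d₁, eventually_conic_segment p d₂,
      eventually_conic_of_notMem hA' hp'] with ε h1 h2 h3 using (h1.union h2).union h3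
  · exact eventually_conic_of_notMem h.isClosed hp

/-- `f` is a connected component of the complement of `D`. -/
def IsFace (D f : Set ℂ) : Prop := ∃ x ∈ Dᶜ, f = connectedComponentIn Dᶜ x

namespace IsFace

variable {D f g : Set ℂ} {p : ℂ}

theorem isOpen (h : IsFace D f) (hD : IsClosed D) : IsOpen f := by
  obtain ⟨x, -, rfl⟩ := h
  exact hD.isOpen_compl.connectedComponentIn

theorem isPreconnected (h : IsFace D f) : IsPreconnected f := by
  obtain ⟨x, -, rfl⟩ := h
  exact isPreconnected_connectedComponentIn

theorem nonempty (h : IsFace D f) : f.Nonempty := by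
  obtain ⟨x, hx, rfl⟩ := h
  exact ⟨x, mem_connectedComponentIn hx⟩

theorem subset (h : IsFace D f) : f ⊆ Dᶜ := by
  obtain ⟨x, -, rfl⟩ := h
  exact connectedComponentIn_subset _ _

theorem subset_of_isPreconnected (h : IsFace D f) {S : Set ℂ} (hS : IsPreconnected S)
    (hSD : S ⊆ Dᶜ) (hSf : (S ∩ f).Nonempty) : S ⊆ f := by
  obtain ⟨x, -, rfl⟩ := h
  obtain ⟨y, hy, hy'⟩ := hSf
  rw [connectedComponentIn_eq hy']
  exact hS.subset_connectedComponentIn hy hSD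

theorem eq_of_inter_nonempty (h : IsFace D f) (h' : IsFace D g) (hfg : (f ∩ g).Nonempty) :
    f = g :=
  Subset.antisymm (h'.subset_of_isPreconnected h.isPreconnected h.subset hfg)
    (h.subset_of_isPreconnected h'.isPreconnected h'.subset (inter_comm f g ▸ hfg))

theorem closure_inter_subset (h : IsFace D f) (hD : IsClosed D) : closure f ∩ Dᶜ ⊆ f := by
  rintro y ⟨hy, hyD⟩
  obtain ⟨r, hr, hball⟩ := Metric.isOpen_iff.1 hD.isOpen_compl y hyD
  refine h.subset_of_isPreconnected (convex_ball y r).isPreconnected hball ?_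
    (Metric.mem_ball_self hr)
  exact mem_closure_iff_nhds.1 hy _ (Metric.ball_mem_nhds y hr)

theorem scale_mem (h : IsFace D f) {ε t : ℝ} (hc : Conic D p ε) {z : ℂ} (hz : z ∈ f)
    (hzp : z ∈ Metric.ball p ε) (ht : t ∈ Ioc (0 : ℝ) 1) : p + t * (z - p) ∈ f := by
  have hS : IsPreconnected ((fun s : ℝ => p + s * (z - p)) '' Ioc (0 : ℝ) 1) :=
    isPreconnected_Ioc.image _ (by fun_prop)
  refine h.subset_of_isPreconnected hS ?_ ⟨z, ⟨1, by simp, by simp⟩, hz⟩ ⟨t, ht, rfl⟩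
  rintro _ ⟨s, hs, rfl⟩ hmem
  exact h.subset hz ((hc z hzp s hs).1 hmem)

theorem scale_mem_closure (h : IsFace D f) {ε t : ℝ} (hc : Conic D p ε) {z : ℂ}
    (hz : z ∈ closure f) (hzp : z ∈ Metric.ball p ε) (ht : t ∈ Ioc (0 : ℝ) 1) :
    p + t * (z - p) ∈ closure f := by
  have hz' : z ∈ closure (Metric.ball p ε ∩ f) :=
    Metric.isOpen_ball.inter_closure ⟨hzp, hz⟩
  refine map_mem_closure (f := fun z => p + t * (z - p)) (by fun_prop) hz' fun w hw => ?_
  exact h.scale_mem hc hw.2 hw.1 ht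

end IsFace

theorem isPreconnected_ball_diff_ray (p : ℂ) {d : ℂ} (hd : d ≠ 0) {ε : ℝ} (hε : 0 < ε) :
    IsPreconnected (Metric.ball p ε ∩ {z | -((z - p) / d) ∈ Complex.slitPlane}) := by
  set c : ℝ := ε / (2 * ‖d‖) with hc
  have hd' := norm_pos_iff.2 hd
  have hc0 : 0 < c := by positivity
  have hcb : (c : ℂ) ∈ Metric.ball (0 : ℂ) (ε / ‖d‖) := by
    rw [mem_ball_zero_iff, Complex.norm_real, Real.norm_of_nonneg hc0.le, hc]
    rw [div_lt_div_iff₀ (by positivity) hd']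
    nlinarith
  have h1 : StarConvex ℝ ((c : ℝ) : ℂ) (Complex.slitPlane ∩ Metric.ball 0 (ε / ‖d‖)) := by
    exact StarConvex.inter (Complex.starConvex_ofReal_slitPlane hc0)
      ((convex_ball _ _).starConvex hcb)
  have h2 : IsPreconnected (Complex.slitPlane ∩ Metric.ball (0 : ℂ) (ε / ‖d‖)) :=
    (h1.isPathConnected
      ⟨Complex.ofReal_mem_slitPlane.2 hc0, hcb⟩).isConnected.isPreconnected
  have h3 := h2.image (fun w => p - d * w) (by fun_prop)
  convert h3 using 1
  ext z
  constructor
  · rintro ⟨hz, hz'⟩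
    refine ⟨-((z - p) / d), ⟨hz', ?_⟩, ?_⟩
    · rw [mem_ball_zero_iff, norm_neg, norm_div]
      rw [mem_ball_iff_norm] at hz
      gcongr
    · field_simp
      ring
  · rintro ⟨w, ⟨hw, hw'⟩, rfl⟩
    rw [mem_ball_zero_iff, lt_div_iff₀ hd'] at hw'
    refine ⟨?_, ?_⟩
    · rw [mem_ball_iff_norm]
      simpa [mul_comm] using hw'
    · have : -((p - d * w - p) / d) = w := by field_simp; ring
      rw [mem_ofPred_eq, this]
      exact hw

/-- Every face touching `p` touches some point of the drawing near `p` off a given ray. -/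
theorem IsFace.exists_mem_closure_notMem_ray {D f : Set ℂ} {p d q : ℂ} {ε : ℝ} (h : IsFace D f)
    (hD : IsClosed D) (hp : p ∈ closure f) (hd : d ≠ 0) (hε : 0 < ε) (hq : q ∈ D)
    (hqp : q ∈ Metric.ball p ε) (hqd : -((q - p) / d) ∈ Complex.slitPlane) :
    ∃ x ∈ D, x ∈ closure f ∧ x ∈ Metric.ball p ε ∧ -((x - p) / d) ∈ Complex.slitPlane := by
  by_contra hno
  push Not at hno
  set S := Metric.ball p ε ∩ {z | -((z - p) / d) ∈ Complex.slitPlane} with hS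
  have hSc : IsPreconnected S := isPreconnected_ball_diff_ray p hd hε
  obtain ⟨z, hzf, hzS⟩ : (f ∩ S).Nonempty := by
    obtain ⟨w, hw, hwf⟩ := mem_closure_iff_nhds.1 hp _ (Metric.ball_mem_nhds p hε)
    have hop : IsOpen (Metric.ball p ε ∩ f) := Metric.isOpen_ball.inter (h.isOpen hD)
    have hev : ∀ᶠ s : ℝ in 𝓝[>] 0, w + s * (Complex.I * d) ∈ Metric.ball p ε ∩ f := by
      have hcont : ContinuousAt (fun s : ℝ => w + s * (Complex.I * d)) 0 := by fun_prop
      have := hcont.preimage_mem_nhds (t := Metric.ball p ε ∩ f)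
        (hop.mem_nhds (by simpa using And.intro hw hwf))
      exact Filter.Eventually.filter_mono nhdsWithin_le_nhds this
    by_cases hws : -((w - p) / d) ∈ Complex.slitPlane
    · exact ⟨w, hwf, hw, hws⟩
    · obtain ⟨s, hs, hs0⟩ := (hev.and self_mem_nhdsWithin).exists
      refine ⟨_, hs.2, hs.1, ?_⟩
      rw [Complex.mem_slitPlane_iff, not_or, not_not] at hws
      rw [mem_ofPred_eq, Complex.mem_slitPlane_iff]
      right
      have e : -((w + s * (Complex.I * d) - p) / d) = -((w - p) / d) - s * Complex.I := by
        field_simp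
        ring
      rw [e, Complex.sub_im, hws.2]
      have : (0 : ℝ) < s := hs0
      simpa using this.ne'
  have hfS : S ⊆ f := by
    refine hSc.subset_of_closure_inter_subset (h.isOpen hD) ⟨z, hzS, hzf⟩ ?_
    rintro x ⟨hx, hxS⟩
    refine h.closure_inter_subset hD ⟨hx, fun hxD => ?_⟩
    exact hno x hxD hx hxS.1 hxS.2
  exact h.subset (hfS ⟨hqp, hqd⟩) hq

theorem exists_middle {γ : ℝ → ℂ} {a b : ℂ} {ε : ℝ} (hγ : ContinuousOn γ (Icc 0 1)) (h0 : γ 0 = a)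
    (h1 : γ 1 = b) (hε : 0 < ε)
    (hab : Disjoint (Metric.closedBall a ε) (Metric.closedBall b ε)) :
    ∃ (p q : ℂ) (M : Set ℂ), M ⊆ γ '' Icc 0 1 ∧ IsCompact M ∧ IsPreconnected M ∧ p ∈ M ∧ q ∈ M ∧
      dist p a = ε ∧ dist q b = ε ∧ M ∩ Metric.closedBall a ε ⊆ {p} ∧
      M ∩ Metric.closedBall b ε ⊆ {q} := by
  have hda : ContinuousOn (fun t => dist (γ t) a) (Icc 0 1) := by fun_prop
  have hdb : ContinuousOn (fun t => dist (γ t) b) (Icc 0 1) := by fun_prop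
  have hcomp : ∀ {c : ℂ} {s : ℝ}, 0 ≤ s → ContinuousOn (fun t => dist (γ t) c) (Icc 0 1) →
      IsCompact (Icc s 1 ∩ (fun t => dist (γ t) c) ⁻¹' Iic ε) := fun hs hc =>
    isCompact_Icc.of_isClosed_subset
      ((hc.mono (Icc_subset_Icc_left hs)).preimage_isClosed_of_isClosed isClosed_Icc isClosed_Iic)
      inter_subset_left
  obtain ⟨t₁, ⟨ht₁, hd₁⟩, hmax⟩ := (hcomp le_rfl hda).exists_isGreatest
    ⟨0, ⟨le_rfl, zero_le_one⟩, by simp [h0, hε.le]⟩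
  have hb1 : ε < dist (γ 1) a := by
    by_contra h
    exact hab.notMem_of_mem_left (Metric.mem_closedBall.2 (not_lt.1 h))
      (by rw [h1]; exact Metric.mem_closedBall_self hε.le)
  have hp : dist (γ t₁) a = ε := by
    by_contra hne
    have hlt : dist (γ t₁) a < ε := lt_of_le_of_ne hd₁ hne
    obtain ⟨t, ht, hte⟩ := intermediate_value_Icc ht₁.2 (hda.mono (Icc_subset_Icc_left ht₁.1))
      ⟨hlt.le, hb1.le⟩
    have hle : t ≤ t₁ := hmax ⟨⟨ht₁.1.trans ht.1, ht.2⟩, (show dist (γ t) a ≤ ε from hte.le)⟩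
    have : t = t₁ := le_antisymm hle ht.1
    subst this
    exact hne hte
  obtain ⟨t₂, ⟨ht₂, hd₂⟩, hmin⟩ := (hcomp ht₁.1 hdb).exists_isLeast
    ⟨1, ⟨ht₁.2, le_rfl⟩, by simp [h1, hε.le]⟩
  have ha1 : ε < dist (γ t₁) b := by
    by_contra h
    exact hab.notMem_of_mem_left (Metric.mem_closedBall.2 hp.le)
      (Metric.mem_closedBall.2 (not_lt.1 h))
  have hq : dist (γ t₂) b = ε := by
    by_contra hne
    have hlt : dist (γ t₂) b < ε := lt_of_le_of_ne hd₂ hne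
    obtain ⟨t, ht, hte⟩ := intermediate_value_Icc' ht₂.1
      (hdb.mono (Icc_subset_Icc ht₁.1 ht₂.2)) ⟨hlt.le, ha1.le⟩
    have hle : t₂ ≤ t := hmin ⟨⟨ht.1, ht.2.trans ht₂.2⟩, (show dist (γ t) b ≤ ε from hte.le)⟩
    have : t = t₂ := le_antisymm ht.2 hle
    subst this
    exact hne hte
  have hsub : Icc t₁ t₂ ⊆ Icc 0 1 := Icc_subset_Icc ht₁.1 ht₂.2
  refine ⟨γ t₁, γ t₂, γ '' Icc t₁ t₂, image_mono hsub,
    isCompact_Icc.image_of_continuousOn (hγ.mono hsub), isPreconnected_Icc.image _ (hγ.mono hsub),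
    mem_image_of_mem _ ⟨le_rfl, ht₂.1⟩, mem_image_of_mem _ ⟨ht₂.1, le_rfl⟩, hp, hq, ?_, ?_⟩
  · rintro _ ⟨⟨t, ht, rfl⟩, hball⟩
    have : t ≤ t₁ := hmax ⟨hsub ht, hball⟩
    rw [le_antisymm this ht.1]
    rfl
  · rintro _ ⟨⟨t, ht, rfl⟩, hball⟩
    have : t₂ ≤ t := hmin ⟨⟨ht.1, ht.2.trans ht₂.2⟩, hball⟩
    rw [le_antisymm ht.2 this]
    rfl

theorem eventually_disjoint_closedBall {D : Set ℂ} {p : ℂ} (hD : IsClosed D) (hp : p ∉ D) :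
    ∀ᶠ ε in 𝓝[>] 0, Disjoint (Metric.closedBall p ε) D := by
  obtain ⟨δ, hδ, hball⟩ := Metric.isOpen_iff.1 hD.isOpen_compl p hp
  filter_upwards [Ioo_mem_nhdsGT hδ] with ε hε
  exact disjoint_left.2 fun z hz => hball (Metric.closedBall_subset_ball hε.2 hz)

theorem eventually_disjoint_thickening {K C : Set ℂ} (hK : IsCompact K) (hC : IsClosed C)
    (h : Disjoint K C) :
    ∀ᶠ δ in 𝓝[>] 0, Disjoint (Metric.thickening δ K) (Metric.thickening δ C) := by
  obtain ⟨δ, hδ, hd⟩ := h.exists_thickenings hK hC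
  filter_upwards [Ioo_mem_nhdsGT hδ] with ε hε
  exact hd.mono (Metric.thickening_mono hε.2.le _) (Metric.thickening_mono hε.2.le _)

theorem IsPreconnected.thickening {M : Set ℂ} (h : IsPreconnected M) (δ : ℝ) :
    IsPreconnected (Metric.thickening δ M) := by
  rw [← add_ball_zero, ← image2_add, ← image_prod]
  exact (h.prod (convex_ball _ _).isPreconnected).image _ (by fun_prop)

theorem segment_subset_closedBall_of_dist_eq {v p : ℂ} {ε : ℝ} (h : dist p v = ε) :
    segment ℝ v p ⊆ Metric.closedBall v ε :=
  (convex_closedBall v ε).segment_subset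
    (Metric.mem_closedBall_self (h ▸ dist_nonneg)) (Metric.mem_closedBall.2 h.le)

theorem eq_of_mem_segment_of_mem_segment {v p p' x : ℂ} {ε : ℝ} (hε : 0 < ε) (h : dist p v = ε)
    (h' : dist p' v = ε) (hne : p ≠ p') (hx : x ∈ segment ℝ v p) (hx' : x ∈ segment ℝ v p') :
    x = v := by
  rw [segment_eq_image'] at hx hx'
  obtain ⟨s, hs, rfl⟩ := hx
  obtain ⟨t, ht, he⟩ := hx'
  have he' : t • (p' - v) = s • (p - v) := add_left_cancel he
  have hn := congrArg norm he'
  rw [norm_smul, norm_smul, ← dist_eq_norm, ← dist_eq_norm, h, h',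
    Real.norm_of_nonneg hs.1, Real.norm_of_nonneg ht.1] at hn
  have hst : t = s := mul_right_cancel₀ hε.ne' hn
  subst hst
  by_cases ht0 : t = 0
  · simp [ht0]
  · exact (hne (sub_left_injective (smul_right_injective ℂ ht0 he')).symm).elim

theorem PlaneEmbedding.exists_radius [Finite V] {G : SimpleGraph V} (E : PlaneEmbedding G) :
    ∃ ε > 0, (∀ u v, u ≠ v → Disjoint (Metric.closedBall (E.vtx u) ε)
        (Metric.closedBall (E.vtx v) ε)) ∧
      ∀ u v w, G.Adj u v → w ≠ u → w ≠ v →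
        Disjoint (Metric.closedBall (E.vtx w) ε) (E.arc u v) := by
  have h1 : ∀ᶠ ε : ℝ in 𝓝[>] 0, ∀ u v, u ≠ v → Disjoint (Metric.closedBall (E.vtx u) ε)
      (Metric.closedBall (E.vtx v) ε) := by
    simp only [Filter.eventually_all]
    intro u v huv
    have hd : 0 < dist (E.vtx u) (E.vtx v) := dist_pos.2 (E.vtx_inj.ne huv)
    filter_upwards [Ioo_mem_nhdsGT (half_pos hd)] with ε hε
    exact Metric.closedBall_disjoint_closedBall (by linarith [hε.2])
  have h2 : ∀ᶠ ε : ℝ in 𝓝[>] 0, ∀ u v w, G.Adj u v → w ≠ u → w ≠ v →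
      Disjoint (Metric.closedBall (E.vtx w) ε) (E.arc u v) := by
    simp only [Filter.eventually_all]
    intro u v w huv h1 h2
    refine eventually_disjoint_closedBall ?_ fun h => ?_
    · obtain ⟨γ, hγ, -, -, -, harc⟩ := E.arc_curve huv
      rw [harc]
      exact (isCompact_Icc.image_of_continuousOn hγ).isClosed
    · rcases E.arc_vtx huv w h with h | h
      · exact h1 h
      · exact h2 h
  obtain ⟨ε, ⟨h3, h4⟩, h5⟩ := ((h1.and h2).and self_mem_nhdsWithin).exists
  exact ⟨ε, h5, h3, h4⟩

theorem PlaneEmbedding.exists_plArc [Finite V] {G : SimpleGraph V} (E : PlaneEmbedding G) :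
    ∃ E' : PlaneEmbedding G,
      ∀ u v, G.Adj u v → PLArc (E'.vtx u) (E'.vtx v) (E'.arc u v) := by
  obtain ⟨ε, hε, hball, harcball⟩ := E.exists_radius
  have hmid : ∀ e : G.edgeSet, ∃ (u v : V) (p q : ℂ) (M : Set ℂ), s(u, v) = e.1 ∧
      M ⊆ E.arc u v ∧ IsCompact M ∧ IsPreconnected M ∧ p ∈ M ∧ q ∈ M ∧
      dist p (E.vtx u) = ε ∧ dist q (E.vtx v) = ε ∧ M ∩ Metric.closedBall (E.vtx u) ε ⊆ {p} ∧
      M ∩ Metric.closedBall (E.vtx v) ε ⊆ {q} := by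
    rintro ⟨e, he⟩
    induction e with
    | _ u v =>
      have huv : G.Adj u v := he
      obtain ⟨γ, hγ, -, h0, h1, harc⟩ := E.arc_curve huv
      obtain ⟨p, q, M, h⟩ := exists_middle hγ h0 h1 hε (hball u v huv.ne)
      exact ⟨u, v, p, q, M, rfl, harc ▸ h.1, h.2⟩
  choose U W P Q M he hMarc hMc hMp hPM hQM hPd hQd hPb hQb using hmid
  have hadj : ∀ e, G.Adj (U e) (W e) := fun e => by
    rw [← mem_edgeSet, he e]; exact e.2
  -- `End e v p`: the middle piece of `e` starts near the end `v` of `e` at the point `p`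
  let End : G.edgeSet → V → ℂ → Prop := fun e v p =>
    (v = U e ∧ p = P e) ∨ (v = W e ∧ p = Q e)
  have end_mem : ∀ {e v p}, End e v p → v ∈ e.1 := by
    rintro e v p (⟨rfl, -⟩ | ⟨rfl, -⟩) <;> rw [← he e] <;> simp
  have exists_end : ∀ {e : G.edgeSet} {v}, v ∈ e.1 → ∃ p, End e v p := by
    intro e v hv
    rw [← he e, Sym2.mem_iff] at hv
    rcases hv with rfl | rfl
    · exact ⟨P e, Or.inl ⟨rfl, rfl⟩⟩
    · exact ⟨Q e, Or.inr ⟨rfl, rfl⟩⟩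
  have end_M : ∀ {e v p}, End e v p → p ∈ M e := by
    rintro e v p (⟨-, rfl⟩ | ⟨-, rfl⟩)
    exacts [hPM e, hQM e]
  have end_dist : ∀ {e v p}, End e v p → dist p (E.vtx v) = ε := by
    rintro e v p (⟨rfl, rfl⟩ | ⟨rfl, rfl⟩)
    exacts [hPd e, hQd e]
  have end_ball : ∀ {e v p}, End e v p → ∀ x ∈ M e, x ∈ Metric.closedBall (E.vtx v) ε → x = p := by
    rintro e v p (⟨rfl, rfl⟩ | ⟨rfl, rfl⟩) x hx hx'
    exacts [hPb e ⟨hx, hx'⟩, hQb e ⟨hx, hx'⟩]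
  have mem_of_ball : ∀ {e : G.edgeSet} {v x}, x ∈ M e → x ∈ Metric.closedBall (E.vtx v) ε →
      v ∈ e.1 := by
    intro e v x hx hxb
    by_contra hv
    rw [← he e, Sym2.mem_iff, not_or] at hv
    exact (harcball _ _ v (hadj e) hv.1 hv.2).notMem_of_mem_left hxb (hMarc e hx)
  have vtx_M : ∀ e w, E.vtx w ∉ M e := by
    intro e w hw
    have hb : E.vtx w ∈ Metric.closedBall (E.vtx w) ε := Metric.mem_closedBall_self hε.le
    obtain ⟨p, hp⟩ := exists_end (mem_of_ball hw hb)
    have h1 := end_dist hp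
    rw [← end_ball hp _ hw hb, _root_.dist_self] at h1
    exact hε.ne h1
  have M_disj : ∀ e e', e ≠ e' → Disjoint (M e) (M e') := by
    intro e e' hne
    refine disjoint_left.2 fun x hx hx' => ?_
    have hne' : s(U e, W e) ≠ s(U e', W e') := by
      rw [he e, he e']
      exact fun h => hne (Subtype.ext h)
    have := (E.arc_inter (hadj e) (hadj e') hne' ⟨hMarc e hx, hMarc e' hx'⟩).1
    rcases this with rfl | rfl
    · exact vtx_M e _ hx
    · exact vtx_M e _ hx
  let R : G.edgeSet → Set ℂ := fun e =>
    segment ℝ (E.vtx (U e)) (P e) ∪ segment ℝ (Q e) (E.vtx (W e))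
  have mem_R : ∀ {e x}, x ∈ R e → ∃ v p, End e v p ∧ x ∈ segment ℝ (E.vtx v) p := by
    rintro e x (hx | hx)
    · exact ⟨U e, P e, Or.inl ⟨rfl, rfl⟩, hx⟩
    · exact ⟨W e, Q e, Or.inr ⟨rfl, rfl⟩, by rwa [segment_symm]⟩
  have R_closed : ∀ e, IsClosed (R e) := fun e =>
    ((isCompact_segment _ _).union (isCompact_segment _ _)).isClosed
  have end_ne : ∀ {e e' v v' p p'}, e ≠ e' → End e v p → End e' v' p' → p ≠ p' := by
    rintro e e' v v' p p' hne h1 h2 rfl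
    exact (M_disj e e' hne).notMem_of_mem_left (end_M h1) (end_M h2)
  have MR_disj : ∀ e e', e ≠ e' → Disjoint (M e) (R e') := by
    intro e e' hne
    refine disjoint_left.2 fun x hx hx' => ?_
    obtain ⟨v, p', hend', hxs⟩ := mem_R hx'
    have hxb := segment_subset_closedBall_of_dist_eq (end_dist hend') hxs
    obtain ⟨p, hend⟩ := exists_end (mem_of_ball hx hxb)
    have hxp := end_ball hend x hx hxb
    subst hxp
    have h1 := dist_add_dist_of_mem_segment hxs
    have hd := end_dist hend
    have hd' := end_dist hend'
    rw [_root_.dist_comm] at hd hd'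
    exact end_ne hne hend hend' (dist_eq_zero.1 (by linarith))
  have R_inter : ∀ e e', e ≠ e' → ∀ x ∈ R e, x ∈ R e' → ∃ v, v ∈ e.1 ∧ v ∈ e'.1 ∧ x = E.vtx v := by
    intro e e' hne x hx hx'
    obtain ⟨v, p, hend, hxs⟩ := mem_R hx
    obtain ⟨v', p', hend', hxs'⟩ := mem_R hx'
    have hvv : v = v' := by
      by_contra hvv
      exact (hball v v' hvv).notMem_of_mem_left
        (segment_subset_closedBall_of_dist_eq (end_dist hend) hxs)
        (segment_subset_closedBall_of_dist_eq (end_dist hend') hxs')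
    subst hvv
    exact ⟨v, end_mem hend, end_mem hend', eq_of_mem_segment_of_mem_segment hε (end_dist hend)
      (end_dist hend') (end_ne hne hend hend') hxs hxs'⟩
  obtain ⟨δ, hδ, hδM, hδR, hδv⟩ : ∃ δ > 0,
      (∀ e e', e ≠ e' → Disjoint (Metric.thickening δ (M e)) (Metric.thickening δ (M e'))) ∧
      (∀ e e', e ≠ e' → Disjoint (Metric.thickening δ (M e)) (R e')) ∧
      ∀ e w, E.vtx w ∉ Metric.thickening δ (M e) := by
    have h1 : ∀ᶠ δ in 𝓝[>] 0, ∀ e e', e ≠ e' →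
        Disjoint (Metric.thickening δ (M e)) (Metric.thickening δ (M e')) := by
      simp only [Filter.eventually_all]
      exact fun e e' hne => eventually_disjoint_thickening (hMc e) (hMc e').isClosed
        (M_disj e e' hne)
    have h2 : ∀ᶠ δ in 𝓝[>] 0, ∀ e e', e ≠ e' →
        Disjoint (Metric.thickening δ (M e)) (Metric.thickening δ (R e')) := by
      simp only [Filter.eventually_all]
      exact fun e e' hne => eventually_disjoint_thickening (hMc e) (R_closed e') (MR_disj e e' hne)
    have h3 : ∀ᶠ δ in 𝓝[>] 0, ∀ e w,
        Disjoint (Metric.thickening δ (M e)) (Metric.thickening δ {E.vtx w}) := by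
      simp only [Filter.eventually_all]
      exact fun e w => eventually_disjoint_thickening (hMc e) isClosed_singleton
        (disjoint_singleton_right.2 (vtx_M e w))
    obtain ⟨δ, ⟨⟨h1, h2⟩, h3⟩, hδ⟩ := (((h1.and h2).and h3).and self_mem_nhdsWithin).exists
    refine ⟨δ, hδ, h1, fun e e' hne => (h2 e e' hne).mono_right
      (Metric.self_subset_thickening hδ _), fun e w hw => ?_⟩
    exact (h3 e w).notMem_of_mem_left hw (Metric.self_subset_thickening hδ _ rfl)
  have hA : ∀ e : G.edgeSet, ∃ A, A ⊆ R e ∪ Metric.thickening δ (M e) ∧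
      PLArc (E.vtx (U e)) (E.vtx (W e)) A := by
    intro e
    have hne : E.vtx (U e) ≠ P e := fun h => vtx_M e _ (h ▸ hPM e)
    obtain ⟨A₁, hA₁, h₁⟩ := (PLArc.seg hne).extend_isOpen Metric.isOpen_thickening
      ((hMp e).thickening δ) (hδv e _) (Metric.self_subset_thickening hδ _ (hPM e))
      (Metric.self_subset_thickening hδ _ (hQM e))
    obtain ⟨A₂, hA₂, h₂⟩ := h₁.extend_segment (y := E.vtx (W e)) (E.vtx_inj.ne (hadj e).ne')
    refine ⟨A₂, fun x hx => ?_, h₂⟩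
    rcases hA₂ hx with hx | hx
    · rcases hA₁ hx with hx | hx
      · exact Or.inl (Or.inl hx)
      · exact Or.inr hx
    · exact Or.inl (Or.inr hx)
  choose A hAR hAP using hA
  let A' : Sym2 V → Set ℂ := fun e => {x | ∃ h : e ∈ G.edgeSet, x ∈ A ⟨e, h⟩}
  have hA' : ∀ {u v} (h : G.Adj u v), A' s(u, v) = A ⟨s(u, v), h⟩ := fun h => by
    ext x
    exact ⟨fun ⟨_, hx⟩ => hx, fun hx => ⟨h, hx⟩⟩
  have hPL : ∀ u v, G.Adj u v → PLArc (E.vtx u) (E.vtx v) (A' s(u, v)) := by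
    intro u v h
    rw [hA' h]
    have h1 := hAP ⟨s(u, v), h⟩
    rcases Sym2.eq_iff.1 (he ⟨s(u, v), h⟩) with ⟨h2, h3⟩ | ⟨h2, h3⟩
    · rwa [h2, h3] at h1
    · rw [h2, h3] at h1
      exact h1.reverse
  refine ⟨⟨E.vtx, fun u v => A' s(u, v), E.vtx_inj, fun u v => by rw [Sym2.eq_swap],
    fun u v h => (hPL u v h).exists_param, ?_, ?_⟩, hPL⟩
  · intro u v x y huv hxy hne z hz
    simp only [hA' huv, hA' hxy] at hz
    have hne' : (⟨s(u, v), huv⟩ : G.edgeSet) ≠ ⟨s(x, y), hxy⟩ := fun h =>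
      hne (Subtype.ext_iff.1 h)
    have key : z ∈ R ⟨s(u, v), huv⟩ ∧ z ∈ R ⟨s(x, y), hxy⟩ := by
      rcases hAR _ hz.1 with h1 | h1 <;> rcases hAR _ hz.2 with h2 | h2
      · exact ⟨h1, h2⟩
      · exact ((hδR _ _ hne'.symm).notMem_of_mem_left h2 h1).elim
      · exact ((hδR _ _ hne').notMem_of_mem_left h1 h2).elim
      · exact ((hδM _ _ hne').notMem_of_mem_left h1 h2).elim
    obtain ⟨w, h1, h2, rfl⟩ := R_inter _ _ hne' z key.1 key.2
    rw [Sym2.mem_iff] at h1 h2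
    constructor
    · rcases h1 with rfl | rfl <;> simp
    · rcases h2 with rfl | rfl <;> simp
  · intro u v huv w hw
    simp only [hA' huv] at hw
    rcases hAR _ hw with h1 | h1
    · obtain ⟨v', p, hend, hxs⟩ := mem_R h1
      have : w = v' := by
        by_contra hne
        exact (hball w v' hne).notMem_of_mem_left (Metric.mem_closedBall_self hε.le)
          (segment_subset_closedBall_of_dist_eq (end_dist hend) hxs)
      have h2 := end_mem hend
      rw [← this, Sym2.mem_iff] at h2
      exact h2
    · exact (hδv _ _ h1).elim

theorem neg_div_mem_slitPlane_symm {x y : ℂ} (h : -(x / y) ∈ Complex.slitPlane) :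
    -(y / x) ∈ Complex.slitPlane := by
  have hne := Complex.slitPlane_ne_zero h
  rw [Complex.mem_slitPlane_iff_arg] at h ⊢
  have e : -(y / x) = (-(x / y))⁻¹ := by rw [inv_neg, inv_div]
  rw [e, Complex.arg_inv, if_neg h.1]
  refine ⟨fun h' => ?_, inv_ne_zero hne⟩
  have := Complex.neg_pi_lt_arg (-(x / y))
  linarith

theorem ofReal_mul_mem_slitPlane {s : ℝ} {x : ℂ} (hs : 0 < s) (h : x ∈ Complex.slitPlane) :
    s * x ∈ Complex.slitPlane := by
  rw [Complex.mem_slitPlane_iff, Complex.re_ofReal_mul, Complex.im_ofReal_mul]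
  exact (Complex.mem_slitPlane_iff.1 h).imp (mul_pos hs) (mul_ne_zero hs.ne')

theorem exists_eq_add_mul_of_mem_segment {p d x : ℂ} (hx : x ∈ segment ℝ p (p + d)) :
    ∃ r ∈ Icc (0 : ℝ) 1, x = p + r * d := by
  rw [segment_eq_image'] at hx
  obtain ⟨r, hr, rfl⟩ := hx
  exact ⟨r, hr, by simp⟩

theorem eventually_mem_ball (p d : ℂ) {ε : ℝ} (hε : 0 < ε) :
    ∀ᶠ s : ℝ in 𝓝[>] 0, p + s * d ∈ Metric.ball p ε := by
  have hcont : ContinuousAt (fun s : ℝ => p + s * d) 0 := by fun_prop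
  exact Filter.Eventually.filter_mono nhdsWithin_le_nhds
    (hcont.preimage_mem_nhds (by simpa using Metric.ball_mem_nhds p hε))

namespace PlaneEmbedding

variable {G : SimpleGraph V} {E : PlaneEmbedding G} {f : Set ℂ} {u v w : V} {x : ℂ}

/-- Every edge is drawn as a polygonal arc. -/
def IsPolygonal (E : PlaneEmbedding G) : Prop :=
  ∀ u v, G.Adj u v → PLArc (E.vtx u) (E.vtx v) (E.arc u v)

theorem vtx_mem_drawing (E : PlaneEmbedding G) (u : V) : E.vtx u ∈ E.drawing := Or.inl ⟨u, rfl⟩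

theorem arc_subset_drawing (E : PlaneEmbedding G) (h : G.Adj u v) : E.arc u v ⊆ E.drawing :=
  fun x hx => Or.inr (by simp only [mem_iUnion]; exact ⟨u, v, h, hx⟩)

theorem mem_drawing_iff : x ∈ E.drawing ↔
    (∃ u, E.vtx u = x) ∨ ∃ u v, G.Adj u v ∧ x ∈ E.arc u v := by
  simp [drawing]

theorem left_mem_arc (E : PlaneEmbedding G) (h : G.Adj u v) : E.vtx u ∈ E.arc u v := by
  obtain ⟨γ, -, -, h0, -, h2⟩ := E.arc_curve h
  rw [h2, ← h0]
  exact mem_image_of_mem _ ⟨le_rfl, zero_le_one⟩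

theorem right_mem_arc (E : PlaneEmbedding G) (h : G.Adj u v) : E.vtx v ∈ E.arc u v := by
  rw [E.arc_symm]
  exact E.left_mem_arc h.symm

/-- The part of the drawing not belonging to the edge `uv`. -/
def rest (E : PlaneEmbedding G) (u v : V) : Set ℂ :=
  range E.vtx ∪ ⋃ (a : V) (b : V) (_ : G.Adj a b ∧ s(u, v) ≠ s(a, b)), E.arc a b

theorem drawing_eq (h : G.Adj u v) : E.drawing = E.arc u v ∪ E.rest u v := by
  ext x
  simp only [rest, mem_drawing_iff, mem_union, mem_iUnion, mem_range, exists_prop]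
  constructor
  · rintro (h' | ⟨a, b, hab, hx⟩)
    · exact Or.inr (Or.inl h')
    · by_cases e : s(u, v) = s(a, b)
      · rcases Sym2.eq_iff.1 e with ⟨rfl, rfl⟩ | ⟨rfl, rfl⟩
        · exact Or.inl hx
        · exact Or.inl (E.arc_symm _ _ ▸ hx)
      · exact Or.inr (Or.inr ⟨a, b, ⟨hab, e⟩, hx⟩)
  · rintro (h' | h' | ⟨a, b, ⟨hab, -⟩, hx⟩)
    · exact Or.inr ⟨u, v, h, h'⟩
    · exact Or.inl h'
    · exact Or.inr ⟨a, b, hab, hx⟩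

theorem notMem_rest (h : G.Adj u v) (hx : x ∈ E.arc u v) (hu : x ≠ E.vtx u) (hv : x ≠ E.vtx v) :
    x ∉ E.rest u v := by
  simp only [rest, mem_union, mem_iUnion, mem_range, exists_prop, not_or, not_exists, not_and]
  constructor
  · rintro w rfl
    rcases E.arc_vtx h w hx with rfl | rfl
    exacts [hu rfl, hv rfl]
  · rintro a b ⟨hab, hne⟩ hx'
    rcases (E.arc_inter h hab hne ⟨hx, hx'⟩).1 with e | e
    exacts [hu e, hv e]

theorem IsPolygonal.isClosed_arc (hE : E.IsPolygonal) (h : G.Adj u v) : IsClosed (E.arc u v) :=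
  (hE u v h).isClosed

section Finite

variable [Finite V]

theorem IsPolygonal.isClosed_rest (hE : E.IsPolygonal) (u v : V) : IsClosed (E.rest u v) := by
  refine (finite_range _).isClosed.union ?_
  refine isClosed_iUnion_of_finite fun a => isClosed_iUnion_of_finite fun b =>
    isClosed_iUnion_of_finite fun h => hE.isClosed_arc h.1

theorem IsPolygonal.isCompact_drawing (hE : E.IsPolygonal) : IsCompact E.drawing := by
  refine (finite_range _).isCompact.union ?_
  refine isCompact_iUnion fun a => isCompact_iUnion fun b =>
    isCompact_iUnion fun h => (hE _ _ h).isCompact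

theorem IsPolygonal.isClosed_drawing (hE : E.IsPolygonal) : IsClosed E.drawing :=
  hE.isCompact_drawing.isClosed

theorem IsPolygonal.eventually_conic (hE : E.IsPolygonal) (p : ℂ) :
    ∀ᶠ ε in 𝓝[>] 0, Conic E.drawing p ε := by
  have h1 : ∀ᶠ ε in 𝓝[>] 0, ∀ u, Conic {E.vtx u} p ε := by
    refine Filter.eventually_all.2 fun u => ?_
    by_cases hp : p = E.vtx u
    · subst hp
      refine Filter.Eventually.of_forall fun ε z _ t ht => ?_
      have : (t : ℂ) ≠ 0 := by exact_mod_cast ht.1.ne'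
      simp [this, sub_eq_zero]
    · exact eventually_conic_of_notMem isClosed_singleton hp
  have h2 : ∀ᶠ ε in 𝓝[>] 0, ∀ u v, G.Adj u v → Conic (E.arc u v) p ε := by
    refine Filter.eventually_all.2 fun u => Filter.eventually_all.2 fun v => ?_
    by_cases h : G.Adj u v
    · filter_upwards [(hE u v h).eventually_conic p] with ε hε _ using hε
    · exact Filter.Eventually.of_forall fun _ h' => (h h').elim
  filter_upwards [h1, h2] with ε h1 h2 z hz t ht
  simp only [mem_drawing_iff]
  refine or_congr (exists_congr fun u => ?_) (exists_congr fun u => exists_congr fun v => ?_)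
  · have := h1 u z hz t ht
    simp only [mem_singleton_iff] at this
    rw [eq_comm, this, eq_comm]
  · exact and_congr_right fun h => h2 u v h z hz t ht

theorem IsPolygonal.eventually_mem_arc (hE : E.IsPolygonal) (u : V) :
    ∀ᶠ ε in 𝓝[>] 0, ∀ x ∈ E.drawing, x ∈ Metric.ball (E.vtx u) ε → x ≠ E.vtx u →
      (∀ w, x ≠ E.vtx w) ∧ ∃ w, G.Adj u w ∧ x ∈ E.arc u w := by
  have h1 : ∀ᶠ ε in 𝓝[>] 0, ∀ w, w ≠ u → Disjoint (Metric.ball (E.vtx u) ε) {E.vtx w} := by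
    refine Filter.eventually_all.2 fun w => ?_
    by_cases h : w = u
    · exact Filter.Eventually.of_forall fun _ h' => (h' h).elim
    · filter_upwards [eventually_disjoint_ball (D := {E.vtx w}) isClosed_singleton
        (fun e => h (E.vtx_inj e.symm))] with ε hε _ using hε
  have h2 : ∀ᶠ ε in 𝓝[>] 0, ∀ a b, G.Adj a b → u ≠ a → u ≠ b →
      Disjoint (Metric.ball (E.vtx u) ε) (E.arc a b) := by
    refine Filter.eventually_all.2 fun a => Filter.eventually_all.2 fun b => ?_
    by_cases h : G.Adj a b ∧ u ≠ a ∧ u ≠ b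
    · filter_upwards [eventually_disjoint_ball (hE.isClosed_arc h.1)
        (fun e => (E.arc_vtx h.1 u e).elim h.2.1 h.2.2)] with ε hε _ _ _ using hε
    · exact Filter.Eventually.of_forall fun _ h1 h2 h3 => (h ⟨h1, h2, h3⟩).elim
  filter_upwards [h1, h2] with ε h1 h2 x hx hxb hxu
  have hxw : ∀ w, x ≠ E.vtx w := by
    rintro w rfl
    exact (h1 w (fun e => hxu (e ▸ rfl))).notMem_of_mem_left hxb rfl
  refine ⟨hxw, ?_⟩
  rcases mem_drawing_iff.1 hx with ⟨w, rfl⟩ | ⟨a, b, hab, hx⟩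
  · exact (hxw w rfl).elim
  · by_cases ha : u = a
    · exact ⟨b, ha ▸ hab, ha ▸ hx⟩
    by_cases hb : u = b
    · exact ⟨a, hb ▸ hab.symm, by rw [E.arc_symm, hb]; exact hx⟩
    · exact ((h2 a b hab ha hb).notMem_of_mem_left hxb hx).elim

theorem IsPolygonal.arc_subset_closure (hE : E.IsPolygonal) (hf : IsFace E.drawing f)
    (h : G.Adj u v) (hx : x ∈ E.arc u v) (hu : x ≠ E.vtx u) (hv : x ≠ E.vtx v)
    (hxf : x ∈ closure f) : E.arc u v ⊆ closure f := by
  obtain ⟨γ, hγ, hinj, h0, h1, harc⟩ := E.arc_curve h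
  have hint : E.arc u v \ {E.vtx u, E.vtx v} = γ '' Ioo 0 1 := by
    rw [harc, ← h0, ← h1, ← image_pair, ← hinj.image_sdiff_subset, Icc_sdiff_both]
    rintro t (rfl | rfl) <;> simp
  have hconn : IsPreconnected (γ '' Ioo 0 1) :=
    isPreconnected_Ioo.image _ (hγ.mono Ioo_subset_Icc_self)
  have hloc : ∀ p ∈ γ '' Ioo 0 1, p ∈ closure f →
      ∀ᶠ z in 𝓝 p, z ∈ closure f ∪ (γ '' Ioo 0 1)ᶜ := by
    intro p hp hpf
    rw [← hint] at hp
    obtain ⟨hp, hp'⟩ := hp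
    have hpu : p ≠ E.vtx u := fun e => hp' (Or.inl e)
    have hpv : p ≠ E.vtx v := fun e => hp' (Or.inr e)
    obtain ⟨d₁, d₂, hd₁, hd₂, hsl, A', hA', hpA', hA⟩ := (hE u v h).exists_rays hp hpu hpv
    have hdraw : E.drawing = segment ℝ p (p + d₁) ∪ segment ℝ p (p + d₂) ∪
        (A' ∪ E.rest u v) := by
      rw [drawing_eq h, hA, union_assoc]
    have key : ∀ d₁ d₂ : ℂ, d₁ ≠ 0 → d₂ ≠ 0 → -(d₂ / d₁) ∈ Complex.slitPlane →
        E.drawing = segment ℝ p (p + d₁) ∪ segment ℝ p (p + d₂) ∪ (A' ∪ E.rest u v) →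
        ∀ᶠ z in 𝓝 p, z ∈ segment ℝ p (p + d₂) → z ∈ closure f := by
      intro d₁ d₂ hd₁ hd₂ hsl hdraw
      obtain ⟨ε, ⟨hc, hdis⟩, hε⟩ := (((hE.eventually_conic p).and
        (eventually_disjoint_ball (hA'.union (hE.isClosed_rest u v))
          (fun h' => h'.elim hpA' (notMem_rest h hp hpu hpv)))).and self_mem_nhdsWithin).exists
      have hε : 0 < ε := hε
      obtain ⟨s, ⟨hsb, hss⟩, hs0⟩ :=
        (((eventually_mem_ball p d₂ hε).and (eventually_mem_segment p d₂)).and self_mem_nhdsWithin).exists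
      have hs0 : 0 < s := hs0
      obtain ⟨x, hxD, hxf, hxb, hxs⟩ := hf.exists_mem_closure_notMem_ray hE.isClosed_drawing hpf
        hd₁ hε (q := p + s * d₂) (by rw [hdraw]; exact Or.inl (Or.inr hss)) hsb (by
          rw [add_sub_cancel_left, mul_div_assoc, ← mul_neg]
          exact ofReal_mul_mem_slitPlane hs0 hsl)
      rw [hdraw] at hxD
      rcases hxD with (hxD | hxD) | hxD
      · obtain ⟨r, hr, rfl⟩ := exists_eq_add_mul_of_mem_segment hxD
        rw [add_sub_cancel_left, mul_div_assoc, div_self hd₁, mul_one, ← Complex.ofReal_neg,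
          Complex.ofReal_mem_slitPlane] at hxs
        linarith [hr.1]
      · obtain ⟨r, hr, rfl⟩ := exists_eq_add_mul_of_mem_segment hxD
        have hr0 : 0 < r := by
          refine lt_of_le_of_ne hr.1 fun e => ?_
          subst e
          simp at hxs
        filter_upwards [Metric.ball_mem_nhds p (mul_pos hr0 (norm_pos_iff.2 hd₂))] with z hz hzs
        obtain ⟨r', hr', rfl⟩ := exists_eq_add_mul_of_mem_segment hzs
        rcases hr'.1.eq_or_lt with e | hr'0
        · subst e
          simpa using hpf
        · have hlt : r' < r := by
            rw [mem_ball_iff_norm, add_sub_cancel_left, norm_mul, Complex.norm_real,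
              Real.norm_of_nonneg hr'.1] at hz
            exact lt_of_mul_lt_mul_right hz (norm_nonneg _)
          have := hf.scale_mem_closure hc hxf hxb (t := r' / r)
            ⟨div_pos hr'0 hr0, (div_le_one hr0).2 hlt.le⟩
          have hrc : (r : ℂ) ≠ 0 := by exact_mod_cast hr0.ne'
          convert this using 1
          push_cast
          field_simp
          ring
      · exact (hdis.notMem_of_mem_left hxb hxD).elim
    have hsl' := neg_div_mem_slitPlane_symm hsl
    have hA'c : ∀ᶠ z in 𝓝 p, z ∉ A' := hA'.isOpen_compl.mem_nhds hpA'
    filter_upwards [key d₁ d₂ hd₁ hd₂ hsl' hdraw,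
      key d₂ d₁ hd₂ hd₁ hsl (by rw [hdraw, union_comm (segment ℝ p (p + d₁))]), hA'c]
      with z hz1 hz2 hz3
    by_cases hz : z ∈ γ '' Ioo 0 1
    · rw [← hint, hA] at hz
      rcases hz.1 with (hz | hz) | hz
      · exact Or.inl (hz2 hz)
      · exact Or.inl (hz1 hz)
      · exact (hz3 hz).elim
    · exact Or.inr hz
  have hsub : γ '' Ioo 0 1 ⊆ closure f := by
    by_contra hcon
    obtain ⟨y, hy, hyf⟩ := not_subset.1 hcon
    obtain ⟨z, hz, hzU, hzf⟩ := hconn (interior (closure f ∪ (γ '' Ioo 0 1)ᶜ)) (closure f)ᶜ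
      isOpen_interior isClosed_closure.isOpen_compl
      (fun p hp => by
        by_cases hpf : p ∈ closure f
        · exact Or.inl (mem_interior_iff_mem_nhds.2 (hloc p hp hpf))
        · exact Or.inr hpf)
      (by
        have hx' : x ∈ γ '' Ioo 0 1 := by
          rw [← hint]
          exact ⟨hx, by simp [hu, hv]⟩
        exact ⟨x, hx', mem_interior_iff_mem_nhds.2 (hloc x hx' hxf)⟩)
      ⟨y, hy, hyf⟩
    rcases interior_subset hzU with h' | h'
    exacts [hzf h', h' hz]
  rw [harc, ← closure_Ioo zero_ne_one]
  refine (ContinuousOn.image_closure ?_).trans (closure_minimal hsub isClosed_closure)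
  rwa [closure_Ioo zero_ne_one]

end Finite

end PlaneEmbedding

theorem dense_compl_segment {a b : ℂ} (h : a ≠ b) : Dense (segment ℝ a b)ᶜ := by
  intro z
  by_cases hz : z ∈ segment ℝ a b
  · have hd : b - a ≠ 0 := sub_ne_zero.2 h.symm
    have hcont : ContinuousAt (fun s : ℝ => z + s * (Complex.I * (b - a))) 0 := by fun_prop
    have ht : Filter.Tendsto (fun s : ℝ => z + s * (Complex.I * (b - a))) (𝓝[>] 0) (𝓝 z) := by
      have := hcont.tendsto.mono_left (nhdsWithin_le_nhds (s := Ioi 0))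
      simpa using this
    refine mem_closure_of_tendsto ht ?_
    filter_upwards [self_mem_nhdsWithin] with s hs hmem
    have hs : 0 < s := hs
    rw [← add_sub_cancel a b] at hz hmem
    obtain ⟨r, -, rfl⟩ := exists_eq_add_mul_of_mem_segment hz
    obtain ⟨r', -, e⟩ := exists_eq_add_mul_of_mem_segment hmem
    rw [add_sub_cancel] at e
    have e' : (r : ℂ) + s * Complex.I = r' := by
      refine mul_right_cancel₀ hd ?_
      linear_combination e
    have := congrArg Complex.im e'
    simp at this
    exact hs.ne' this
  · exact subset_closure hz

theorem PLArc.dense_compl {a b : ℂ} {A : Set ℂ} (h : PLArc a b A) : Dense Aᶜ := by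
  induction h with
  | seg h => exact dense_compl_segment h
  | snoc h1 h2 _ ih =>
    rw [compl_union]
    exact ih.inter_of_isOpen_left (dense_compl_segment h2) h1.isClosed.isOpen_compl

theorem IsFace.exists_of_notMem {D : Set ℂ} {x : ℂ} (h : x ∉ D) : ∃ f, IsFace D f ∧ x ∈ f :=
  ⟨_, ⟨x, h, rfl⟩, mem_connectedComponentIn h⟩

theorem IsFace.exists_scale_mem {D f : Set ℂ} {p : ℂ} {ε : ℝ} (hf : IsFace D f)
    (hp : p ∈ closure f) (hc : Conic D p ε) (hε : 0 < ε) :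
    ∃ z ∈ f, z ∈ Metric.ball p ε ∧ ∀ t ∈ Ioc (0 : ℝ) 1, p + t * (z - p) ∈ f := by
  obtain ⟨z, hz, hzf⟩ := mem_closure_iff_nhds.1 hp _ (Metric.ball_mem_nhds p hε)
  exact ⟨z, hzf, hz, fun t ht => hf.scale_mem hc hzf hz ht⟩

theorem segment_subset_insert_of_scale_mem {f : Set ℂ} {p z : ℂ}
    (h : ∀ t ∈ Ioc (0 : ℝ) 1, p + t * (z - p) ∈ f) : segment ℝ p z ⊆ insert p f := by
  intro x hx
  rw [← add_sub_cancel p z] at hx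
  obtain ⟨r, hr, rfl⟩ := exists_eq_add_mul_of_mem_segment hx
  rcases hr.1.eq_or_lt with e | h0
  · left
    simp [← e]
  · exact Or.inr (h r ⟨h0, hr.2⟩)

theorem IsFace.exists_plArc {D f : Set ℂ} {p q : ℂ} (hf : IsFace D f) (hD : IsClosed D)
    (hDc : ∀ p, ∀ᶠ ε in 𝓝[>] 0, Conic D p ε) (hp : p ∈ D) (hq : q ∈ D) (hpq : p ≠ q)
    (hpf : p ∈ closure f) (hqf : q ∈ closure f) : ∃ A ⊆ f ∪ {p, q}, PLArc p q A := by
  obtain ⟨ε, hε, hε0⟩ := ((hDc p).and self_mem_nhdsWithin).exists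
  obtain ⟨δ, hδ, hδ0⟩ := ((hDc q).and self_mem_nhdsWithin).exists
  obtain ⟨x, hxf, -, hx⟩ := hf.exists_scale_mem hpf hε hε0
  obtain ⟨y, hyf, -, hy⟩ := hf.exists_scale_mem hqf hδ hδ0
  have hpx : p ≠ x := fun e => hf.subset hxf (e ▸ hp)
  obtain ⟨A, hA, hA'⟩ := (PLArc.seg hpx).extend_isOpen (hf.isOpen hD) hf.isPreconnected
    (fun h => hf.subset h hp) hxf hyf
  obtain ⟨B, hB, hB'⟩ := hA'.extend_segment hpq.symm
  refine ⟨B, fun z hz => ?_, hB'⟩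
  rcases hB hz with hz | hz
  · rcases hA hz with hz | hz
    · rcases segment_subset_insert_of_scale_mem hx hz with rfl | hz
      · simp
      · exact Or.inl hz
    · exact Or.inl hz
  · rw [segment_symm] at hz
    rcases segment_subset_insert_of_scale_mem hy hz with rfl | hz
    · simp
    · exact Or.inl hz

namespace PlaneEmbedding

variable {G : SimpleGraph V} {E : PlaneEmbedding G} {f : Set ℂ} {u v w : V} {x : ℂ}

theorem planarGraph_sup_edge (E : PlaneEmbedding G) {A : Set ℂ} (huw : ¬ G.Adj u w)
    (hA : PLArc (E.vtx u) (E.vtx w) A) (hAD : A ∩ E.drawing ⊆ {E.vtx u, E.vtx w}) :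
    PlanarGraph (G ⊔ SimpleGraph.fromEdgeSet {s(u, w)}) := by
  classical
  have hold : ∀ {a b}, G.Adj a b → s(a, b) ≠ s(u, w) := fun hab e => by
    rw [← SimpleGraph.mem_edgeSet, e] at hab
    exact huw hab
  have hadj : ∀ {a b}, (G ⊔ SimpleGraph.fromEdgeSet {s(u, w)}).Adj a b →
      s(a, b) = s(u, w) ∨ G.Adj a b := fun {a b} h => by
    rw [SimpleGraph.sup_adj, SimpleGraph.fromEdgeSet_adj] at h
    exact h.symm.imp (fun h => h.1) id
  have hnew : ∀ {a b x}, G.Adj a b → x ∈ A → x ∈ E.arc a b →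
      x ∈ ({E.vtx u, E.vtx w} : Set ℂ) ∩ {E.vtx a, E.vtx b} := by
    intro a b x hab hx hx'
    have h1 := hAD ⟨hx, E.arc_subset_drawing hab hx'⟩
    refine ⟨h1, ?_⟩
    rcases h1 with rfl | rfl
    · exact (E.arc_vtx hab _ hx').imp (congrArg _) (congrArg _)
    · exact (E.arc_vtx hab _ hx').imp (congrArg _) (congrArg _)
  have hpair : ∀ {a b}, s(a, b) = s(u, w) →
      ({E.vtx a, E.vtx b} : Set ℂ) = {E.vtx u, E.vtx w} := by
    intro a b e
    rcases Sym2.eq_iff.1 e with ⟨rfl, rfl⟩ | ⟨rfl, rfl⟩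
    exacts [rfl, pair_comm _ _]
  refine ⟨⟨E.vtx, fun a b => if s(a, b) = s(u, w) then A else E.arc a b, E.vtx_inj, ?_, ?_, ?_, ?_⟩⟩
  · intro a b
    rw [Sym2.eq_swap, E.arc_symm]
  · intro a b hab
    rcases hadj hab with e | hab
    · rw [if_pos e]
      rcases Sym2.eq_iff.1 e with ⟨rfl, rfl⟩ | ⟨rfl, rfl⟩
      · exact hA.exists_param
      · exact hA.reverse.exists_param
    · rw [if_neg (hold hab)]
      exact E.arc_curve hab
  · intro a b c d hab hcd hne
    rcases hadj hab with e | hab <;> rcases hadj hcd with e' | hcd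
    · exact (hne (e.trans e'.symm)).elim
    · rw [if_pos e, if_neg (hold hcd), hpair e]
      exact fun x hx => hnew hcd hx.1 hx.2
    · rw [if_pos e', if_neg (hold hab), hpair e']
      exact fun x hx => (hnew hab hx.2 hx.1).symm
    · rw [if_neg (hold hab), if_neg (hold hcd)]
      exact E.arc_inter hab hcd hne
  · intro a b hab c hc
    rcases hadj hab with e | hab
    · rw [if_pos e] at hc
      have := hAD ⟨hc, E.vtx_mem_drawing c⟩
      rw [← hpair e] at this
      exact this.imp (fun h => E.vtx_inj h) (fun h => E.vtx_inj h)
    · rw [if_neg (hold hab)] at hc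
      exact E.arc_vtx hab c hc

/-- Initial straight piece of a polygonal arc from `a` to `b`: direction `B`, remainder `A'`. -/
structure IsStart (a b : ℂ) (A : Set ℂ) (B : ℂ) (A' : Set ℂ) : Prop where
  ne_zero : B ≠ 0
  isClosed : IsClosed A'
  notMem : a ∉ A'
  eq_union : A = segment ℝ a (a + B) ∪ A'
  add_mem : a + B ∈ A'
  right_mem : b ∈ A'
  hasLog : HasLog A' (a + B) b

theorem IsStart.segment_subset {a b B : ℂ} {A A' : Set ℂ} (h : IsStart a b A B A') :
    segment ℝ a (a + B) ⊆ A := h.eq_union ▸ subset_union_left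

theorem IsStart.subset {a b B : ℂ} {A A' : Set ℂ} (h : IsStart a b A B A') : A' ⊆ A :=
  h.eq_union ▸ subset_union_right

theorem IsPolygonal.exists_isStart (hE : E.IsPolygonal) (h : G.Adj u v) :
    ∃ B A', IsStart (E.vtx u) (E.vtx v) (E.arc u v) B A' := by
  obtain ⟨B, h1, A', h2, h3, h4, h5, h6, h7⟩ := (hE u v h).exists_start
  exact ⟨B, A', h1, h2, h3, h4, h5, h6, h7⟩

theorem neg_div_mem_slitPlane_of_isStart {B C : ℂ} {A' A'' : Set ℂ} (huv : G.Adj u v)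
    (huw : G.Adj u w) (hvw : v ≠ w) (hB : IsStart (E.vtx u) (E.vtx v) (E.arc u v) B A')
    (hC : IsStart (E.vtx u) (E.vtx w) (E.arc u w) C A'') : -(B / C) ∈ Complex.slitPlane := by
  refine neg_div_mem_slitPlane (p := E.vtx u) hB.ne_zero hC.ne_zero ?_
  have hev : ∀ᶠ s : ℝ in 𝓝[>] 0, E.vtx u + s * C ∉ ({E.vtx v} : Set ℂ) := by
    obtain ⟨ε, hε, hε0⟩ := ((eventually_disjoint_ball (D := {E.vtx v}) (p := E.vtx u)
      isClosed_singleton (fun e => huv.ne (E.vtx_inj e))).and self_mem_nhdsWithin).exists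
    filter_upwards [eventually_mem_ball (E.vtx u) C hε0] with s hs using hε.notMem_of_mem_left hs
  filter_upwards [eventually_mem_segment (E.vtx u) C, self_mem_nhdsWithin, hev] with s hs hs0 hsv hs'
  have hs0 : 0 < s := hs0
  have hne : s(u, v) ≠ s(u, w) := fun e => by
    rcases Sym2.eq_iff.1 e with ⟨-, h⟩ | ⟨h, h'⟩
    exacts [hvw h, hvw (h'.trans h)]
  have := (E.arc_inter huv huw hne ⟨hB.segment_subset hs', hC.segment_subset hs⟩).1
  rcases this with h | h
  · rw [add_eq_left, mul_eq_zero] at h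
    rcases h with h | h
    · exact hs0.ne' (by exact_mod_cast h)
    · exact hC.ne_zero h
  · exact hsv h

section Finite

variable [Finite V]

theorem IsPolygonal.dense_compl_drawing (hE : E.IsPolygonal) : Dense E.drawingᶜ := by
  have e : E.drawingᶜ = (range E.vtx)ᶜ ∩ ⋂ i : {i : V × V // G.Adj i.1 i.2},
      (E.arc i.1.1 i.1.2)ᶜ := by
    ext x
    simp only [mem_compl_iff, mem_drawing_iff, mem_inter_iff, mem_iInter, mem_range, not_or,
      not_exists, not_and, Subtype.forall, Prod.forall]
  rw [e]
  refine Dense.inter_of_isOpen_left ?_ ?_ (finite_range _).isClosed.isOpen_compl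
  · exact (finite_range _).countable.dense_compl ℝ
  · exact dense_iInter_of_isOpen (fun i => (hE.isClosed_arc i.2).isOpen_compl)
      fun i => (hE _ _ i.2).dense_compl

theorem IsPolygonal.exists_face (hE : E.IsPolygonal) (p : ℂ) :
    ∃ f, IsFace E.drawing f ∧ p ∈ closure f := by
  obtain ⟨ε, hc, hε⟩ := ((hE.eventually_conic p).and self_mem_nhdsWithin).exists
  have hε : 0 < ε := hε
  obtain ⟨z, hz, hzD⟩ := hE.dense_compl_drawing.inter_open_nonempty _ Metric.isOpen_ball
    ⟨p, Metric.mem_ball_self hε⟩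
  obtain ⟨f, hf, hzf⟩ := IsFace.exists_of_notMem hzD
  refine ⟨f, hf, ?_⟩
  have hcont : ContinuousAt (fun s : ℝ => p + s * (z - p)) 0 := by fun_prop
  have ht : Filter.Tendsto (fun s : ℝ => p + s * (z - p)) (𝓝[>] 0) (𝓝 p) := by
    have := hcont.tendsto.mono_left (nhdsWithin_le_nhds (s := Ioi 0))
    simpa using this
  refine mem_closure_of_tendsto ht ?_
  filter_upwards [Ioc_mem_nhdsGT one_pos] with s hs using hf.scale_mem hc hzf hz hs

theorem IsPolygonal.exists_face_arc (hE : E.IsPolygonal) (h : G.Adj u v) :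
    ∃ f, IsFace E.drawing f ∧ E.arc u v ⊆ closure f := by
  obtain ⟨γ, hγ, hinj, h0, h1, harc⟩ := E.arc_curve h
  have hmem : (1 / 2 : ℝ) ∈ Icc (0 : ℝ) 1 := by constructor <;> norm_num
  obtain ⟨f, hf, hp⟩ := hE.exists_face (γ (1 / 2))
  refine ⟨f, hf, hE.arc_subset_closure hf h (harc ▸ mem_image_of_mem γ hmem) ?_ ?_ hp⟩
  · rw [← h0]
    intro e
    have := hinj hmem (by simp) e
    norm_num at this
  · rw [← h1]
    intro e
    have := hinj hmem (by simp) e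
    norm_num at this

theorem IsPolygonal.adj_of_mem_closure (hE : E.IsPolygonal) (hG : MaximalPlanar G)
    (hf : IsFace E.drawing f) (huw : u ≠ w) (hu : E.vtx u ∈ closure f)
    (hw : E.vtx w ∈ closure f) : G.Adj u w := by
  by_contra hadj
  obtain ⟨A, hA, hA'⟩ := hf.exists_plArc hE.isClosed_drawing hE.eventually_conic
    (E.vtx_mem_drawing u) (E.vtx_mem_drawing w) (fun e => huw (E.vtx_inj e)) hu hw
  refine hG.2 u w huw hadj (E.planarGraph_sup_edge hadj hA' ?_)
  rintro x ⟨hx, hxD⟩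
  exact (hA hx).resolve_left fun h => hf.subset h hxD

/-- A face touching a vertex `u` is incident with an edge at `u` other than a given one. -/
theorem IsPolygonal.exists_arc_subset_closure (hE : E.IsPolygonal) (hf : IsFace E.drawing f)
    (hu : E.vtx u ∈ closure f) (huv : G.Adj u v) (huw : G.Adj u w) (hvw : v ≠ w) :
    ∃ w', G.Adj u w' ∧ w' ≠ v ∧ E.arc u w' ⊆ closure f := by
  obtain ⟨B, A', hB⟩ := hE.exists_isStart huv
  obtain ⟨C, A'', hC⟩ := hE.exists_isStart huw
  obtain ⟨ε, ⟨hmem, hdis⟩, hε⟩ := (((hE.eventually_mem_arc u).and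
    (eventually_disjoint_ball hB.isClosed hB.notMem)).and self_mem_nhdsWithin).exists
  have hε : 0 < ε := hε
  obtain ⟨s, ⟨hsb, hss⟩, hs0⟩ := (((eventually_mem_ball (E.vtx u) C hε).and
    (eventually_mem_segment (E.vtx u) C)).and self_mem_nhdsWithin).exists
  obtain ⟨x, hxD, hxf, hxb, hxs⟩ := hf.exists_mem_closure_notMem_ray hE.isClosed_drawing hu
    hB.ne_zero hε (q := E.vtx u + s * C)
    (E.arc_subset_drawing huw (hC.segment_subset hss)) hsb (by
      rw [add_sub_cancel_left, mul_div_assoc, ← mul_neg]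
      exact ofReal_mul_mem_slitPlane hs0
        (neg_div_mem_slitPlane_of_isStart huw huv hvw.symm hC hB))
  have hxu : x ≠ E.vtx u := by
    rintro rfl
    simp at hxs
  obtain ⟨hxv, w', huw', hxw'⟩ := hmem x hxD hxb hxu
  refine ⟨w', huw', ?_, hE.arc_subset_closure hf huw' hxw' (hxv _) (hxv _) hxf⟩
  rintro rfl
  rw [hB.eq_union] at hxw'
  rcases hxw' with h | h
  · obtain ⟨r, hr, rfl⟩ := exists_eq_add_mul_of_mem_segment h
    rw [add_sub_cancel_left, mul_div_assoc, div_self hB.ne_zero, mul_one, ← Complex.ofReal_neg,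
      Complex.ofReal_mem_slitPlane] at hxs
    linarith [hr.1]
  · exact hdis.notMem_of_mem_left hxb h

end Finite

end PlaneEmbedding

theorem HasLog.symm {K : Set ℂ} {x y : ℂ} (h : HasLog K x y) : HasLog K y x := by
  obtain ⟨L, hL, hL'⟩ := h
  exact ⟨fun z => -L z, hL.neg, fun z hz => by rw [Complex.exp_neg, hL' z hz, inv_div]⟩

namespace PlaneEmbedding

variable {G : SimpleGraph V} {E : PlaneEmbedding G} {f : Set ℂ} {u v w : V} {x : ℂ}

/-- The part of the drawing spanned by the edges at vertices of `S`. -/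
def part (E : PlaneEmbedding G) (S : Set V) : Set ℂ :=
  ⋃ v ∈ S, ({E.vtx v} ∪ ⋃ (w : V) (_ : G.Adj v w), E.arc v w)

theorem mem_part_iff {S : Set V} : x ∈ E.part S ↔
    ∃ v ∈ S, x = E.vtx v ∨ ∃ w, G.Adj v w ∧ x ∈ E.arc v w := by
  simp [part]

theorem disjoint_part {S T : Set V} (hS : ∀ v ∈ S, ∀ w, G.Adj v w → w ∈ S)
    (hT : ∀ v ∈ T, ∀ w, G.Adj v w → w ∈ T) (hST : Disjoint S T) :
    Disjoint (E.part S) (E.part T) := by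
  refine disjoint_left.2 fun x hx hx' => ?_
  have hvtx : ∀ {T : Set V} {u}, (∀ v ∈ T, ∀ w, G.Adj v w → w ∈ T) → E.vtx u ∈ E.part T →
      u ∈ T := by
    intro T u hT hu
    obtain ⟨v, hv, h | ⟨w, hvw, h⟩⟩ := mem_part_iff.1 hu
    · exact E.vtx_inj h ▸ hv
    · rcases E.arc_vtx hvw _ h with rfl | rfl
      exacts [hv, hT v hv _ hvw]
  obtain ⟨v, hv, rfl | ⟨w, hvw, h⟩⟩ := mem_part_iff.1 hx
  · exact hST.notMem_of_mem_left hv (hvtx hT hx')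
  obtain ⟨v', hv', rfl | ⟨w', hvw', h'⟩⟩ := mem_part_iff.1 hx'
  · exact hST.notMem_of_mem_left (hvtx hS hx) hv'
  have hne : s(v, w) ≠ s(v', w') := fun e => by
    rcases Sym2.eq_iff.1 e with ⟨rfl, -⟩ | ⟨-, rfl⟩
    · exact hST.notMem_of_mem_left hv hv'
    · exact hST.notMem_of_mem_left (hS v hv _ hvw) hv'
  rcases (E.arc_inter hvw hvw' hne ⟨h, h'⟩).1 with rfl | rfl
  · exact hST.notMem_of_mem_left hv (hvtx hT hx')
  · exact hST.notMem_of_mem_left (hS v hv _ hvw) (hvtx hT hx')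

theorem drawing_subset_part (S : Set V) : E.drawing ⊆ E.part S ∪ E.part Sᶜ := by
  intro x hx
  simp only [mem_union, mem_part_iff]
  rcases mem_drawing_iff.1 hx with ⟨u, rfl⟩ | ⟨u, v, huv, hx⟩
  · exact (em (u ∈ S)).imp (fun h => ⟨u, h, Or.inl rfl⟩) (fun h => ⟨u, h, Or.inl rfl⟩)
  · exact (em (u ∈ S)).imp (fun h => ⟨u, h, Or.inr ⟨v, huv, hx⟩⟩)
      (fun h => ⟨u, h, Or.inr ⟨v, huv, hx⟩⟩)

theorem arg_sub_arg_eq_of_cycle {B C Y D : ℂ} {A₁ A₂ X : Set ℂ} (huv : G.Adj u v)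
    (huw : G.Adj u w) (hvw : G.Adj v w) (hE : E.IsPolygonal)
    (hB : IsStart (E.vtx u) (E.vtx v) (E.arc u v) B A₁)
    (hC : IsStart (E.vtx u) (E.vtx w) (E.arc u w) C A₂) (hY : Y ≠ 0) (hD : D ≠ 0)
    (hX : IsPreconnected X) (h1 : Disjoint X (E.arc u v)) (h2 : Disjoint X (E.arc u w))
    (h3 : Disjoint X (E.arc v w)) (hXY : ∀ᶠ s : ℝ in 𝓝[>] 0, E.vtx u + s * Y ∈ X)
    (hXD : ∀ᶠ s : ℝ in 𝓝[>] 0, E.vtx u + s * D ∈ X) :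
    Complex.arg (-(B / Y)) - Complex.arg (-(C / Y)) =
      Complex.arg (-(B / D)) - Complex.arg (-(C / D)) := by
  have hvw' := hE v w hvw
  refine arg_sub_arg_eq_of_isPreconnected (p := E.vtx u) (K := A₁ ∪ E.arc v w ∪ A₂) (X := X)
    hB.ne_zero hC.ne_zero hY hD ((hB.isClosed.union hvw'.isClosed).union hC.isClosed) ?_
    (Or.inl (Or.inl hB.add_mem)) (Or.inr hC.add_mem)
    ((hB.hasLog.trans hvw'.hasLog hB.right_mem).trans hC.hasLog.symm (Or.inr hvw'.right_mem)) hX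
    (h1.mono_right hB.segment_subset) (h2.mono_right hC.segment_subset) ?_ hXY hXD
  · rintro ((h | h) | h)
    · exact hB.notMem h
    · exact (E.arc_vtx hvw u h).elim huv.ne huw.ne
    · exact hC.notMem h
  · exact ((h1.mono_right hB.subset).union_right h3).union_right (h2.mono_right hC.subset)

theorem isPreconnected_arc_diff (h : G.Adj u v) : IsPreconnected (E.arc u v \ {E.vtx u}) := by
  obtain ⟨γ, hγ, hinj, h0, h1, harc⟩ := E.arc_curve h
  have : E.arc u v \ {E.vtx u} = γ '' Ioc 0 1 := by
    rw [harc, ← h0, ← image_singleton, ← hinj.image_sdiff_subset, Icc_sdiff_left]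
    simp
  rw [this]
  exact isPreconnected_Ioc.image _ (hγ.mono Ioc_subset_Icc_self)

theorem IsPolygonal.arg_sub_arg_eq_of_mem_closure {a b c d : V} {B C D Y : ℂ} {A₁ A₂ A₃ : Set ℂ}
    (hE : E.IsPolygonal) (hf : IsFace E.drawing f)
    (hab : G.Adj a b) (hac : G.Adj a c) (had : G.Adj a d) (hbc : G.Adj b c) (hbd : b ≠ d)
    (hcd : c ≠ d) (hB : IsStart (E.vtx a) (E.vtx b) (E.arc a b) B A₁)
    (hC : IsStart (E.vtx a) (E.vtx c) (E.arc a c) C A₂)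
    (hD : IsStart (E.vtx a) (E.vtx d) (E.arc a d) D A₃) (hd : E.vtx d ∈ closure f) (hY : Y ≠ 0)
    (hfY : ∀ᶠ s : ℝ in 𝓝[>] 0, E.vtx a + s * Y ∈ f) :
    Complex.arg (-(B / Y)) - Complex.arg (-(C / Y)) =
      Complex.arg (-(B / D)) - Complex.arg (-(C / D)) := by
  have hdX : E.vtx d ∈ E.arc a d \ {E.vtx a} :=
    ⟨E.right_mem_arc had, fun e => had.ne (E.vtx_inj e).symm⟩
  have hdis : ∀ {p q : V}, G.Adj p q → p ≠ d → q ≠ d →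
      Disjoint (insert (E.vtx d) f ∪ E.arc a d \ {E.vtx a}) (E.arc p q) := by
    intro p q hpq hp hq
    refine disjoint_left.2 fun x hx hx' => ?_
    have hdx : x ≠ E.vtx d := by
      rintro rfl
      exact (E.arc_vtx hpq d hx').elim hp.symm hq.symm
    rcases hx with (hx | hx) | hx
    · exact hdx hx
    · exact hf.subset hx (E.arc_subset_drawing hpq hx')
    · have hne : s(a, d) ≠ s(p, q) := fun e => by
        rcases Sym2.eq_iff.1 e with ⟨-, h⟩ | ⟨-, h⟩
        exacts [hq h.symm, hp h.symm]
      exact (E.arc_inter had hpq hne ⟨hx.1, hx'⟩).1.elim hx.2 hdx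
  refine arg_sub_arg_eq_of_cycle hab hac hbc hE hB hC hY hD.ne_zero
    (IsPreconnected.union (E.vtx d) (mem_insert _ _) hdX
      (hf.isPreconnected.subset_closure (subset_insert _ _) (insert_subset hd subset_closure))
      (isPreconnected_arc_diff had))
    (hdis hab had.ne hbd) (hdis hac had.ne hcd) (hdis hbc hbd hcd) ?_ ?_
  · filter_upwards [hfY] with s hs using Or.inl (Or.inr hs)
  · filter_upwards [eventually_mem_segment (E.vtx a) D, self_mem_nhdsWithin] with s hs hs0
    refine Or.inr ⟨hD.segment_subset hs, fun e => ?_⟩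
    rw [mem_singleton_iff, add_eq_left, mul_eq_zero] at e
    exact e.elim (fun h => (ne_of_gt (show (0 : ℝ) < s from hs0)) (by exact_mod_cast h))
      hD.ne_zero

section Finite

variable [Finite V]

theorem IsPolygonal.isCompact_part (hE : E.IsPolygonal) (S : Set V) : IsCompact (E.part S) :=
  S.toFinite.isCompact_biUnion fun _ _ => isCompact_singleton.union <|
    isCompact_iUnion fun _ => isCompact_iUnion fun h => (hE _ _ h).isCompact

theorem IsPolygonal.exists_vtx_mem_closure (hE : E.IsPolygonal) (hf : IsFace E.drawing f)
    {S : Set V} (hS : ∀ v ∈ S, ∀ w, G.Adj v w → w ∈ S) (hx : x ∈ E.part S)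
    (hxf : x ∈ closure f) : ∃ v ∈ S, E.vtx v ∈ closure f := by
  obtain ⟨v, hv, rfl | ⟨w, hvw, h⟩⟩ := mem_part_iff.1 hx
  · exact ⟨v, hv, hxf⟩
  by_cases hxv : x = E.vtx v
  · exact ⟨v, hv, hxv ▸ hxf⟩
  by_cases hxw : x = E.vtx w
  · exact ⟨w, hS v hv w hvw, hxw ▸ hxf⟩
  · exact ⟨v, hv, hE.arc_subset_closure hf hvw h hxv hxw hxf (E.left_mem_arc hvw)⟩

theorem IsPolygonal.preconnected (hE : E.IsPolygonal) (hG : MaximalPlanar G) :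
    G.Preconnected := by
  intro a b
  by_contra hab
  set S : Set V := {v | G.Reachable a v} with hSdef
  have hS : ∀ v ∈ S, ∀ w, G.Adj v w → w ∈ S := fun v hv w hvw =>
    SimpleGraph.Reachable.trans hv hvw.reachable
  have hT : ∀ v ∈ Sᶜ, ∀ w, G.Adj v w → w ∈ Sᶜ := fun v hv w hvw hw => hv (hS w hw v hvw.symm)
  have hdis := disjoint_part (E := E) hS hT disjoint_compl_right
  obtain ⟨⟨x, y⟩, ⟨hx, hy⟩, hmin⟩ := ((hE.isCompact_part S).prod (hE.isCompact_part Sᶜ)).exists_isMinOn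
    ⟨(E.vtx a, E.vtx b), mem_part_iff.2 ⟨a, SimpleGraph.Reachable.refl a, Or.inl rfl⟩,
      mem_part_iff.2 ⟨b, hab, Or.inl rfl⟩⟩ (f := fun z : ℂ × ℂ => ‖z.1 - z.2‖) (by fun_prop)
  have hmin' : ∀ x' ∈ E.part S, ∀ y' ∈ E.part Sᶜ, ‖x - y‖ ≤ ‖x' - y'‖ :=
    fun x' hx' y' hy' => hmin (a := (x', y')) ⟨hx', hy'⟩
  have hxy : 0 < ‖x - y‖ := norm_pos_iff.2 (sub_ne_zero.2 fun e =>
    hdis.notMem_of_mem_left hx (e ▸ hy))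
  set g : ℝ → ℂ := fun t => x + t * (y - x) with hg
  have hgc : Continuous g := by fun_prop
  have hgD : g '' Ioo 0 1 ⊆ E.drawingᶜ := by
    rintro _ ⟨t, ht, rfl⟩ hmem
    rcases drawing_subset_part S hmem with h | h
    · have := hmin' _ h y hy
      have e : g t - y = ((1 - t : ℝ) : ℂ) * (x - y) := by
        rw [hg]
        push_cast
        ring
      rw [e, norm_mul, Complex.norm_real, Real.norm_of_nonneg (by linarith [ht.2])] at this
      nlinarith [ht.1]
    · have := hmin' x hx _ h
      have e : x - g t = (t : ℂ) * (x - y) := by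
        rw [hg]
        ring
      rw [e, norm_mul, Complex.norm_real, Real.norm_of_nonneg ht.1.le] at this
      nlinarith [ht.2]
  have hhalf : (1 / 2 : ℝ) ∈ Ioo (0 : ℝ) 1 := by constructor <;> norm_num
  obtain ⟨f, hf, hmem⟩ := IsFace.exists_of_notMem (hgD (mem_image_of_mem g hhalf))
  have hsub : g '' Ioo 0 1 ⊆ f := hf.subset_of_isPreconnected
    (isPreconnected_Ioo.image _ hgc.continuousOn) hgD ⟨_, mem_image_of_mem g hhalf, hmem⟩
  have hcl : g '' Icc 0 1 ⊆ closure f := by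
    rw [← closure_Ioo zero_ne_one]
    exact (image_closure_subset_closure_image hgc).trans (closure_mono hsub)
  have hxf : x ∈ closure f := hcl ⟨0, by simp, by simp [hg]⟩
  have hyf : y ∈ closure f := hcl ⟨1, by simp, by simp [hg]⟩
  obtain ⟨v, hv, hvf⟩ := hE.exists_vtx_mem_closure hf hS hx hxf
  obtain ⟨w, hw, hwf⟩ := hE.exists_vtx_mem_closure hf hT hy hyf
  exact hw (hS v hv w (hE.adj_of_mem_closure hG hf (fun e => hw (e ▸ hv)) hvf hwf))

theorem IsPolygonal.exists_adj_ne (hE : E.IsPolygonal) (hG : MaximalPlanar G)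
    (hV : 3 ≤ Nat.card V) (huv : G.Adj u v) : ∃ w, G.Adj u w ∧ w ≠ v := by
  by_contra! hu
  have hv : ∀ w, G.Adj v w → w = u := by
    intro w hvw
    by_contra hwu
    obtain ⟨f, hf, hsub⟩ := hE.exists_face_arc huv
    obtain ⟨w', hvw', hne, hsub'⟩ := hE.exists_arc_subset_closure hf
      (hsub (E.right_mem_arc huv)) huv.symm hvw (Ne.symm hwu)
    have := hE.adj_of_mem_closure hG hf hne.symm (hsub (E.left_mem_arc huv))
      (hsub' (E.right_mem_arc hvw'))
    exact hvw'.ne (hu _ this).symm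
  have hall : ∀ w, w = u ∨ w = v := by
    intro w
    obtain ⟨p⟩ := hE.preconnected hG u w
    have : ∀ {a b : V}, G.Walk a b → a = u ∨ a = v → b = u ∨ b = v := by
      intro a b p
      induction p with
      | nil => exact id
      | cons h _ ih =>
        rintro (rfl | rfl)
        · exact ih (Or.inr (hu _ h))
        · exact ih (Or.inl (hv _ h))
    exact this p (Or.inl rfl)
  have huniv : (univ : Set V) ⊆ {u, v} := fun w _ => hall w
  have := ncard_le_ncard huniv
  rw [ncard_univ, ncard_pair huv.ne] at this
  omega

/-- No face touches four vertices. -/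
theorem IsPolygonal.false_of_four_mem_closure {a b c d : V} (hE : E.IsPolygonal)
    (hG : MaximalPlanar G) (hf : IsFace E.drawing f) (ha : E.vtx a ∈ closure f)
    (hb : E.vtx b ∈ closure f) (hc : E.vtx c ∈ closure f) (hd : E.vtx d ∈ closure f)
    (hab : a ≠ b) (hac : a ≠ c) (had : a ≠ d) (hbc : b ≠ c) (hbd : b ≠ d) (hcd : c ≠ d) :
    False := by
  have hab' := hE.adj_of_mem_closure hG hf hab ha hb
  have hac' := hE.adj_of_mem_closure hG hf hac ha hc
  have had' := hE.adj_of_mem_closure hG hf had ha hd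
  have hbc' := hE.adj_of_mem_closure hG hf hbc hb hc
  have hbd' := hE.adj_of_mem_closure hG hf hbd hb hd
  have hcd' := hE.adj_of_mem_closure hG hf hcd hc hd
  obtain ⟨B, A₁, hB⟩ := hE.exists_isStart hab'
  obtain ⟨C, A₂, hC⟩ := hE.exists_isStart hac'
  obtain ⟨D, A₃, hD⟩ := hE.exists_isStart had'
  obtain ⟨ε, hε, hε0⟩ := ((hE.eventually_conic (E.vtx a)).and self_mem_nhdsWithin).exists
  obtain ⟨z, hzf, -, hz⟩ := hf.exists_scale_mem ha hε hε0
  have hY : z - E.vtx a ≠ 0 := sub_ne_zero.2 fun e => hf.subset hzf (e ▸ E.vtx_mem_drawing a)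
  have hfY : ∀ᶠ s : ℝ in 𝓝[>] 0, E.vtx a + s * (z - E.vtx a) ∈ f := by
    filter_upwards [Ioc_mem_nhdsGT one_pos] with s hs using hz s hs
  exact false_of_arg_sub_arg_eq hB.ne_zero hC.ne_zero hD.ne_zero
    (neg_div_mem_slitPlane_of_isStart hab' hac' hbc hB hC)
    (neg_div_mem_slitPlane_of_isStart hab' had' hbd hB hD)
    (neg_div_mem_slitPlane_of_isStart hac' had' hcd hC hD)
    (hE.arg_sub_arg_eq_of_mem_closure hf hab' hac' had' hbc' hbd hcd hB hC hD hd hY hfY)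
    (hE.arg_sub_arg_eq_of_mem_closure hf hab' had' hac' hbd' hbc hcd.symm hB hD hC hc hY hfY)
    (hE.arg_sub_arg_eq_of_mem_closure hf hac' had' hab' hcd' hbc.symm hbd.symm hC hD hB hb hY hfY)

end Finite

end PlaneEmbedding

/-- Near an interior point of a straight piece of `D` there are exactly two sides. -/
theorem IsFace.exists_two_sides {D : Set ℂ} {p B : ℂ} {δ : ℝ} (hD : IsClosed D) (hB : B ≠ 0)
    (hδ : 0 < δ) (h : ∀ w ∈ Metric.ball (0 : ℂ) δ, w.im ≠ 0 → p + B * w ∉ D) :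
    ∃ f g, IsFace D f ∧ IsFace D g ∧ (∀ w ∈ Metric.ball (0 : ℂ) δ, 0 < w.im → p + B * w ∈ f) ∧
      (∀ w ∈ Metric.ball (0 : ℂ) δ, w.im < 0 → p + B * w ∈ g) ∧ p ∈ closure f ∧ p ∈ closure g ∧
      ∀ k, IsFace D k → p ∈ closure k → k = f ∨ k = g := by
  have side : ∀ H : Set ℂ, Convex ℝ H → (∀ w ∈ H, w.im ≠ 0) → ∀ c : ℂ,
      (∀ᶠ s : ℝ in 𝓝[>] 0, (s : ℂ) * c ∈ H) → ∃ f, IsFace D f ∧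
        (∀ w ∈ Metric.ball (0 : ℂ) δ, w ∈ H → p + B * w ∈ f) ∧ p ∈ closure f := by
    intro H hH him c hc
    have hpre : IsPreconnected ((fun w => p + B * w) '' (Metric.ball (0 : ℂ) δ ∩ H)) :=
      ((convex_ball _ _).inter hH).isPreconnected.image _ (by fun_prop)
    have hsub : (fun w => p + B * w) '' (Metric.ball (0 : ℂ) δ ∩ H) ⊆ Dᶜ := by
      rintro _ ⟨w, hw, rfl⟩
      exact h w hw.1 (him w hw.2)
    have hev : ∀ᶠ s : ℝ in 𝓝[>] 0, (s : ℂ) * c ∈ Metric.ball (0 : ℂ) δ ∩ H := by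
      filter_upwards [hc, eventually_mem_ball 0 c hδ] with s h1 h2
      exact ⟨by simpa using h2, h1⟩
    obtain ⟨s, hs⟩ := hev.exists
    have hmem := mem_image_of_mem (fun w => p + B * w) hs
    obtain ⟨f, hf, hsf⟩ := IsFace.exists_of_notMem (hsub hmem)
    have hfs := hf.subset_of_isPreconnected hpre hsub ⟨_, hmem, hsf⟩
    refine ⟨f, hf, fun w hw hw' => hfs ⟨w, ⟨hw, hw'⟩, rfl⟩, ?_⟩
    have hcont : ContinuousAt (fun s : ℝ => p + B * (s * c)) 0 := by fun_prop
    have ht : Filter.Tendsto (fun s : ℝ => p + B * (s * c)) (𝓝[>] 0) (𝓝 p) := by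
      have := hcont.tendsto.mono_left (nhdsWithin_le_nhds (s := Ioi 0))
      simpa using this
    refine mem_closure_of_tendsto ht ?_
    filter_upwards [hev] with s hs using hfs ⟨_, hs, rfl⟩
  obtain ⟨f, hf, hf1, hf2⟩ := side {w | 0 < w.im} (convex_halfSpace_im_gt 0)
    (fun w hw => ne_of_gt hw) Complex.I (by
      filter_upwards [self_mem_nhdsWithin] with s hs
      simpa using hs)
  obtain ⟨g, hg, hg1, hg2⟩ := side {w | w.im < 0} (convex_halfSpace_im_lt 0)
    (fun w hw => ne_of_lt hw) (-Complex.I) (by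
      filter_upwards [self_mem_nhdsWithin] with s hs
      simpa using hs)
  refine ⟨f, g, hf, hg, hf1, hg1, hf2, hg2, fun k hk hkp => ?_⟩
  set φ : ℂ → ℂ := fun w => p + B * w with hφ
  have hφc : Continuous φ := by fun_prop
  obtain ⟨w, hw, hwk⟩ : ∃ w ∈ Metric.ball (0 : ℂ) δ, φ w ∈ k := by
    obtain ⟨z, hz, hzk⟩ := mem_closure_iff_nhds.1 hkp _
      (Metric.ball_mem_nhds p (mul_pos hδ (norm_pos_iff.2 hB)))
    refine ⟨(z - p) / B, ?_, ?_⟩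
    · rw [mem_ball_zero_iff, norm_div, div_lt_iff₀ (norm_pos_iff.2 hB)]
      exact mem_ball_iff_norm.1 hz
    · have : φ ((z - p) / B) = z := by
        rw [hφ]
        field_simp
        ring
      rwa [this]
  have hop : IsOpen (Metric.ball (0 : ℂ) δ ∩ φ ⁻¹' k) :=
    Metric.isOpen_ball.inter ((hk.isOpen hD).preimage hφc)
  obtain ⟨w, ⟨hw, hwk⟩, him⟩ : ∃ w ∈ Metric.ball (0 : ℂ) δ ∩ φ ⁻¹' k, w.im ≠ 0 := by
    by_cases him : w.im = 0
    · have hcont : ContinuousAt (fun s : ℝ => w + s * Complex.I) 0 := by fun_prop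
      have hev : ∀ᶠ s : ℝ in 𝓝[>] 0, w + s * Complex.I ∈ Metric.ball (0 : ℂ) δ ∩ φ ⁻¹' k :=
        Filter.Eventually.filter_mono nhdsWithin_le_nhds
          (hcont.preimage_mem_nhds (hop.mem_nhds (by simpa using And.intro (by simpa using hw) hwk)))
      obtain ⟨s, hs, hs0⟩ := (hev.and self_mem_nhdsWithin).exists
      have hs0 : 0 < s := hs0
      exact ⟨_, hs, by simpa [him] using hs0.ne'⟩
    · exact ⟨w, ⟨hw, hwk⟩, him⟩
  rcases lt_or_gt_of_ne him with h' | h'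
  · exact Or.inr (hk.eq_of_inter_nonempty hg ⟨_, hwk, hg1 w hw h'⟩)
  · exact Or.inl (hk.eq_of_inter_nonempty hf ⟨_, hwk, hf1 w hw h'⟩)

namespace PlaneEmbedding

variable [Finite V] {G : SimpleGraph V} {E : PlaneEmbedding G} {f : Set ℂ} {u v w : V}
  {x : ℂ}

theorem IsPolygonal.exists_third_vertex (hE : E.IsPolygonal) (hG : MaximalPlanar G)
    (hV : 3 ≤ Nat.card V) (hf : IsFace E.drawing f) (huv : G.Adj u v)
    (h : E.arc u v ⊆ closure f) : ∃ w, G.Adj u w ∧ G.Adj v w ∧ E.arc u w ⊆ closure f ∧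
      E.arc v w ⊆ closure f ∧ ∀ x, E.vtx x ∈ closure f ↔ x = u ∨ x = v ∨ x = w := by
  have hu := h (E.left_mem_arc huv)
  have hv := h (E.right_mem_arc huv)
  obtain ⟨a, hua, hav⟩ := hE.exists_adj_ne hG hV huv
  obtain ⟨w, huw, hwv, hw⟩ := hE.exists_arc_subset_closure hf hu huv hua hav.symm
  obtain ⟨b, hvb, hbu⟩ := hE.exists_adj_ne hG hV huv.symm
  obtain ⟨w', hvw', hwu', hw'⟩ := hE.exists_arc_subset_closure hf hv huv.symm hvb hbu.symm
  have hwf := hw (E.right_mem_arc huw)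
  have hwf' := hw' (E.right_mem_arc hvw')
  obtain rfl : w = w' := by
    by_contra hne
    exact hE.false_of_four_mem_closure hG hf hu hv hwf hwf' huv.ne huw.ne hwu'.symm hwv.symm
      hvw'.ne hne
  refine ⟨w, huw, hvw', hw, hw', fun x => ⟨fun hx => ?_, ?_⟩⟩
  · by_contra! hne
    exact hE.false_of_four_mem_closure hG hf hu hv hwf hx huv.ne huw.ne hne.1.symm hvw'.ne
      hne.2.1.symm hne.2.2.symm
  · rintro (rfl | rfl | rfl)
    exacts [hu, hv, hwf]

theorem IsPolygonal.exists_adj (hE : E.IsPolygonal) (hG : MaximalPlanar G)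
    (hV : 3 ≤ Nat.card V) (u : V) : ∃ v, G.Adj u v := by
  have : Nontrivial V := Finite.one_lt_card_iff_nontrivial.1 (by omega)
  obtain ⟨v, hv⟩ := exists_ne u
  obtain ⟨p⟩ := hE.preconnected hG u v
  cases p with
  | nil => exact (hv rfl).elim
  | cons h _ => exact ⟨_, h⟩

theorem IsPolygonal.exists_arc (hE : E.IsPolygonal) (hG : MaximalPlanar G)
    (hV : 3 ≤ Nat.card V) (hf : IsFace E.drawing f) :
    ∃ u v, G.Adj u v ∧ E.arc u v ⊆ closure f := by
  obtain ⟨x, hxf, hxD⟩ : ∃ x ∈ closure f, x ∈ E.drawing := by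
    by_contra! hno
    have hcl : IsClosed f := closure_subset_iff_isClosed.1 fun x hx =>
      hf.closure_inter_subset hE.isClosed_drawing ⟨hx, hno x hx⟩
    have huniv : f = univ := IsClopen.eq_univ ⟨hcl, hf.isOpen hE.isClosed_drawing⟩ hf.nonempty
    have : Nonempty V := Finite.card_pos_iff.1 (by omega)
    obtain ⟨u⟩ := this
    exact hf.subset (huniv ▸ mem_univ (E.vtx u)) (E.vtx_mem_drawing u)
  have hvert : ∀ u, E.vtx u ∈ closure f → ∃ u v, G.Adj u v ∧ E.arc u v ⊆ closure f := by
    intro u hu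
    obtain ⟨v, huv⟩ := hE.exists_adj hG hV u
    obtain ⟨w, huw, hwv⟩ := hE.exists_adj_ne hG hV huv
    obtain ⟨w', h1, -, h2⟩ := hE.exists_arc_subset_closure hf hu huv huw hwv.symm
    exact ⟨u, w', h1, h2⟩
  rcases mem_drawing_iff.1 hxD with ⟨u, rfl⟩ | ⟨u, v, huv, hx⟩
  · exact hvert u hxf
  by_cases hxu : x = E.vtx u
  · exact hvert u (hxu ▸ hxf)
  by_cases hxv : x = E.vtx v
  · exact hvert v (hxv ▸ hxf)
  · exact ⟨u, v, huv, hE.arc_subset_closure hf huv hx hxu hxv hxf⟩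

theorem IsPolygonal.arc_subset_closure_of_vtx_mem (hE : E.IsPolygonal) (hG : MaximalPlanar G)
    (hV : 3 ≤ Nat.card V) (hf : IsFace E.drawing f) (huv : u ≠ v) (hu : E.vtx u ∈ closure f)
    (hv : E.vtx v ∈ closure f) : E.arc u v ⊆ closure f := by
  obtain ⟨a, b, hab, h⟩ := hE.exists_arc hG hV hf
  obtain ⟨c, -, -, hac, hbc, hall⟩ := hE.exists_third_vertex hG hV hf hab h
  rcases (hall u).1 hu with rfl | rfl | rfl <;> rcases (hall v).1 hv with rfl | rfl | rfl
  all_goals first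
    | exact (huv rfl).elim
    | assumption
    | (rw [E.arc_symm]; assumption)

/-- Every edge is incident with exactly two faces. -/
theorem IsPolygonal.ncard_faces (hE : E.IsPolygonal) (hG : MaximalPlanar G)
    (hV : 3 ≤ Nat.card V) (huv : G.Adj u v) :
    {f | IsFace E.drawing f ∧ E.arc u v ⊆ closure f}.ncard = 2 := by
  obtain ⟨B, A', hB⟩ := hE.exists_isStart huv
  obtain ⟨ε, ⟨hc, hdis⟩, hε⟩ := (((hE.eventually_conic (E.vtx u)).and
    (eventually_disjoint_ball hB.isClosed hB.notMem)).and self_mem_nhdsWithin).exists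
  have hε : 0 < ε := hε
  obtain ⟨r, ⟨hrb, hrs⟩, hr0⟩ := (((eventually_mem_ball (E.vtx u) B hε).and
    (eventually_mem_segment (E.vtx u) B)).and self_mem_nhdsWithin).exists
  have hr0 : 0 < r := hr0
  set p := E.vtx u + r * B with hp
  have hpA : p ∈ E.arc u v := hB.segment_subset hrs
  have hpA' : p ∉ A' := hdis.notMem_of_mem_left hrb
  have hpu : p ≠ E.vtx u := by
    rw [hp, Ne, add_eq_left, mul_eq_zero, not_or]
    exact ⟨by exact_mod_cast hr0.ne', hB.ne_zero⟩
  have hpv : p ≠ E.vtx v := fun e => hpA' (e ▸ hB.right_mem)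
  have hdraw : E.drawing = segment ℝ (E.vtx u) (E.vtx u + B) ∪ (A' ∪ E.rest u v) := by
    rw [drawing_eq huv, hB.eq_union, union_assoc]
  obtain ⟨η, hη, hη0⟩ := ((eventually_disjoint_ball (hB.isClosed.union (hE.isClosed_rest u v))
    (fun h' => h'.elim hpA' (notMem_rest huv hpA hpu hpv))).and self_mem_nhdsWithin).exists
  have hη0 : 0 < η := hη0
  have hBn := norm_pos_iff.2 hB.ne_zero
  have hδ : 0 < η / ‖B‖ := div_pos hη0 hBn
  obtain ⟨f, g, hf, hg, hf1, hg1, hfp, hgp, hfg⟩ := IsFace.exists_two_sides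
    hE.isClosed_drawing hB.ne_zero hδ (p := p) (by
      intro w hw him hmem
      rw [hdraw] at hmem
      rcases hmem with hmem | hmem
      · obtain ⟨r', -, e⟩ := exists_eq_add_mul_of_mem_segment hmem
        have e' : w = ((r' - r : ℝ) : ℂ) := by
          refine mul_left_cancel₀ hB.ne_zero ?_
          rw [hp] at e
          push_cast
          linear_combination e
        exact him (by rw [e', Complex.ofReal_im])
      · refine hη.notMem_of_mem_left ?_ hmem
        rw [mem_ball_zero_iff, lt_div_iff₀ hBn] at hw
        rw [mem_ball_iff_norm, add_sub_cancel_left, norm_mul, mul_comm]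
        exact hw)
  have hset : {f | IsFace E.drawing f ∧ E.arc u v ⊆ closure f} = {f, g} := by
    ext k
    constructor
    · rintro ⟨hk, hk'⟩
      exact hfg k hk (hk' hpA)
    · rintro (rfl | rfl)
      · exact ⟨hf, hE.arc_subset_closure hf huv hpA hpu hpv hfp⟩
      · exact ⟨hg, hE.arc_subset_closure hg huv hpA hpu hpv hgp⟩
  rw [hset]
  refine ncard_pair fun hfg' => ?_
  subst hfg'
  obtain ⟨w, huw, hvw, -⟩ := hE.exists_third_vertex hG hV hf huv
    (hE.arc_subset_closure hf huv hpA hpu hpv hfp)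
  obtain ⟨C, A'', hC⟩ := hE.exists_isStart huw
  refine false_of_arg_sub_arg_eq_near hr0 hB.ne_zero
    (neg_div_mem_slitPlane_of_isStart huw huv hvw.ne.symm hC hB) ?_
  have hdisf : ∀ {a b}, G.Adj a b → Disjoint f (E.arc a b) := fun hab =>
    disjoint_left.2 fun x hx hx' => hf.subset hx (E.arc_subset_drawing hab hx')
  have hnear : ∀ c : ℂ, ∀ᶠ τ : ℝ in 𝓝[>] 0,
      E.vtx u + B * (r + τ * c) ∈ Metric.ball (E.vtx u) ε := by
    intro c
    have hcont : ContinuousAt (fun τ : ℝ => E.vtx u + B * (r + τ * c)) 0 := by fun_prop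
    exact Filter.Eventually.filter_mono nhdsWithin_le_nhds
      (hcont.preimage_mem_nhds (Metric.isOpen_ball.mem_nhds (by
        simpa [hp, mul_comm] using hrb)))
  have hscale : ∀ {Y : ℂ}, E.vtx u + Y ∈ f → E.vtx u + Y ∈ Metric.ball (E.vtx u) ε →
      ∀ᶠ s : ℝ in 𝓝[>] 0, E.vtx u + s * Y ∈ f := by
    intro Y hY hYb
    filter_upwards [Ioc_mem_nhdsGT one_pos] with s hs
    simpa using hf.scale_mem hc hY hYb hs
  have hne : ∀ {Y : ℂ}, E.vtx u + Y ∈ f → Y ≠ 0 := by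
    rintro Y hY rfl
    rw [add_zero] at hY
    exact hf.subset hY (E.vtx_mem_drawing u)
  filter_upwards [hnear Complex.I, hnear (-Complex.I), eventually_mem_ball 0 Complex.I hδ,
    self_mem_nhdsWithin] with τ h1 h2 h3 hτ
  have hτ : 0 < τ := hτ
  have h3 : (τ : ℂ) * Complex.I ∈ Metric.ball (0 : ℂ) (η / ‖B‖) := by simpa using h3
  have hY1 : E.vtx u + B * (r + τ * Complex.I) ∈ f := by
    have := hf1 (τ * Complex.I) h3 (by simpa using hτ)
    convert this using 1
    rw [hp]
    ring
  have hY2 : E.vtx u + B * (r - τ * Complex.I) ∈ f := by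
    have := hg1 (-(τ * Complex.I)) (by simpa using h3) (by simpa using hτ)
    convert this using 1
    rw [hp]
    ring
  have h2 : E.vtx u + B * (r - τ * Complex.I) ∈ Metric.ball (E.vtx u) ε := by
    rwa [mul_neg, ← sub_eq_add_neg] at h2
  exact arg_sub_arg_eq_of_cycle huv huw hvw hE hB hC (hne hY1) (hne hY2) hf.isPreconnected
    (hdisf huv) (hdisf huw) (hdisf hvw) (hscale hY1 h1) (hscale hY2 h2)

theorem IsPolygonal.finite_faces (hE : E.IsPolygonal) (hG : MaximalPlanar G)
    (hV : 3 ≤ Nat.card V) : {f | IsFace E.drawing f}.Finite := by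
  have hsub : {f | IsFace E.drawing f} ⊆ ⋃ (u : V) (v : V) (_ : G.Adj u v),
      {f | IsFace E.drawing f ∧ E.arc u v ⊆ closure f} := by
    intro f hf
    obtain ⟨u, v, huv, h⟩ := hE.exists_arc hG hV hf
    simp only [mem_iUnion]
    exact ⟨u, v, huv, hf, h⟩
  refine Finite.subset ?_ hsub
  refine finite_iUnion fun u => finite_iUnion fun v => finite_iUnion fun huv => ?_
  exact finite_of_ncard_ne_zero (by rw [hE.ncard_faces hG hV huv]; norm_num)

/-- Adjacency of faces across edges is connected. -/
theorem IsPolygonal.eq_univ_of_closed (hE : E.IsPolygonal) (hG : MaximalPlanar G)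
    (hV : 3 ≤ Nat.card V) (S : Set (Set ℂ)) (hS : ∃ f ∈ S, IsFace E.drawing f)
    (h : ∀ f ∈ S, IsFace E.drawing f → ∀ g, IsFace E.drawing g → ∀ u v, G.Adj u v →
      E.arc u v ⊆ closure f → E.arc u v ⊆ closure g → g ∈ S)
    (g : Set ℂ) (hg : IsFace E.drawing g) : g ∈ S := by
  by_contra hgS
  obtain ⟨f, hfS, hf⟩ := hS
  have hfin := hE.finite_faces hG hV
  have hcl : ∀ P : Set (Set ℂ), IsClosed (⋃ k ∈ {f | IsFace E.drawing f} ∩ P, closure k) :=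
    fun P => (hfin.inter_of_left P).isClosed_biUnion fun k _ => isClosed_closure
  have hconn : IsPreconnected (range E.vtx)ᶜ :=
    ((finite_range _).countable.isConnected_compl_of_one_lt_rank
      (by rw [Complex.rank_real_complex]; norm_num)).isPreconnected
  have hpt : ∀ k, IsFace E.drawing k → ∀ x ∈ k, x ∉ range E.vtx := fun k hk x hx hx' =>
    hk.subset hx (Or.inl hx')
  obtain ⟨a, ha⟩ := hf.nonempty
  obtain ⟨b, hb⟩ := hg.nonempty
  obtain ⟨x, hx, hx1, hx2⟩ := isPreconnected_closed_iff.1 hconn _ _ (hcl S) (hcl Sᶜ)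
    (fun x _ => by
      obtain ⟨k, hk, hxk⟩ := hE.exists_face x
      by_cases hkS : k ∈ S
      · exact Or.inl (mem_biUnion (show k ∈ {f | IsFace E.drawing f} ∩ S from ⟨hk, hkS⟩) hxk)
      · exact Or.inr (mem_biUnion (show k ∈ {f | IsFace E.drawing f} ∩ Sᶜ from ⟨hk, hkS⟩) hxk))
    ⟨a, hpt f hf a ha, mem_biUnion (show f ∈ {f | IsFace E.drawing f} ∩ S from ⟨hf, hfS⟩)
      (subset_closure ha)⟩
    ⟨b, hpt g hg b hb, mem_biUnion (show g ∈ {f | IsFace E.drawing f} ∩ Sᶜ from ⟨hg, hgS⟩)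
      (subset_closure hb)⟩
  obtain ⟨k, ⟨hk, hkS⟩, hxk⟩ := mem_iUnion₂.1 hx1
  obtain ⟨l, ⟨hl, hlS⟩, hxl⟩ := mem_iUnion₂.1 hx2
  by_cases hxD : x ∈ E.drawing
  · rcases mem_drawing_iff.1 hxD with h' | ⟨u, v, huv, hxuv⟩
    · exact hx h'
    · have hxu : x ≠ E.vtx u := fun e => hx ⟨u, e.symm⟩
      have hxv : x ≠ E.vtx v := fun e => hx ⟨v, e.symm⟩
      exact hlS (h k hkS hk l hl u v huv (hE.arc_subset_closure hk huv hxuv hxu hxv hxk)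
        (hE.arc_subset_closure hl huv hxuv hxu hxv hxl))
  · have e := hk.eq_of_inter_nonempty hl ⟨x, hk.closure_inter_subset hE.isClosed_drawing ⟨hxk, hxD⟩,
      hl.closure_inter_subset hE.isClosed_drawing ⟨hxl, hxD⟩⟩
    exact hlS (e ▸ hkS)

end PlaneEmbedding

end Plane

theorem PlaneEmbedding.IsPolygonal.isTriangulation {V : Type*} [Fintype V] {G : SimpleGraph V}
    {E : PlaneEmbedding G} [∀ f : Set ℂ, DecidablePred fun v => E.vtx v ∈ closure f]
    (hE : E.IsPolygonal) (hG : MaximalPlanar G) (hV : 3 ≤ Nat.card V) :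
    IsTriangulation G fun f : {f | IsFace E.drawing f} =>
      Finset.univ.filter fun v => E.vtx v ∈ closure f.1 where
  clique := by
    classical
    rintro ⟨f, hf⟩
    obtain ⟨u, v, huv, h⟩ := hE.exists_arc hG hV hf
    obtain ⟨w, huw, hvw, -, -, hall⟩ := hE.exists_third_vertex hG hV hf huv h
    rw [SimpleGraph.is3Clique_iff]
    refine ⟨u, v, w, huv, huw, hvw, ?_⟩
    ext x
    simpa using hall x
  edge := by
    intro u v huv
    rw [← hE.ncard_faces hG hV huv, ← Set.ncard_image_of_injective _ Subtype.val_injective]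
    congr 1
    ext f
    simp only [Finset.mem_filter, Finset.mem_univ, true_and, Set.mem_image, Subtype.exists]
    constructor
    · rintro ⟨f, hf, ⟨hu, hv⟩, rfl⟩
      exact ⟨hf, hE.arc_subset_closure_of_vtx_mem hG hV hf huv.ne hu hv⟩
    · rintro ⟨hf, h⟩
      exact ⟨f, hf, ⟨h (E.left_mem_arc huv), h (E.right_mem_arc huv)⟩, rfl⟩
  dual := by
    rintro S ⟨⟨f, hf⟩, hfS⟩ hS
    refine Set.eq_univ_of_forall fun g => ?_
    have key := hE.eq_univ_of_closed hG hV (Subtype.val '' S) ⟨f, ⟨_, hfS, rfl⟩, hf⟩ ?_ g.1 g.2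
    · obtain ⟨g', hg', e⟩ := key
      exact Subtype.ext e ▸ hg'
    · rintro _ ⟨k, hk, rfl⟩ - l hl u v huv h1 h2
      refine ⟨⟨l, hl⟩, hS k hk ⟨l, hl⟩ u v huv.ne ?_ ?_ ?_ ?_, rfl⟩
      · simpa using h1 (E.left_mem_arc huv)
      · simpa using h1 (E.right_mem_arc huv)
      · simpa using h2 (E.left_mem_arc huv)
      · simpa using h2 (E.right_mem_arc huv)

theorem one_le_nu {V : Type*} [Fintype V] {G : SimpleGraph V} {t : Finset V}
    (ht : G.IsNClique 3 t) : 1 ≤ nu G := by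
  classical
  have h : IsTrianglePacking G {t} := by
    refine ⟨fun s hs => Finset.mem_singleton.1 hs ▸ ht, fun s hs s' hs' hne => ?_⟩
    exact (hne ((Finset.mem_singleton.1 hs).trans (Finset.mem_singleton.1 hs').symm)).elim
  simpa using h.card_le_nu

/-- If `G` is a planar triangulation on `n` vertices different from `K₄`,
then `ν(G) ≥ (2/3)(n - 2)`. -/
theorem nu_ge_of_planar_triangulation (V : Type) [Fintype V] (G : SimpleGraph V)
    (hG : MaximalPlanar G)
    (hK4 : ¬ Nonempty (G ≃g (⊤ : SimpleGraph (Fin 4)))) :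
    2 * (Fintype.card V - 2) ≤ 3 * nu G := by
  classical
  rcases Nat.lt_or_ge (Fintype.card V) 3 with hlt | hge
  · omega
  obtain ⟨E⟩ := hG.1
  obtain ⟨E, hE⟩ := E.exists_plArc
  have hE : E.IsPolygonal := hE
  have hV : 3 ≤ Nat.card V := by rwa [Nat.card_eq_fintype_card]
  have hT := hE.isTriangulation hG hV
  rcases hge.eq_or_lt with h3 | h4
  · obtain ⟨f, hf, -⟩ := hE.exists_face 0
    have := one_le_nu (hT.clique ⟨f, hf⟩)
    omega
  · have := (hE.finite_faces hG hV).fintype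
    exact hT.two_mul_card_sub_le (hE.preconnected hG) h4 hK4
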